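/- Let K be an algebraically closed field, S = K[X_0,…,X_n] the standard graded polynomial ring, and < a monomial order on S with X_0 > X_1 > ⋯ > X_n. Let I ⊆ S be a homogeneous ideal such that in_<(I) = I_Δ is the Stanley–Reisner ideal of a 1-dimensional simplicial complex (graph) Δ on vertex set {0,…,n} in which every i ∈ {0,…,n} is a vertex. If X = V(I) ⊆ P^n is a connected projective curve that is nonsingular, then Δ is a tree. -/

import Mathlib

open MvPolynomial

/-- The leading exponent (multidegree) of a multivariate polynomial with respect to a
monomial order: the maximum of its support. (It is `0` for the zero polynomial.) -/
noncomputable def MonomialOrder.mdeg {σ : Type*} (m : MonomialOrder σ) {R : Type*}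
    [CommSemiring R] (f : MvPolynomial σ R) : σ →₀ ℕ :=
  m.toSyn.symm (f.support.sup fun e => m.toSyn e)

/-- The initial ideal of an ideal `I` with respect to a monomial order. -/
noncomputable def initialIdeal {σ : Type*} {K : Type*} [Field K] (m : MonomialOrder σ)
    (I : Ideal (MvPolynomial σ K)) : Ideal (MvPolynomial σ K) :=
  Ideal.span {g | ∃ f ∈ I, f ≠ 0 ∧ g = monomial (m.mdeg f) (1 : K)}

/-- A monomial order on `X_0, …, X_n` satisfies `X_0 > X_1 > ⋯ > X_n`. -/
def MonomialOrder.Descending {n : ℕ} (m : MonomialOrder (Fin (n + 1))) : Prop :=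
  ∀ i j : Fin (n + 1), i < j →
    m.toSyn (Finsupp.single j 1) < m.toSyn (Finsupp.single i 1)

/-- An ideal is homogeneous (w.r.t. the standard grading) iff it contains all homogeneous
components of its elements. -/
def IsHomog {σ : Type*} {K : Type*} [Field K] (I : Ideal (MvPolynomial σ K)) : Prop :=
  ∀ f ∈ I, ∀ d : ℕ, homogeneousComponent d f ∈ I

/-- An abstract simplicial complex on the vertex set `{0, …, n}`. -/
structure SComplex (n : ℕ) where
  faces : Set (Finset (Fin (n + 1)))
  down_closed : ∀ {s t : Finset (Fin (n + 1))}, s ∈ faces → t ⊆ s → t ∈ faces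

/-- A simplicial complex is 1-dimensional (a graph) if all faces have at most 2 vertices and
some face has exactly 2 vertices. -/
def SComplex.IsGraph {n : ℕ} (Δ : SComplex n) : Prop :=
  (∀ s ∈ Δ.faces, s.card ≤ 2) ∧ ∃ s ∈ Δ.faces, s.card = 2

/-- The Stanley–Reisner ideal of a simplicial complex: generated by the squarefree monomials
`X_σ = ∏_{i ∈ σ} X_i` for the non-faces `σ`. -/
noncomputable def SComplex.srIdeal {n : ℕ} (K : Type*) [Field K] (Δ : SComplex n) :
    Ideal (MvPolynomial (Fin (n + 1)) K) :=
  Ideal.span {g | ∃ s : Finset (Fin (n + 1)), s ∉ Δ.faces ∧ g = ∏ i ∈ s, X i}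

/-- The simple graph underlying a 1-dimensional simplicial complex. -/
def SComplex.graph {n : ℕ} (Δ : SComplex n) : SimpleGraph (Fin (n + 1)) :=
  SimpleGraph.fromRel fun i j => ({i, j} : Finset (Fin (n + 1))) ∈ Δ.faces

/-- The (vector representatives of the) points of the projective variety `V(I) ⊆ ℙⁿ`. -/
def projZeros {n : ℕ} {K : Type*} [Field K] (I : Ideal (MvPolynomial (Fin (n + 1)) K)) :
    Set (Fin (n + 1) → K) :=
  {x | x ≠ 0 ∧ ∀ f ∈ I, eval x f = 0}

/-- The rank at the point `x` of the Jacobian matrix of the ideal `I`, i.e. the dimension of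
the span of the gradients at `x` of all elements of `I`. -/
noncomputable def jacobianRank {n : ℕ} {K : Type*} [Field K]
    (I : Ideal (MvPolynomial (Fin (n + 1)) K)) (x : Fin (n + 1) → K) : ℕ :=
  Module.finrank K
    (Submodule.span K {v : Fin (n + 1) → K | ∃ f ∈ I, v = fun i => eval x (pderiv i f)})

/-- The projective variety `V(I)` is connected: it is nonempty and cannot be written as the
union of two disjoint nonempty closed subsets (cut out by homogeneous ideals). -/
def IsConnectedProjVariety {n : ℕ} {K : Type*} [Field K]
    (I : Ideal (MvPolynomial (Fin (n + 1)) K)) : Prop :=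
  (projZeros I).Nonempty ∧
    ∀ J₁ J₂ : Ideal (MvPolynomial (Fin (n + 1)) K), IsHomog J₁ → IsHomog J₂ →
      projZeros I ⊆ projZeros J₁ ∪ projZeros J₂ →
      projZeros I ∩ (projZeros J₁ ∩ projZeros J₂) = ∅ →
      projZeros I ⊆ projZeros J₁ ∨ projZeros I ⊆ projZeros J₂

/-!
A weight vector `w` with `w_0 > ⋯ > w_n = 0`, representing the monomial order on finitely many
exponents, degenerates `S / I` to the Stanley–Reisner ring `K[Δ]`: the monomials supported on faces
form a basis of `S / I`, and rewriting any other monomial in this basis lowers its weight. So `I` is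
radical, and its Hilbert function is `(n + 1) + E (k - 1)`, where `E` is the number of edges. The
local rings of a nonsingular curve are domains, whence connectedness makes `I` prime.

*`Δ` is connected.* For `j < n` the weights filter the functions on the chart `X_j ≠ 0`. At a
valuation ring dominating this filtration let `l > j` be the index for which the order of vanishing
of `X_l / X_j`, divided by `w_j - w_l`, is smallest. Every monomial of degree two and of smaller
weight than `X_j X_l` then vanishes to higher order than `X_j X_l`. Hence `X_j X_l` cannot be
rewritten, that is, `{j, l}` is an edge: every vertex but the last has a larger neighbour.

*`E ≤ n`.* In particular `{n-1, n}` is an edge. Put `f = X_{n-1} / X_n`. By the same comparison of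
weights, every regular function on the chart `X_n ≠ 0` has a leading term `κ f ^ m` that is the same
at all poles of `f`. Subtracting leading terms shows that the functions integral over `K[f]` lie in
`K[f]`, so the function field is `K(f)` and the curve is parametrized by coprime polynomials in `f`
of degree at most `d`, with `d` attained; the Hilbert function gives `E ≤ d`. As the local rings are
integrally closed, for some degree `k` the coordinate ring contains all polynomials of degree at
most `k d`. So `k d + 1 ≤ (n + 1) + E (k - 1)`, and `E ≤ n` follows from `E ≤ d`.
-/

open scoped Pointwise

/-! ### Integer weights representing a monomial order -/

section Gordan

variable {k : Type*} [Field k] [LinearOrder k] {ι V : Type*}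
  [AddCommGroup V] [Module k V]

variable (k) in
/-- The only relation with nonnegative coefficients between the vectors `d i`, `i ∈ s`, is the
trivial one. This is the hypothesis of Gordan's theorem of the alternative. -/
def PositivelyIndependent (s : Finset ι) (d : ι → V) : Prop :=
  ∀ c : ι → k, (∀ i ∈ s, 0 ≤ c i) → ∑ i ∈ s, c i • d i = 0 → ∀ i ∈ s, c i = 0

lemma PositivelyIndependent.mono {s t : Finset ι} {d : ι → V}
    (ht : PositivelyIndependent k t d) (hst : s ⊆ t) : PositivelyIndependent k s d := by
  classical
  intro c hc hsum i hi
  have h := ht (fun j ↦ if j ∈ s then c j else 0)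
    (fun j _ ↦ by split_ifs with hj; exacts [hc j hj, le_rfl])
    (by simpa only [ite_smul, zero_smul, Finset.sum_ite_mem, Finset.inter_eq_right.2 hst]) i
    (hst hi)
  simpa only [if_pos hi] using h

variable [IsStrictOrderedRing k]

lemma exists_dual_pos_insert_of_dual_pos {a : ι} {s : Finset ι} {d : ι → V} (ha : d a ≠ 0)
    {φ : Module.Dual k V} (hφa : φ (d a) = 0) (hφ : ∀ i ∈ s, 0 < φ (d i)) :
    ∃ φ : Module.Dual k V, 0 < φ (d a) ∧ ∀ i ∈ s, 0 < φ (d i) := by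
  classical
  obtain ⟨ψ, hψ⟩ : ∃ ψ : Module.Dual k V, ψ (d a) ≠ 0 := by
    simpa using (Module.forall_dual_apply_eq_zero_iff k (d a)).not.2 ha
  obtain ⟨M, hM⟩ := (s.image fun i ↦ -((ψ (d a))⁻¹ * ψ (d i)) / φ (d i)).exists_le
  refine ⟨(M + 1) • φ + (ψ (d a))⁻¹ • ψ, by simp [hφa, hψ], fun i hi ↦ ?_⟩
  have hMi := hM _ (Finset.mem_image_of_mem _ hi)
  rw [div_le_iff₀ (hφ i hi)] at hMi
  simp only [LinearMap.add_apply, LinearMap.smul_apply, smul_eq_mul]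
  linarith [hφ i hi]

lemma PositivelyIndependent.ne_zero {s : Finset ι} {d : ι → V}
    (hd : PositivelyIndependent k s d) {a : ι} (ha : a ∈ s) : d a ≠ 0 := fun h0 ↦ by
  have h := (hd.mono (Finset.singleton_subset_iff.2 ha)) 1 (by simp) (by simp [h0]) a
    (Finset.mem_singleton_self a)
  exact one_ne_zero h

lemma PositivelyIndependent.pos_of_smul_eq_sum [DecidableEq ι] {a : ι} {s : Finset ι} {d : ι → V}
    (hd : PositivelyIndependent k (insert a s) d) (has : a ∉ s) {c : ι → k}
    (hc : ∀ i ∈ s, 0 ≤ c i) {j : ι} (hj : j ∈ s) (hcj : c j ≠ 0) {t : k}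
    (ht : t • d a = ∑ i ∈ s, c i • d i) : 0 < t := by
  by_contra! ht0
  have hupdate : ∀ i ∈ s, Function.update c a (-t) i = c i := fun i hi ↦
    Function.update_of_ne (fun hia : i = a ↦ has (hia ▸ hi)) _ _
  refine hcj ((hupdate j hj).symm.trans (hd (Function.update c a (-t)) ?_ ?_ j
    (Finset.mem_insert_of_mem hj)))
  · rw [Finset.forall_mem_insert, Function.update_self]
    exact ⟨neg_nonneg.2 ht0, fun i hi ↦ (hc i hi).trans_eq (hupdate i hi).symm⟩
  · rw [Finset.sum_insert has, Function.update_self, neg_smul, ht, neg_add_eq_zero]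
    exact Finset.sum_congr rfl fun i hi ↦ by rw [hupdate i hi]

-- In the induction step either positive independence survives modulo `d a`, or a positive
-- multiple of `d a` is a nonnegative combination of the other vectors.
theorem PositivelyIndependent.exists_dual_pos {s : Finset ι} {d : ι → V}
    (hd : PositivelyIndependent k s d) : ∃ φ : Module.Dual k V, ∀ i ∈ s, 0 < φ (d i) := by
  classical
  induction s using Finset.induction_on generalizing V with
  | empty => exact ⟨0, by simp⟩
  | insert a s has ih =>
    simp only [Finset.forall_mem_insert]
    by_cases hquot : PositivelyIndependent k s (fun i ↦ (Submodule.span k {d a}).mkQ (d i))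
    · obtain ⟨φ, hφ⟩ := ih hquot
      refine exists_dual_pos_insert_of_dual_pos (hd.ne_zero (Finset.mem_insert_self a s))
        (φ := φ ∘ₗ (Submodule.span k {d a}).mkQ) ?_ hφ
      simp [(Submodule.Quotient.mk_eq_zero _).2 (Submodule.mem_span_singleton_self (d a))]
    · simp only [PositivelyIndependent, ← map_smul, ← map_sum, not_forall] at hquot
      obtain ⟨c, hc, hsum, j, hj, hcj⟩ := hquot
      rw [Submodule.mkQ_apply, Submodule.Quotient.mk_eq_zero, Submodule.mem_span_singleton] at hsum
      obtain ⟨t, ht⟩ := hsum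
      obtain ⟨φ, hφ⟩ := ih (hd.mono (Finset.subset_insert a s))
      have htφ : t * φ (d a) = ∑ i ∈ s, c i * φ (d i) := by
        simpa only [map_smul, map_sum, smul_eq_mul] using congrArg φ ht
      have hpos : 0 < ∑ i ∈ s, c i * φ (d i) :=
        Finset.sum_pos' (fun i hi ↦ mul_nonneg (hc i hi) (hφ i hi).le)
          ⟨j, hj, mul_pos ((hc j hj).lt_of_ne' hcj) (hφ j hj)⟩
      exact ⟨φ, pos_of_mul_pos_right (htφ ▸ hpos) (hd.pos_of_smul_eq_sum has hc hj hcj ht).le, hφ⟩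

end Gordan

lemma exists_nat_mul_eq_intCast {ι : Type*} (s : Finset ι) (c : ι → ℚ) :
    ∃ N : ℕ, 0 < N ∧ ∀ i ∈ s, ∃ z : ℤ, (z : ℚ) = N * c i := by
  refine ⟨∏ i ∈ s, (c i).den, Finset.prod_pos fun i _ ↦ (c i).den_pos, fun i hi ↦ ?_⟩
  obtain ⟨r, hr⟩ := Finset.dvd_prod_of_mem (fun i ↦ (c i).den) hi
  refine ⟨r * (c i).num, ?_⟩
  rw [hr]
  push_cast
  rw [← Rat.den_mul_eq_num (c i)]
  ring

section Weight

variable {σ : Type*} (m : MonomialOrder σ)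

lemma positivelyIndependent_of_toSyn_lt (P : Finset ((σ →₀ ℕ) × (σ →₀ ℕ)))
    (hP : ∀ p ∈ P, m.toSyn p.2 < m.toSyn p.1) :
    PositivelyIndependent ℚ P fun p j ↦ (p.1 j : ℚ) - p.2 j := by
  intro c hc hsum
  obtain ⟨N, hN, hz⟩ := exists_nat_mul_eq_intCast P c
  have hnat : ∀ p ∈ P, ∃ r : ℕ, (r : ℚ) = N * c p := fun p hp ↦ by
    obtain ⟨z, hz⟩ := hz p hp
    have hz0 : 0 ≤ z := by
      have : (0 : ℚ) ≤ z := hz ▸ mul_nonneg N.cast_nonneg (hc p hp)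
      exact_mod_cast this
    exact ⟨z.toNat, by rw [← hz, ← Int.cast_natCast, Int.toNat_of_nonneg hz0]⟩
  choose! r hr using hnat
  have hsum_eq : ∑ p ∈ P, r p • p.1 = ∑ p ∈ P, r p • p.2 := by
    ext j
    have hj := congrArg ((N : ℚ) * ·) (congrFun hsum j)
    simp only [Finset.sum_apply, Pi.smul_apply, smul_eq_mul, mul_sub, Finset.mul_sum,
      Finset.sum_sub_distrib, Pi.zero_apply, mul_zero, sub_eq_zero, ← mul_assoc] at hj
    simp only [Finsupp.finsetSum_apply, Finsupp.smul_apply, smul_eq_mul]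
    rw [← Nat.cast_inj (R := ℚ)]
    push_cast
    have hcongr : ∀ v : (σ →₀ ℕ) × (σ →₀ ℕ) → ℚ,
        ∑ p ∈ P, (r p : ℚ) * v p = ∑ p ∈ P, N * c p * v p :=
      fun v ↦ Finset.sum_congr rfl fun p hp ↦ by rw [hr p hp]
    rw [hcongr, hcongr, hj]
  have hsyn : ∑ p ∈ P, r p • m.toSyn p.1 = ∑ p ∈ P, r p • m.toSyn p.2 := by
    simpa only [map_sum, map_nsmul] using congrArg m.toSyn hsum_eq
  intro p hp
  by_contra hcp
  refine (Finset.sum_lt_sum (fun q hq ↦ nsmul_le_nsmul_right (hP q hq).le (r q))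
    ⟨p, hp, nsmul_lt_nsmul_right ?_ (hP p hp)⟩).ne hsyn.symm
  intro hrp
  have := hr p hp
  simp_all [hN.ne']

theorem exists_int_weight_lt [Finite σ] (P : Finset ((σ →₀ ℕ) × (σ →₀ ℕ)))
    (hP : ∀ p ∈ P, m.toSyn p.2 < m.toSyn p.1) :
    ∃ z : σ → ℤ, ∀ p ∈ P, Finsupp.weight z p.2 < Finsupp.weight z p.1 := by
  classical
  have := Fintype.ofFinite σ
  obtain ⟨φ, hφ⟩ := (positivelyIndependent_of_toSyn_lt m P hP).exists_dual_pos
  obtain ⟨N, hN, hz⟩ := exists_nat_mul_eq_intCast Finset.univ fun j ↦ φ (Pi.single j 1)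
  choose! z hz using hz
  refine ⟨z, fun p hp ↦ ?_⟩
  have hweight : (Finsupp.weight z p.1 : ℚ) - Finsupp.weight z p.2 =
      N * φ fun j ↦ (p.1 j : ℚ) - p.2 j := by
    rw [LinearMap.pi_apply_eq_sum_univ φ, Finset.mul_sum, Finsupp.weight_eq_sum,
      Finsupp.weight_eq_sum, Int.cast_sum, Int.cast_sum, ← Finset.sum_sub_distrib]
    refine Finset.sum_congr rfl fun j _ ↦ ?_
    have hzj := hz j (Finset.mem_univ j)
    simp only [nsmul_eq_mul, Int.cast_mul, Int.cast_natCast, hzj, smul_eq_mul]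
    have : (fun i ↦ if j = i then (1 : ℚ) else 0) = Pi.single j 1 := by
      ext i; simp [Pi.single_apply, eq_comm]
    rw [this]
    ring
  have hpos : (0 : ℚ) < N * φ fun j ↦ (p.1 j : ℚ) - p.2 j :=
    mul_pos (by exact_mod_cast hN) (hφ p hp)
  rw [← hweight, sub_pos] at hpos
  exact_mod_cast hpos

end Weight

/-! ### Degeneration to the Stanley–Reisner ring -/

section SquarefreeExponent

variable {σ : Type*}

/-- The exponent vector of the squarefree monomial `∏ i ∈ s, X i`. -/
noncomputable def squarefreeExponent (s : Finset σ) : σ →₀ ℕ :=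
  ∑ i ∈ s, Finsupp.single i 1

lemma squarefreeExponent_le_iff {s : Finset σ} {u : σ →₀ ℕ} :
    squarefreeExponent s ≤ u ↔ s ⊆ u.support := by
  classical
  have happly (i : σ) : squarefreeExponent s i = if i ∈ s then 1 else 0 := by
    simp [squarefreeExponent, Finsupp.finsetSum_apply, Finsupp.single_apply]
  refine ⟨fun h i hi ↦ ?_, fun h i ↦ ?_⟩
  · have := h i
    rw [happly, if_pos hi] at this
    exact Finsupp.mem_support_iff.2 (by omega)
  · rw [happly]
    split_ifs with hi
    exacts [Nat.one_le_iff_ne_zero.2 (Finsupp.mem_support_iff.1 (h hi)), Nat.zero_le _]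

lemma prod_X_eq_monomial_squarefreeExponent (R : Type*) [CommSemiring R] (s : Finset σ) :
    (∏ i ∈ s, X i : MvPolynomial σ R) = monomial (squarefreeExponent s) 1 :=
  (monomial_sum_one s _).symm

end SquarefreeExponent

/-- The exponents of the same degree as `u` and of smaller `w`-weight. -/
def lowerExponents {σ : Type*} (w : σ → ℕ) (u : σ →₀ ℕ) : Set (σ →₀ ℕ) :=
  {v | v.degree = u.degree ∧ Finsupp.weight w v < Finsupp.weight w u}

lemma lowerExponents_subset {σ : Type*} {w : σ → ℕ} {u v : σ →₀ ℕ}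
    (hv : v ∈ lowerExponents w u) : lowerExponents w v ⊆ lowerExponents w u :=
  fun _ hv' ↦ ⟨hv'.1.trans hv.1, hv'.2.trans hv.2⟩

lemma singleton_add_lowerExponents_subset {σ : Type*} (w : σ → ℕ) (u v : σ →₀ ℕ) :
    {v} + lowerExponents w u ⊆ lowerExponents w (v + u) := by
  rintro _ ⟨_, rfl, u', ⟨hdeg, hlt⟩, rfl⟩
  exact ⟨by simp [hdeg], by simpa using hlt⟩

/-- The exponents of the monomials outside the Stanley–Reisner ideal of `Δ`. -/
def SComplex.faceExponents {n : ℕ} (Δ : SComplex n) : Set (Fin (n + 1) →₀ ℕ) :=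
  {u | u.support ∈ Δ.faces}

lemma SComplex.single_add_single_mem_faceExponents_iff {n : ℕ} {Δ : SComplex n}
    {i j : Fin (n + 1)} (hij : i ≠ j) :
    Finsupp.single i 1 + Finsupp.single j 1 ∈ Δ.faceExponents ↔ {i, j} ∈ Δ.faces := by
  rw [faceExponents, Set.mem_ofPred_eq,
    Finsupp.support_single_add_single hij one_ne_zero one_ne_zero]

/-- The ideal `I` degenerates, along the one-parameter subgroup with weights `w`, to the
Stanley–Reisner ideal of the graph `Δ`: the face monomials form a basis modulo `I`, and rewriting a
monomial in this basis lowers its weight. -/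
structure IsGraphDegeneration {K : Type*} [Field K] {n : ℕ}
    (I : Ideal (MvPolynomial (Fin (n + 1)) K)) (Δ : SComplex n) (w : Fin (n + 1) → ℕ) : Prop where
  isHomog : IsHomog I
  card_le_two : ∀ s ∈ Δ.faces, s.card ≤ 2
  vertex_mem : ∀ i : Fin (n + 1), {i} ∈ Δ.faces
  strictAnti : StrictAnti w
  weight_last : w (Fin.last n) = 0
  monomial_mem_sup : ∀ u ∉ Δ.faceExponents, monomial u 1 ∈
    restrictSupport K (Δ.faceExponents ∩ lowerExponents w u) ⊔ I.restrictScalars K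
  eq_zero_of_mem : ∀ G ∈ I, G ∈ restrictSupport K Δ.faceExponents → G = 0

section SpanByMonomials

variable {K σ : Type*} [Field K]

lemma restrictSupport_le_of_forall_monomial_mem {A : Set (σ →₀ ℕ)}
    {M : Submodule K (MvPolynomial σ K)} (h : ∀ u ∈ A, monomial u 1 ∈ M) :
    restrictSupport K A ≤ M := by
  rw [restrictSupport_eq_span, Submodule.span_le]
  rintro _ ⟨u, hu, rfl⟩
  exact h u hu

lemma monomial_mem_restrictSupport_of_mem {A : Set (σ →₀ ℕ)} {u : σ →₀ ℕ} (hu : u ∈ A) (a : K) :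
    monomial u a ∈ restrictSupport K A :=
  (monomial_mem_restrictSupport K).2 (Or.inl hu)

lemma mul_mem_restrictSupport_add {A B : Set (σ →₀ ℕ)} {P Q : MvPolynomial σ K}
    (hP : P ∈ restrictSupport K A) (hQ : Q ∈ restrictSupport K B) :
    P * Q ∈ restrictSupport K (A + B) := by
  rw [restrictSupport_add]
  exact Submodule.mul_mem_mul hP hQ

lemma exists_sub_mem_of_mem_sup {M : Submodule K (MvPolynomial σ K)}
    {I : Ideal (MvPolynomial σ K)} {P : MvPolynomial σ K} (hP : P ∈ M ⊔ I.restrictScalars K) :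
    ∃ G ∈ M, P - G ∈ I := by
  obtain ⟨G, hG, f, hf, rfl⟩ := Submodule.mem_sup.1 hP
  exact ⟨G, hG, by simpa using hf⟩

end SpanByMonomials

section InitialIdeal

variable {K : Type*} [Field K]

lemma exists_mem_monomial_sub_mem_of_mem_initialIdeal {σ : Type*} {m : MonomialOrder σ}
    {I : Ideal (MvPolynomial σ K)} (hI : IsHomog I) {e : σ →₀ ℕ}
    (he : monomial e 1 ∈ initialIdeal m I) :
    ∃ f ∈ I, monomial e 1 - f ∈
      restrictSupport K {u | u.degree = e.degree ∧ m.toSyn u < m.toSyn e} := by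
  classical
  have hspan : initialIdeal m I =
      Ideal.span ((fun u ↦ monomial u 1) '' {u | ∃ f ∈ I, f ≠ 0 ∧ m.degree f = u}) := by
    refine congrArg Ideal.span (Set.ext fun g ↦ ⟨?_, ?_⟩)
    · rintro ⟨f, hf, hf0, rfl⟩
      exact ⟨_, ⟨f, hf, hf0, rfl⟩, rfl⟩
    · rintro ⟨_, ⟨f, hf, hf0, rfl⟩, rfl⟩
      exact ⟨f, hf, hf0, rfl⟩
  rw [hspan, mem_ideal_span_monomial_image] at he
  obtain ⟨_, ⟨f, hf, hf0, rfl⟩, hle⟩ := he e (by simp [support_monomial])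
  have hlc : (m.leadingCoeff f)⁻¹ ≠ 0 := inv_ne_zero (m.leadingCoeff_ne_zero_iff.2 hf0)
  obtain ⟨g, hg⟩ : ∃ g, g = monomial (e - m.degree f) (m.leadingCoeff f)⁻¹ * f := ⟨_, rfl⟩
  have hdeg : m.degree g = e := by
    rw [hg, m.degree_mul (by simpa using hlc) hf0, m.degree_monomial, if_neg hlc,
      tsub_add_cancel_of_le hle]
  have hmonic : coeff e g = 1 := by
    rw [← hdeg, ← MonomialOrder.leadingCoeff, hg, m.leadingCoeff_mul, m.leadingCoeff_monomial,
      inv_mul_cancel₀ (m.leadingCoeff_ne_zero_iff.2 hf0)]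
  refine ⟨homogeneousComponent e.degree g, hI _ (hg ▸ I.mul_mem_left _ hf) _, ?_⟩
  rw [mem_restrictSupport_iff]
  intro u hu
  rw [Finset.mem_coe, mem_support_iff, coeff_sub, coeff_monomial, coeff_homogeneousComponent] at hu
  have hne : e ≠ u := by rintro rfl; simp [hmonic] at hu
  rw [if_neg hne, zero_sub, neg_ne_zero, ite_ne_right_iff] at hu
  refine ⟨hu.1, lt_of_le_of_ne ?_ (m.toSyn.injective.ne hne.symm)⟩
  exact hdeg ▸ m.le_degree (mem_support_iff.2 hu.2)

variable {n : ℕ} {m : MonomialOrder (Fin (n + 1))} {Δ : SComplex n}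
  {I : Ideal (MvPolynomial (Fin (n + 1)) K)}

lemma monomial_squarefreeExponent_mem_srIdeal {s : Finset (Fin (n + 1))} (hs : s ∉ Δ.faces) :
    monomial (squarefreeExponent s) 1 ∈ Δ.srIdeal K :=
  Ideal.subset_span ⟨s, hs, (prod_X_eq_monomial_squarefreeExponent K s).symm⟩

lemma degree_notMem_faceExponents (hin : initialIdeal m I = Δ.srIdeal K)
    {f : MvPolynomial (Fin (n + 1)) K} (hf : f ∈ I) (hf0 : f ≠ 0) :
    m.degree f ∉ Δ.faceExponents := by
  classical
  have hspan : Δ.srIdeal K =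
      Ideal.span ((fun u ↦ monomial u 1) '' (squarefreeExponent '' Δ.facesᶜ)) := by
    refine congrArg Ideal.span (Set.ext fun g ↦ ⟨?_, ?_⟩)
    · rintro ⟨s, hs, rfl⟩
      exact ⟨_, ⟨s, hs, rfl⟩, (prod_X_eq_monomial_squarefreeExponent K s).symm⟩
    · rintro ⟨_, ⟨s, hs, rfl⟩, rfl⟩
      exact ⟨s, hs, (prod_X_eq_monomial_squarefreeExponent K s).symm⟩
  have hmem : monomial (m.degree f) (1 : K) ∈ Δ.srIdeal K :=
    hin ▸ Ideal.subset_span ⟨f, hf, hf0, rfl⟩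
  rw [hspan, mem_ideal_span_monomial_image] at hmem
  obtain ⟨_, ⟨s, hs, rfl⟩, hle⟩ := hmem (m.degree f) (by simp [support_monomial])
  exact fun hface ↦ hs (Δ.down_closed hface (squarefreeExponent_le_iff.1 hle))

end InitialIdeal

section DescendingWeight

lemma coe_weight_eq_of_coe_eq_sub {σ : Type*} {w : σ → ℕ} {z : σ → ℤ} {c : ℤ}
    (h : ∀ j, (w j : ℤ) = z j - c) (u : σ →₀ ℕ) :
    (Finsupp.weight w u : ℤ) = Finsupp.weight z u - c * u.degree := by
  induction u using Finsupp.induction_linear with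
  | zero => simp
  | add u v hu hv => simp only [map_add, Nat.cast_add, hu, hv]; ring
  | single i a => simp [Finsupp.weight_single, h]; ring

lemma exists_strictAnti_weight_lt {n : ℕ} {m : MonomialOrder (Fin (n + 1))} (hm : m.Descending)
    (P : Finset ((Fin (n + 1) →₀ ℕ) × (Fin (n + 1) →₀ ℕ)))
    (hP : ∀ p ∈ P, p.2.degree = p.1.degree ∧ m.toSyn p.2 < m.toSyn p.1) :
    ∃ w : Fin (n + 1) → ℕ, StrictAnti w ∧ w (Fin.last n) = 0 ∧
      ∀ p ∈ P, p.2 ∈ lowerExponents w p.1 := by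
  classical
  obtain ⟨z, hz⟩ := exists_int_weight_lt m
    (P ∪ ({p : Fin (n + 1) × Fin (n + 1) | p.1 < p.2} : Finset _).image
      fun p ↦ (Finsupp.single p.1 1, Finsupp.single p.2 1)) (by
    intro p hp
    rw [Finset.mem_union, Finset.mem_image] at hp
    rcases hp with hp | ⟨p, hp, rfl⟩
    exacts [(hP p hp).2, hm _ _ (by simpa using hp)])
  have hz_anti : StrictAnti z := fun i j hij ↦ by
    simpa [Finsupp.weight_single] using hz (Finsupp.single i 1, Finsupp.single j 1)
      (Finset.mem_union_right _ (Finset.mem_image.2 ⟨(i, j), by simpa using hij, rfl⟩))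
  have hw : ∀ i, (((z i - z (Fin.last n)).toNat : ℕ) : ℤ) = z i - z (Fin.last n) := fun i ↦
    Int.toNat_of_nonneg (sub_nonneg.2 (hz_anti.antitone (Fin.le_last i)))
  refine ⟨fun i ↦ (z i - z (Fin.last n)).toNat, fun i j hij ↦ ?_, by simp,
    fun p hp ↦ ⟨(hP p hp).1, ?_⟩⟩
  · have := hz_anti hij
    zify
    rw [hw, hw]
    exact sub_lt_sub_right this _
  · zify
    rw [coe_weight_eq_of_coe_eq_sub hw, coe_weight_eq_of_coe_eq_sub hw, (hP p hp).1]
    exact sub_lt_sub_right (hz p (Finset.mem_union_left _ hp)) _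

end DescendingWeight

section NormalForm

variable {K : Type*} [Field K] {n : ℕ} {I : Ideal (MvPolynomial (Fin (n + 1)) K)}
  {Δ : SComplex n} {w : Fin (n + 1) → ℕ}

lemma monomial_mem_sup_of_squarefree
    (h : ∀ s ∉ Δ.faces, ∃ f ∈ I, monomial (squarefreeExponent s) 1 - f ∈
      restrictSupport K (lowerExponents w (squarefreeExponent s)))
    (u : Fin (n + 1) →₀ ℕ) (hu : u ∉ Δ.faceExponents) : monomial u 1 ∈
      restrictSupport K (Δ.faceExponents ∩ lowerExponents w u) ⊔ I.restrictScalars K := by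
  induction hN : Finsupp.weight w u using Nat.strong_induction_on generalizing u with
  | _ N ih =>
    subst hN
    obtain ⟨f, hf, hlower⟩ := h u.support hu
    obtain ⟨v, hv⟩ : ∃ v, v + squarefreeExponent u.support = u :=
      ⟨_, tsub_add_cancel_of_le (squarefreeExponent_le_iff.2 subset_rfl)⟩
    have hstep : monomial u 1 - monomial v 1 * f ∈ restrictSupport K (lowerExponents w u) := by
      have := restrictSupport_mono K (singleton_add_lowerExponents_subset w _ v)
        (mul_mem_restrictSupport_add
          (monomial_mem_restrictSupport_of_mem (Set.mem_singleton v) 1) hlower)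
      rwa [mul_sub, monomial_mul, one_mul, hv] at this
    have hreduce : restrictSupport K (lowerExponents w u) ≤
        restrictSupport K (Δ.faceExponents ∩ lowerExponents w u) ⊔ I.restrictScalars K := by
      refine restrictSupport_le_of_forall_monomial_mem fun v hv ↦ ?_
      by_cases hface : v ∈ Δ.faceExponents
      · exact Submodule.mem_sup_left
          (monomial_mem_restrictSupport_of_mem (Set.mem_inter hface hv) 1)
      · exact sup_le_sup_right (restrictSupport_mono K
          (Set.inter_subset_inter_right _ (lowerExponents_subset hv))) _ (ih _ hv.2 v hface rfl)
    rw [← sub_add_cancel (monomial u 1) (monomial v 1 * f)]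
    exact add_mem (hreduce hstep) (Submodule.mem_sup_right (I.mul_mem_left _ hf))

theorem exists_isGraphDegeneration {m : MonomialOrder (Fin (n + 1))} (hm : m.Descending)
    (hgraph : Δ.IsGraph) (hvert : ∀ i : Fin (n + 1), {i} ∈ Δ.faces) (hI : IsHomog I)
    (hin : initialIdeal m I = Δ.srIdeal K) : ∃ w, IsGraphDegeneration I Δ w := by
  classical
  have hmonic : ∀ s ∉ Δ.faces, ∃ f ∈ I, monomial (squarefreeExponent s) 1 - f ∈ restrictSupport K
      {u | u.degree = (squarefreeExponent s).degree ∧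
        m.toSyn u < m.toSyn (squarefreeExponent s)} := fun s hs ↦
    exists_mem_monomial_sub_mem_of_mem_initialIdeal hI
      (hin ▸ monomial_squarefreeExponent_mem_srIdeal hs)
  choose! f hfI hf using hmonic
  let tails : Finset ((Fin (n + 1) →₀ ℕ) × (Fin (n + 1) →₀ ℕ)) :=
    ({s | s ∉ Δ.faces} : Finset (Finset (Fin (n + 1)))).biUnion fun s ↦
      (monomial (squarefreeExponent s) 1 - f s).support.image fun u ↦ (squarefreeExponent s, u)
  obtain ⟨w, hanti, hlast, hw⟩ := exists_strictAnti_weight_lt hm tails (by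
    simp only [tails, Finset.mem_biUnion, Finset.mem_image, Finset.mem_filter_univ]
    rintro _ ⟨s, hs, u, hu, rfl⟩
    exact (mem_restrictSupport_iff K).1 (hf s hs) hu)
  refine ⟨w, hI, hgraph.1, hvert, hanti, hlast,
    monomial_mem_sup_of_squarefree fun s hs ↦ ⟨f s, hfI s hs, ?_⟩, fun G hG hGface ↦ ?_⟩
  · refine (mem_restrictSupport_iff K).2 fun u hu ↦ hw (squarefreeExponent s, u) ?_
    simp only [tails, Finset.mem_biUnion, Finset.mem_image, Finset.mem_filter_univ]
    exact ⟨s, hs, u, hu, rfl⟩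
  · by_contra hG0
    exact degree_notMem_faceExponents hin hG hG0
      ((mem_restrictSupport_iff K).1 hGface (m.degree_mem_support hG0))

namespace IsGraphDegeneration

variable (hG : IsGraphDegeneration I Δ w)
include hG

lemma weight_pos {l : Fin (n + 1)} (hl : l < Fin.last n) : 0 < w l :=
  hG.weight_last ▸ hG.strictAnti hl

lemma exists_lower_sub_mem {u : Fin (n + 1) →₀ ℕ} (hu : u ∉ Δ.faceExponents) :
    ∃ G ∈ restrictSupport K (lowerExponents w u), monomial u 1 - G ∈ I := by
  obtain ⟨G, hGu, hGI⟩ := exists_sub_mem_of_mem_sup (hG.monomial_mem_sup u hu)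
  exact ⟨G, restrictSupport_mono K Set.inter_subset_right hGu, hGI⟩

lemma exists_normalForm {A : Set (Fin (n + 1) →₀ ℕ)} (hA : ∀ u ∈ A, lowerExponents w u ⊆ A)
    {P : MvPolynomial (Fin (n + 1)) K} (hP : P ∈ restrictSupport K A) :
    ∃ G ∈ restrictSupport K (Δ.faceExponents ∩ A), P - G ∈ I := by
  refine exists_sub_mem_of_mem_sup (restrictSupport_le_of_forall_monomial_mem (fun u hu ↦ ?_) hP)
  by_cases hface : u ∈ Δ.faceExponents
  · exact Submodule.mem_sup_left (monomial_mem_restrictSupport_of_mem (Set.mem_inter hface hu) 1)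
  · exact sup_le_sup_right (restrictSupport_mono K (Set.inter_subset_inter_right _ (hA u hu))) _
      (hG.monomial_mem_sup u hface)

theorem isRadical {m : MonomialOrder (Fin (n + 1))} (hin : initialIdeal m I = Δ.srIdeal K) :
    I.IsRadical := by
  rintro f ⟨k, hk⟩
  obtain ⟨G, hGface, hfG⟩ := hG.exists_normalForm (A := Set.univ) (fun _ _ ↦ Set.subset_univ _)
    (P := f) (by simp [restrictSupport_univ])
  suffices hG0 : G = 0 by simpa [hG0] using hfG
  by_contra hG0
  have hpow : G ^ k ∈ I := by
    have := I.sub_mem hk (I.mem_of_dvd (sub_dvd_pow_sub_pow f G k) hfG)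
    rwa [sub_sub_cancel] at this
  have hdeg := degree_notMem_faceExponents hin hpow (pow_ne_zero _ hG0)
  rw [m.degree_pow] at hdeg
  exact hdeg (Δ.down_closed ((mem_restrictSupport_iff K).1 hGface (m.degree_mem_support hG0)).1
    Finsupp.support_smul)

end IsGraphDegeneration

end NormalForm

/-! ### Local rings of the affine cone at points satisfying the Jacobian criterion -/

section Taylor

variable {R σ B : Type*}

lemma aeval_mul_const_of_isHomogeneous [CommSemiring R] [CommSemiring B] [Algebra R B]
    {P : MvPolynomial σ R} {k : ℕ} (hP : P.IsHomogeneous k) (a : σ → B) (t : B) :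
    aeval (fun i ↦ a i * t) P = aeval a P * t ^ k := by
  rw [aeval_def, aeval_def, eval₂_eq, eval₂_eq, Finset.sum_mul]
  refine Finset.sum_congr rfl fun u hu ↦ ?_
  rw [hP.degree_eq_sum_deg_support hu]
  simp only [mul_pow, Finset.prod_mul_distrib, Finset.prod_pow_eq_pow_sum, mul_assoc]

lemma aeval_algebraMap_mul_const_of_isHomogeneous [CommSemiring R] [CommSemiring B] [Algebra R B]
    {P : MvPolynomial σ R} {k : ℕ} (hP : P.IsHomogeneous k) (x : σ → R) (t : B) :
    aeval (fun i ↦ algebraMap R B (x i) * t) P = algebraMap R B (eval x P) * t ^ k := by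
  rw [aeval_mul_const_of_isHomogeneous hP]
  congr 1
  exact aeval_algebraMap_apply B x P

variable [CommRing R] [CommRing B] [Algebra R B]

lemma sum_aeval_pderiv_mul_X [Fintype σ] (a ξ : σ → B) (P : MvPolynomial σ R) (l : σ) :
    ∑ m, aeval a (pderiv m (P * X l)) * ξ m =
      (∑ m, aeval a (pderiv m P) * ξ m) * a l + aeval a P * ξ l := by
  classical
  have hterm (m : σ) : aeval a (pderiv m (P * X l)) * ξ m =
      aeval a (pderiv m P) * ξ m * a l + if m = l then aeval a P * ξ l else 0 := by
    rw [pderiv_mul, pderiv_X, map_add, map_mul, map_mul, aeval_X]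
    obtain rfl | hne := eq_or_ne m l
    · simp; ring
    · simp [hne]; ring
  simp_rw [hterm, Finset.sum_add_distrib, Finset.sum_mul]
  simp

lemma aeval_add_sub_sub_sum_pderiv_mem_sq [Fintype σ] {J : Ideal B} (a : σ → B) {ξ : σ → B}
    (hξ : ∀ m, ξ m ∈ J) (P : MvPolynomial σ R) :
    aeval (a + ξ) P - aeval a P - ∑ m, aeval a (pderiv m P) * ξ m ∈ J ^ 2 := by
  induction P using MvPolynomial.induction_on with
  | C c => simp
  | add p q hp hq =>
    convert (J ^ 2).add_mem hp hq using 1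
    simp only [map_add, add_mul, Finset.sum_add_distrib]
    ring
  | mul_X p l hp =>
    have hquad : (∑ m, aeval a (pderiv m p) * ξ m) * ξ l ∈ J ^ 2 := by
      rw [pow_two]
      exact Ideal.mul_mem_mul (Ideal.sum_mem _ fun m _ ↦ J.mul_mem_left _ (hξ m)) (hξ l)
    convert (J ^ 2).add_mem ((J ^ 2).mul_mem_right (a l + ξ l) hp) hquad using 1
    rw [sum_aeval_pderiv_mul_X]
    simp only [map_mul, aeval_X, Pi.add_apply]
    ring

end Taylor

section LineForms

variable {K σ : Type*} [Field K]

/-- The linear forms `x i * X m - x m * X i`; if `x i ≠ 0`, they cut out the line spanned by `x`. -/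
noncomputable def lineForm (x : σ → K) (i m : σ) : MvPolynomial σ K :=
  C (x i) * X m - C (x m) * X i

/-- The restriction of polynomials to the line spanned by `x`, in the coordinate given by `x`. -/
noncomputable def lineRestriction (x : σ → K) : MvPolynomial σ K →ₐ[K] Polynomial K :=
  aeval fun i ↦ algebraMap K (Polynomial K) (x i) * Polynomial.X

lemma lineRestriction_coeff (x : σ → K) (P : MvPolynomial σ K) (d : ℕ) :
    (lineRestriction x P).coeff d = eval x (homogeneousComponent d P) := by
  have hsum : lineRestriction x P = ∑ k ∈ Finset.range (P.totalDegree + 1),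
      Polynomial.C (eval x (homogeneousComponent k P)) * Polynomial.X ^ k := by
    conv_lhs => rw [← sum_homogeneousComponent P, map_sum]
    exact Finset.sum_congr rfl fun k _ ↦ aeval_algebraMap_mul_const_of_isHomogeneous
      (homogeneousComponent_isHomogeneous k P) x Polynomial.X
  rw [hsum, Polynomial.finsetSum_coeff]
  simp only [Polynomial.coeff_C_mul_X_pow, Finset.sum_ite_eq]
  split_ifs with hd
  · rfl
  · rw [homogeneousComponent_eq_zero _ _ (by simpa [Nat.lt_succ_iff] using hd), map_zero]

lemma lineRestriction_eq_zero_iff {x : σ → K} {P : MvPolynomial σ K} :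
    lineRestriction x P = 0 ↔ ∀ d, eval x (homogeneousComponent d P) = 0 := by
  simp only [Polynomial.ext_iff, lineRestriction_coeff, Polynomial.coeff_zero]

lemma lineRestriction_eq_zero_of_mem {I : Ideal (MvPolynomial σ K)} (hI : IsHomog I) {x : σ → K}
    (hx : ∀ f ∈ I, eval x f = 0) {P : MvPolynomial σ K} (hP : P ∈ I) : lineRestriction x P = 0 :=
  lineRestriction_eq_zero_iff.2 fun d ↦ hx _ (hI P hP d)

lemma lineRestriction_lineForm (x : σ → K) (i m : σ) : lineRestriction x (lineForm x i m) = 0 := by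
  simp only [lineRestriction, lineForm, map_sub, map_mul, aeval_X, algHom_C]
  ring

lemma aeval_sub_aeval_mem {R B : Type*} [CommRing R] [CommRing B] [Algebra R B] {J : Ideal B}
    {a b : σ → B} (h : ∀ i, a i - b i ∈ J) (P : MvPolynomial σ R) : aeval a P - aeval b P ∈ J := by
  have hmk (c : σ → B) : Ideal.Quotient.mk J (aeval c P) =
      aeval (fun i ↦ Ideal.Quotient.mk J (c i)) P := by
    rw [← Ideal.Quotient.mkₐ_eq_mk R, comp_aeval_apply]
  rw [← Ideal.Quotient.mk_eq_mk_iff_sub_mem, hmk, hmk]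
  congr 2
  exact funext fun i ↦ (Ideal.Quotient.mk_eq_mk_iff_sub_mem _ _).2 (h i)

lemma ker_lineRestriction {x : σ → K} {i : σ} (hi : x i ≠ 0) :
    RingHom.ker (lineRestriction x) = Ideal.span (Set.range (lineForm x i)) := by
  refine le_antisymm (fun P hP ↦ ?_) (Ideal.span_le.2 ?_)
  · rw [← sum_homogeneousComponent P]
    refine Ideal.sum_mem _ fun k _ ↦ ?_
    have hQ := homogeneousComponent_isHomogeneous k P
    have hmem := aeval_sub_aeval_mem (J := Ideal.span (Set.range (lineForm x i)))
      (a := fun m ↦ X m * C (x i)) (b := fun m ↦ C (x m) * X i)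
      (fun m ↦ Ideal.subset_span ⟨m, by rw [lineForm, mul_comm (X m)]⟩) (homogeneousComponent k P)
    rw [aeval_mul_const_of_isHomogeneous hQ, aeval_X_left_apply, ← algebraMap_eq,
      aeval_algebraMap_mul_const_of_isHomogeneous hQ, lineRestriction_eq_zero_iff.1 hP k, map_zero,
      zero_mul, sub_zero] at hmem
    exact (Ideal.mul_unit_mem_iff_mem _
      (((isUnit_iff_ne_zero.2 hi).map (algebraMap K (MvPolynomial σ K))).pow k)).1 hmem
  · rintro _ ⟨m, rfl⟩
    exact lineRestriction_lineForm x i m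

end LineForms

section GradientSpan

variable {K σ : Type*} [Field K]

/-- The row space at `x` of the Jacobian matrix of the ideal `I`. -/
def gradientSpan (I : Ideal (MvPolynomial σ K)) (x : σ → K) : Submodule K (σ → K) :=
  Submodule.span K {v | ∃ f ∈ I, v = fun i ↦ eval x (pderiv i f)}

lemma gradientSpan_le {I : Ideal (MvPolynomial σ K)} (hI : IsHomog I) {x : σ → K}
    {M : Submodule K (σ → K)}
    (h : ∀ f ∈ I, ∀ k, f.IsHomogeneous k → (fun i ↦ eval x (pderiv i f)) ∈ M) :
    gradientSpan I x ≤ M := by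
  refine Submodule.span_le.2 ?_
  rintro _ ⟨f, hf, rfl⟩
  have hsum : (fun i ↦ eval x (pderiv i f)) = ∑ d ∈ Finset.range (f.totalDegree + 1),
      fun i ↦ eval x (pderiv i (homogeneousComponent d f)) := by
    conv_lhs => rw [← sum_homogeneousComponent f]
    ext i
    simp
  rw [hsum]
  exact M.sum_mem fun d _ ↦ h _ (hI f hf d) d (homogeneousComponent_isHomogeneous d f)

lemma dotProduct_eq_zero_of_mem_gradientSpan [Fintype σ] {I : Ideal (MvPolynomial σ K)}
    (hI : IsHomog I) {x : σ → K} (hx : ∀ f ∈ I, eval x f = 0) {v : σ → K}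
    (hv : v ∈ gradientSpan I x) : x ⬝ᵥ v = 0 := by
  suffices h : gradientSpan I x ≤ LinearMap.ker (dotProductBilin K K x) from h hv
  refine gradientSpan_le hI fun f hf k hk ↦ ?_
  -- Euler's formula
  simpa [dotProduct, hx f hf] using congrArg (eval x) hk.sum_X_mul_pderiv

lemma exists_forall_sub_smul_mem {V : Type*} [AddCommGroup V] [Module K V] [FiniteDimensional K V]
    {M : Submodule K V} (hM : Module.finrank K V ≤ Module.finrank K M + 1) :
    ∃ v : V, ∀ y, ∃ c : K, y - c • v ∈ M := by
  have hquot : Module.finrank K (V ⧸ M) ≤ 1 := by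
    have := Submodule.finrank_quotient_add_finrank M
    omega
  obtain ⟨v, hv⟩ := finrank_le_one_iff.1 hquot
  obtain ⟨v, rfl⟩ := Submodule.Quotient.mk_surjective M v
  refine ⟨v, fun y ↦ ?_⟩
  obtain ⟨c, hc⟩ := hv (Submodule.Quotient.mk y)
  exact ⟨c, (Submodule.Quotient.eq M).1 hc.symm⟩

lemma exists_forall_sub_smul_mem_gradientSpan_sup {n : ℕ}
    {I : Ideal (MvPolynomial (Fin (n + 1)) K)} (hI : IsHomog I) {x : Fin (n + 1) → K}
    (hx : ∀ f ∈ I, eval x f = 0) (hr : n ≤ jacobianRank I x + 1) {i : Fin (n + 1)}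
    (hi : x i ≠ 0) :
    ∃ v : Fin (n + 1) → K, ∀ y, ∃ c : K,
      y - c • v ∈ gradientSpan I x ⊔ Submodule.span K {Pi.single i 1} := by
  have hsingle : (Pi.single i 1 : Fin (n + 1) → K) ∉ gradientSpan I x := fun h ↦
    hi (by simpa using dotProduct_eq_zero_of_mem_gradientSpan hI hx h)
  have hlt : gradientSpan I x < gradientSpan I x ⊔ Submodule.span K {Pi.single i 1} :=
    lt_of_le_not_ge le_sup_left fun h ↦
      hsingle (h (Submodule.mem_sup_right (Submodule.mem_span_singleton_self _)))
  refine exists_forall_sub_smul_mem ?_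
  have hrank : n ≤ Module.finrank K (gradientSpan I x) + 1 := hr
  have := Submodule.finrank_lt_finrank_of_lt hlt
  rw [Module.finrank_fin_fun]
  omega

end GradientSpan

section PrincipalMaximalIdeal

variable {A : Type*} [CommRing A]

lemma linearCombination_gradient_mem_sq {K σ : Type*} [Field K] [Fintype σ] [Algebra K A]
    (ρ : MvPolynomial σ K →ₐ[K] A) {x : σ → K} {i : σ} (hunit : IsUnit (ρ (X i))) {J : Ideal A}
    (hJ : ∀ m, ρ (lineForm x i m) ∈ J) {f : MvPolynomial σ K} {k : ℕ} (hk : f.IsHomogeneous k)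
    (hρf : ρ f = 0) (hxf : eval x f = 0) :
    Fintype.linearCombination K (fun m ↦ ρ (lineForm x i m)) (fun m ↦ eval x (pderiv m f)) ∈
      J ^ 2 := by
  have htaylor := aeval_add_sub_sub_sum_pderiv_mem_sq
    (fun m ↦ algebraMap K A (x m) * ρ (X i)) hJ f
  have hshift : ((fun m ↦ algebraMap K A (x m) * ρ (X i)) + fun m ↦ ρ (lineForm x i m)) =
      fun m ↦ ρ (X m) * algebraMap K A (x i) := by
    ext m
    simp only [Pi.add_apply, lineForm, map_sub, map_mul, algHom_C]
    ring
  have hzero : aeval (fun m ↦ ρ (X m)) f = 0 := by rw [← comp_aeval_apply, aeval_X_left_apply, hρf]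
  have hlinear : ∑ m, aeval (fun m ↦ algebraMap K A (x m) * ρ (X i)) (pderiv m f) *
      ρ (lineForm x i m) = ρ (X i) ^ (k - 1) * Fintype.linearCombination K
        (fun m ↦ ρ (lineForm x i m)) (fun m ↦ eval x (pderiv m f)) := by
    rw [Fintype.linearCombination_apply, Finset.mul_sum]
    refine Finset.sum_congr rfl fun m _ ↦ ?_
    rw [aeval_algebraMap_mul_const_of_isHomogeneous hk.pderiv, Algebra.smul_def]
    ring
  rw [hshift, aeval_mul_const_of_isHomogeneous hk, hzero,
    aeval_algebraMap_mul_const_of_isHomogeneous hk, hxf, map_zero, zero_mul, zero_mul, sub_zero,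
    zero_sub, neg_mem_iff, hlinear] at htaylor
  exact (Ideal.unit_mul_mem_iff_mem _ (hunit.pow _)).1 htaylor

lemma isPrincipal_maximalIdeal_of_linearCombination_mem_sq [IsLocalRing A] [IsNoetherianRing A]
    {K ι : Type*} [Field K] [Algebra K A] [Fintype ι] {ξ : ι → A}
    (hξ : IsLocalRing.maximalIdeal A = Ideal.span (Set.range ξ)) {M : Submodule K (ι → K)}
    (hM : ∀ y ∈ M, Fintype.linearCombination K ξ y ∈ IsLocalRing.maximalIdeal A ^ 2)
    {v : ι → K} (hv : ∀ y, ∃ c : K, y - c • v ∈ M) :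
    (IsLocalRing.maximalIdeal A).IsPrincipal := by
  classical
  set 𝔪 := IsLocalRing.maximalIdeal A
  set g := Fintype.linearCombination K ξ v with hg
  have hξm (m : ι) : ξ m ∈ 𝔪 := hξ ▸ Ideal.subset_span ⟨m, rfl⟩
  refine ⟨⟨g, le_antisymm ?_ ?_⟩⟩
  -- Nakayama's lemma
  · refine Submodule.le_of_le_smul_of_le_jacobson_bot (I := 𝔪) (IsNoetherian.noetherian _)
      (IsLocalRing.jacobson_eq_maximalIdeal _ bot_ne_top).ge ?_
    conv_lhs => rw [hξ]
    refine Ideal.span_le.2 ?_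
    rintro _ ⟨m, rfl⟩
    obtain ⟨c, hc⟩ := hv (Pi.single m 1)
    have hsq := hM _ hc
    rw [map_sub, map_smul, Fintype.linearCombination_apply_single, one_smul, ← hg] at hsq
    rw [SetLike.mem_coe, ← add_sub_cancel (c • g) (ξ m)]
    refine Submodule.add_mem_sup ?_ ?_
    · rw [Algebra.smul_def]
      exact Ideal.mul_mem_left _ _ (Ideal.mem_span_singleton_self _)
    · rwa [smul_eq_mul, ← pow_two]
  · rw [Submodule.span_singleton_le_iff_mem, hg, Fintype.linearCombination_apply]
    refine Submodule.sum_mem _ fun m _ ↦ ?_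
    rw [Algebra.smul_def]
    exact Ideal.mul_mem_left _ _ (hξm m)

lemma exists_eq_pow_mul_isUnit_of_maximalIdeal_eq_span [IsLocalRing A] [IsNoetherianRing A] {g : A}
    (hg : IsLocalRing.maximalIdeal A = Ideal.span {g}) {a : A} (ha : a ≠ 0) :
    ∃ (k : ℕ) (u : A), IsUnit u ∧ a = g ^ k * u := by
  have hfin : FiniteMultiplicity g a := by
    by_contra h
    rw [FiniteMultiplicity.not_iff_forall] at h
    refine ha ?_
    rw [← Ideal.mem_bot, ← Ideal.iInf_pow_eq_bot_of_isLocalRing (IsLocalRing.maximalIdeal A)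
      (Ideal.IsPrime.ne_top inferInstance), Ideal.mem_iInf]
    intro k
    rw [hg, Ideal.span_singleton_pow]
    exact Ideal.mem_span_singleton.2 (h k)
  obtain ⟨u, hau, hgu⟩ := hfin.exists_eq_pow_mul_and_not_dvd
  refine ⟨_, u, ?_, hau⟩
  by_contra hu
  rw [← Ideal.mem_span_singleton, ← hg] at hgu
  exact hgu ((IsLocalRing.mem_maximalIdeal u).2 hu)

lemma isDomain_of_isPrincipal_maximalIdeal [IsLocalRing A] [IsNoetherianRing A] [IsReduced A]
    (h : (IsLocalRing.maximalIdeal A).IsPrincipal) : IsDomain A := by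
  obtain ⟨⟨g, hg⟩⟩ := h
  suffices NoZeroDivisors A from NoZeroDivisors.to_isDomain A
  refine ⟨fun {a b} hab ↦ ?_⟩
  by_contra! hne
  obtain ⟨k, u, hu, rfl⟩ := exists_eq_pow_mul_isUnit_of_maximalIdeal_eq_span hg hne.1
  obtain ⟨l, v, hv, rfl⟩ := exists_eq_pow_mul_isUnit_of_maximalIdeal_eq_span hg hne.2
  have hpow : g ^ (k + l) = 0 := by
    rw [← (hu.mul hv).mul_left_eq_zero, ← hab]
    ring
  have hg0 : g = 0 := eq_zero_of_pow_eq_zero hpow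
  have hk : k = 0 := by
    by_contra hk
    exact hne.1 (by rw [hg0, zero_pow hk, zero_mul])
  have hl : l = 0 := by
    by_contra hl
    exact hne.2 (by rw [hg0, zero_pow hl, zero_mul])
  simp [hk, hl] at hpow

end PrincipalMaximalIdeal

section LocalRing

variable {K : Type*} [Field K] {n : ℕ} {R : Type*} [CommRing R] [Algebra K R]

/-- For a presentation `q` of the coordinate ring of the affine cone over a projective variety, the
prime ideal of the line spanned by a point `x` of the variety. -/
noncomputable def linePrime (q : MvPolynomial (Fin (n + 1)) K →ₐ[K] R) (x : Fin (n + 1) → K) :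
    Ideal R :=
  (RingHom.ker (lineRestriction x)).map q

variable {q : MvPolynomial (Fin (n + 1)) K →ₐ[K] R} {x : Fin (n + 1) → K}

lemma ker_le_ker_lineRestriction (hI : IsHomog (RingHom.ker q))
    (hx : x ∈ projZeros (RingHom.ker q)) :
    RingHom.ker q ≤ RingHom.ker (lineRestriction x) :=
  fun _ hf ↦ lineRestriction_eq_zero_of_mem hI hx.2 hf

lemma map_mem_linePrime_iff (hq : Function.Surjective q) (hI : IsHomog (RingHom.ker q))
    (hx : x ∈ projZeros (RingHom.ker q)) {P : MvPolynomial (Fin (n + 1)) K} :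
    q P ∈ linePrime q x ↔ lineRestriction x P = 0 := by
  rw [linePrime, ← Ideal.mem_comap, Ideal.comap_map_of_surjective' q hq,
    sup_eq_left.2 (ker_le_ker_lineRestriction hI hx), RingHom.mem_ker]

lemma linePrime_isPrime (hq : Function.Surjective q) (hI : IsHomog (RingHom.ker q))
    (hx : x ∈ projZeros (RingHom.ker q)) : (linePrime q x).IsPrime :=
  have : (RingHom.ker (lineRestriction x)).IsPrime := RingHom.ker_isPrime _
  Ideal.map_isPrime_of_surjective hq (ker_le_ker_lineRestriction hI hx)

variable {A : Type*} [CommRing A] [Algebra R A] [(linePrime q x).IsPrime]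
  [IsLocalization.AtPrime A (linePrime q x)]

lemma maximalIdeal_eq_span_lineForm [IsLocalRing A] [Algebra K A] [IsScalarTower K R A]
    {i : Fin (n + 1)} (hi : x i ≠ 0) : IsLocalRing.maximalIdeal A = Ideal.span
      (Set.range fun m ↦ ((IsScalarTower.toAlgHom K R A).comp q) (lineForm x i m)) := by
  rw [← IsLocalization.AtPrime.map_eq_maximalIdeal (linePrime q x) A, linePrime,
    ker_lineRestriction hi, Ideal.map_span, Ideal.map_span, ← Set.range_comp, ← Set.range_comp]
  rfl

theorem isPrincipal_maximalIdeal_of_le_jacobianRank (hq : Function.Surjective q)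
    (hI : IsHomog (RingHom.ker q)) (hx : x ∈ projZeros (RingHom.ker q))
    (hr : n ≤ jacobianRank (RingHom.ker q) x + 1) [IsLocalRing A] [Algebra K A]
    [IsScalarTower K R A] :
    (IsLocalRing.maximalIdeal A).IsPrincipal := by
  obtain ⟨i, hi⟩ := Function.ne_iff.1 hx.1
  obtain ⟨v, hv⟩ := exists_forall_sub_smul_mem_gradientSpan_sup hI hx.2 hr hi
  have : IsNoetherianRing R := isNoetherianRing_of_surjective _ R q.toRingHom hq
  have : IsNoetherianRing A :=
    IsLocalization.isNoetherianRing (linePrime q x).primeCompl A inferInstance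
  set ρ := (IsScalarTower.toAlgHom K R A).comp q
  have hspan : IsLocalRing.maximalIdeal A = Ideal.span (Set.range fun m ↦ ρ (lineForm x i m)) :=
    maximalIdeal_eq_span_lineForm hi
  have hunit : IsUnit (ρ (X i)) := by
    refine IsLocalization.map_units A (⟨q (X i), ?_⟩ : (linePrime q x).primeCompl)
    intro h
    rw [SetLike.mem_coe, map_mem_linePrime_iff hq hI hx] at h
    exact hi (by simpa [lineRestriction] using h)
  have hsq : gradientSpan (RingHom.ker q) x ⊔ Submodule.span K {Pi.single i 1} ≤
      ((IsLocalRing.maximalIdeal A ^ 2).restrictScalars K).comap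
        (Fintype.linearCombination K fun m ↦ ρ (lineForm x i m)) := by
    refine sup_le (gradientSpan_le hI fun f hf k hk ↦ ?_) ?_
    · refine linearCombination_gradient_mem_sq ρ hunit (fun m ↦ ?_) hk ?_ (hx.2 f hf)
      · exact hspan ▸ Ideal.subset_span ⟨m, rfl⟩
      · rw [AlgHom.comp_apply, RingHom.mem_ker.1 hf, map_zero]
    · rw [Submodule.span_singleton_le_iff_mem, Submodule.mem_comap,
        Fintype.linearCombination_apply_single]
      simp [lineForm]
  exact isPrincipal_maximalIdeal_of_linearCombination_mem_sq hspan hsq hv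

theorem isIntegrallyClosed_of_le_jacobianRank [IsDomain R] (hq : Function.Surjective q)
    (hI : IsHomog (RingHom.ker q)) (hx : x ∈ projZeros (RingHom.ker q))
    (hr : n ≤ jacobianRank (RingHom.ker q) x + 1) [Algebra K A] [IsScalarTower K R A] :
    IsIntegrallyClosed A := by
  have : IsLocalRing A := IsLocalization.AtPrime.isLocalRing A (linePrime q x)
  have : IsDomain A := IsLocalization.isDomain_of_le_nonZeroDivisors A
    (linePrime q x).primeCompl_le_nonZeroDivisors
  have : IsNoetherianRing R := isNoetherianRing_of_surjective _ R q.toRingHom hq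
  have : IsNoetherianRing A :=
    IsLocalization.isNoetherianRing (linePrime q x).primeCompl A inferInstance
  have hclosed : IsIntegrallyClosed A ∧ ∀ P : Ideal A, P ≠ ⊥ → P.IsPrime →
      P = IsLocalRing.maximalIdeal A :=
    ((tfae_of_isNoetherianRing_of_isLocalRing_of_isDomain A).out 4 3).1
      (isPrincipal_maximalIdeal_of_le_jacobianRank hq hI hx hr)
  exact hclosed.1

lemma exists_mul_mem_ker_of_algebraMap_eq_zero (hq : Function.Surjective q)
    (hI : IsHomog (RingHom.ker q)) (hx : x ∈ projZeros (RingHom.ker q))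
    {P : MvPolynomial (Fin (n + 1)) K} (hP : algebraMap R A (q P) = 0) :
    ∃ s, lineRestriction x s ≠ 0 ∧ s * P ∈ RingHom.ker q := by
  obtain ⟨⟨s, hs⟩, hsP⟩ := (IsLocalization.map_eq_zero_iff (linePrime q x).primeCompl A _).1 hP
  obtain ⟨s, rfl⟩ := hq s
  refine ⟨s, fun h ↦ hs ((map_mem_linePrime_iff hq hI hx).2 h), ?_⟩
  rwa [RingHom.mem_ker, map_mul]

end LocalRing

section LocalProperties

variable {K : Type*} [Field K] {n : ℕ} {x : Fin (n + 1) → K}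

theorem exists_lineRestriction_ne_zero_and_mul_mem_or_mul_mem
    {I : Ideal (MvPolynomial (Fin (n + 1)) K)} (hI : IsHomog I) (hrad : I.IsRadical)
    (hx : x ∈ projZeros I) (hr : n ≤ jacobianRank I x + 1) {a b : MvPolynomial (Fin (n + 1)) K}
    (hab : a * b ∈ I) : ∃ s, lineRestriction x s ≠ 0 ∧ (s * a ∈ I ∨ s * b ∈ I) := by
  have hq := Ideal.Quotient.mkₐ_surjective K I
  have hker := Ideal.Quotient.mkₐ_ker K I
  rw [← hker] at hI hx hr
  have := linePrime_isPrime hq hI hx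
  let A := Localization.AtPrime (linePrime (Ideal.Quotient.mkₐ K I) x)
  have : IsReduced (MvPolynomial (Fin (n + 1)) K ⧸ I) :=
    (Ideal.isRadical_iff_quotient_reduced I).1 hrad
  have : IsReduced A :=
    isReduced_localizationPreserves (linePrime (Ideal.Quotient.mkₐ K I) x).primeCompl A this
  have : IsDomain A := isDomain_of_isPrincipal_maximalIdeal
    (isPrincipal_maximalIdeal_of_le_jacobianRank hq hI hx hr)
  have hzero : algebraMap _ A (Ideal.Quotient.mkₐ K I a) *
      algebraMap _ A (Ideal.Quotient.mkₐ K I b) = 0 := by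
    rw [← map_mul, ← map_mul, Ideal.Quotient.mkₐ_eq_mk, Ideal.Quotient.eq_zero_iff_mem.2 hab,
      map_zero]
  rcases mul_eq_zero.1 hzero with h | h <;>
    obtain ⟨s, hs, hsI⟩ := exists_mul_mem_ker_of_algebraMap_eq_zero hq hI hx h
  exacts [⟨s, hs, .inl (hker ▸ hsI)⟩, ⟨s, hs, .inr (hker ▸ hsI)⟩]

lemma exists_algebraMap_eq_of_isIntegral {R A L : Type*} [CommRing R] [CommRing A] [IsDomain A]
    [IsIntegrallyClosed A] [Field L] [Algebra R A] [Algebra R L] [Algebra A L]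
    [IsScalarTower R A L] (hinj : Function.Injective (algebraMap A L)) {a b : A} {η : L}
    (hb : b ≠ 0) (hab : algebraMap A L b * η = algebraMap A L a) (hη : IsIntegral R η) :
    ∃ c, algebraMap A L c = η := by
  let ψ : FractionRing A →ₐ[A] L := IsFractionRing.liftAlgHom (g := Algebra.ofId A L) hinj
  have hψ : ψ (algebraMap A _ a / algebraMap A _ b) = η := by
    rw [map_div₀, ψ.commutes, ψ.commutes, ← hab, mul_div_cancel_left₀ _
      ((map_ne_zero_iff _ hinj).2 hb)]
  have hint : IsIntegral A (algebraMap A (FractionRing A) a / algebraMap A _ b) := by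
    rw [← isIntegral_algHom_iff ψ ψ.toRingHom.injective, hψ]
    exact hη.tower_top
  obtain ⟨c, hc⟩ := IsIntegrallyClosed.isIntegral_iff.1 hint
  exact ⟨c, by rw [← hψ, ← hc, ψ.commutes]⟩

theorem exists_lineRestriction_ne_zero_and_mul_eq_of_isIntegral {L : Type*} [Field L] [Algebra K L]
    {π : MvPolynomial (Fin (n + 1)) K →ₐ[K] L} (hI : IsHomog (RingHom.ker π))
    (hx : x ∈ projZeros (RingHom.ker π)) (hr : n ≤ jacobianRank (RingHom.ker π) x + 1)
    {a b : MvPolynomial (Fin (n + 1)) K} {η : L} (hb : π b ≠ 0) (hab : π b * η = π a)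
    (hη : IsIntegral π.range η) :
    ∃ s t, lineRestriction x s ≠ 0 ∧ π s * η = π t := by
  have hq := π.rangeRestrict_surjective
  have hker : RingHom.ker π = RingHom.ker π.rangeRestrict := (π.ker_rangeRestrict).symm
  rw [hker] at hI hx hr
  have := linePrime_isPrime hq hI hx
  set p := linePrime π.rangeRestrict x
  let A := Localization.AtPrime p
  have : IsDomain A :=
    IsLocalization.isDomain_of_le_nonZeroDivisors _ p.primeCompl_le_nonZeroDivisors
  have : IsIntegrallyClosed A := isIntegrallyClosed_of_le_jacobianRank hq hI hx hr
  have hunit (s : p.primeCompl) : IsUnit (algebraMap π.range L s) := by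
    refine isUnit_iff_ne_zero.2 fun h ↦ s.2 ?_
    rw [SetLike.mem_coe, show (s : π.range) = 0 from Subtype.val_injective h]
    exact p.zero_mem
  algebraize [IsLocalization.lift (S := A) hunit]
  have : IsScalarTower π.range A L := .of_algebraMap_eq' (IsLocalization.lift_comp hunit).symm
  have hinj : Function.Injective (algebraMap A L) :=
    (IsLocalization.lift_injective_iff hunit).2 fun y z ↦
      ((IsLocalization.injective A p.primeCompl_le_nonZeroDivisors).eq_iff).trans
        Subtype.val_injective.eq_iff.symm
  have hmap (P : MvPolynomial (Fin (n + 1)) K) :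
      algebraMap A L (algebraMap π.range A (π.rangeRestrict P)) = π P :=
    (IsScalarTower.algebraMap_apply π.range A L _).symm
  have hb0 : algebraMap π.range A (π.rangeRestrict b) ≠ 0 := fun h ↦
    hb (by rw [← hmap, h, map_zero])
  rw [← hmap, ← hmap] at hab
  obtain ⟨c, rfl⟩ := exists_algebraMap_eq_of_isIntegral hinj hb0 hab hη
  obtain ⟨⟨t, s⟩, hts⟩ := IsLocalization.surj p.primeCompl c
  obtain ⟨t, rfl⟩ := hq t
  obtain ⟨s, hs⟩ := s
  obtain ⟨s, rfl⟩ := hq s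
  refine ⟨s, t, fun h ↦ hs ((map_mem_linePrime_iff hq hI hx).2 h), ?_⟩
  rw [← hmap, ← hmap, ← hts, map_mul, mul_comm]

end LocalProperties

/-! ### A smooth connected reduced projective scheme has a prime ideal -/

section HomogeneousIdeals

variable {K σ : Type*} [Field K] {I J : Ideal (MvPolynomial σ K)}

lemma homogeneousComponent_add_mul {R : Type*} [CommSemiring R] {P : MvPolynomial σ R} {e : ℕ}
    (hP : P.IsHomogeneous e) (d : ℕ) (Q : MvPolynomial σ R) :
    homogeneousComponent (d + e) (Q * P) = homogeneousComponent d Q * P := by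
  have hterm (k : ℕ) : homogeneousComponent (d + e) (homogeneousComponent k Q * P) =
      if d = k then homogeneousComponent k Q * P else 0 := by
    rw [homogeneousComponent_of_mem ((mem_homogeneousSubmodule (k + e) _).2
      ((homogeneousComponent_isHomogeneous k Q).mul hP))]
    simp
  conv_lhs => rw [← sum_homogeneousComponent Q, Finset.sum_mul, map_sum]
  simp only [hterm, Finset.sum_ite_eq]
  split_ifs with hd
  · rfl
  · rw [homogeneousComponent_eq_zero _ _ (by simpa [Nat.lt_succ_iff] using hd), zero_mul]

lemma mem_of_forall_homogeneousComponent_mem {f : MvPolynomial σ K}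
    (h : ∀ d, homogeneousComponent d f ∈ I) : f ∈ I := by
  rw [← sum_homogeneousComponent f]
  exact I.sum_mem fun d _ ↦ h d

lemma isHomog_colon (hI : IsHomog I) (hJ : IsHomog J) : IsHomog (I.colon (J : Set _)) := by
  intro s hs d
  rw [Submodule.mem_colon] at hs ⊢
  intro r hr
  rw [smul_eq_mul, ← sum_homogeneousComponent r, Finset.mul_sum]
  refine I.sum_mem fun e _ ↦ ?_
  rw [← homogeneousComponent_add_mul (homogeneousComponent_isHomogeneous e r)]
  exact hI _ (hs _ (hJ r hr e)) _

lemma isHomog_colon_singleton (hI : IsHomog I) {a : MvPolynomial σ K} {e : ℕ}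
    (ha : a.IsHomogeneous e) : IsHomog (I.colon {a}) := by
  intro s hs d
  rw [Submodule.mem_colon_singleton, smul_eq_mul] at hs ⊢
  rw [← homogeneousComponent_add_mul ha]
  exact hI _ hs _

end HomogeneousIdeals

section Primality

variable {K : Type*} [Field K] {n : ℕ} {I J : Ideal (MvPolynomial (Fin (n + 1)) K)}

lemma eval_zero_eq_zero_of_isHomogeneous {σ R : Type*} [CommSemiring R] {P : MvPolynomial σ R}
    {d : ℕ} (hP : P.IsHomogeneous d) (hd : d ≠ 0) : eval 0 P = 0 := by
  rw [eval_zero, constantCoeff_eq]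
  exact hP.coeff_eq_zero (by simpa using hd.symm)

lemma le_of_projZeros_subset [IsAlgClosed K] (hrad : I.IsRadical) (hne : (projZeros I).Nonempty)
    (hJ : IsHomog J) (h : projZeros I ⊆ projZeros J) : J ≤ I := by
  refine fun s hs ↦ mem_of_forall_homogeneousComponent_mem fun d ↦ hrad ?_
  rw [← vanishingIdeal_zeroLocus_eq_radical (K := K) I, mem_vanishingIdeal_iff]
  intro x hx
  change eval x _ = 0
  have hsd := hJ s hs d
  obtain rfl | hx0 := eq_or_ne x 0
  · obtain rfl | hd := eq_or_ne d 0
    · obtain ⟨y, hy⟩ := hne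
      have := (h hy).2 _ hsd
      rw [homogeneousComponent_zero] at this ⊢
      simpa using this
    · exact eval_zero_eq_zero_of_isHomogeneous (homogeneousComponent_isHomogeneous d s) hd
  · exact (h (show x ∈ projZeros I from ⟨hx0, hx⟩)).2 _ hsd

lemma projZeros_subset_union_colon (I J : Ideal (MvPolynomial (Fin (n + 1)) K)) :
    projZeros I ⊆ projZeros J ∪ projZeros (I.colon (J : Set _)) := by
  intro x hx
  by_contra hc
  simp only [projZeros, Set.mem_union, Set.mem_ofPred_eq, not_or, not_and, not_forall] at hc
  obtain ⟨s, hs, hs0⟩ := hc.1 hx.1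
  obtain ⟨t, ht, ht0⟩ := hc.2 hx.1
  have := hx.2 _ (Submodule.mem_colon.1 ht s hs)
  rw [smul_eq_mul, map_mul] at this
  exact mul_ne_zero ht0 hs0 this

lemma exists_mem_colon_lineRestriction_ne_zero {x : Fin (n + 1) → K}
    (h : ∀ r ∈ J, ∃ s, lineRestriction x s ≠ 0 ∧ s * r ∈ I) :
    ∃ s ∈ I.colon (J : Set _), lineRestriction x s ≠ 0 := by
  obtain ⟨T, hT⟩ := IsNoetherian.noetherian J
  choose! f hf0 hfI using h
  have hTJ : ∀ r ∈ T, r ∈ J := fun r hr ↦ hT ▸ Submodule.subset_span hr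
  refine ⟨∏ r ∈ T, f r, ?_, ?_⟩
  · rw [← hT, Ideal.colon_span, Submodule.mem_colon]
    intro r hr
    refine I.mem_of_dvd ?_ (hfI r (hTJ r hr))
    exact mul_dvd_mul_right (Finset.dvd_prod_of_mem f hr) r
  · rw [map_prod]
    exact Finset.prod_ne_zero_iff.2 fun r hr ↦ hf0 r (hTJ r hr)

-- On a smooth variety `{a ≠ 0}` and its complement have disjoint closures, since the local rings
-- are domains.
lemma projZeros_inter_colon_eq_empty (hI : IsHomog I) (hrad : I.IsRadical)
    (hsmooth : ∀ x ∈ projZeros I, n ≤ jacobianRank I x + 1) {a : MvPolynomial (Fin (n + 1)) K}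
    {e : ℕ} (ha : a.IsHomogeneous e) :
    projZeros I ∩ (projZeros (I.colon {a}) ∩ projZeros (I.colon (I.colon {a} : Set _))) = ∅ := by
  have hJ := isHomog_colon_singleton hI ha
  rw [Set.eq_empty_iff_forall_notMem]
  rintro x ⟨hx, hx₁, hx₂⟩
  obtain ⟨s, hs, hs0⟩ : ∃ s ∈ I.colon (I.colon {a} : Set _), lineRestriction x s ≠ 0 := by
    refine exists_mem_colon_lineRestriction_ne_zero fun r hr ↦ ?_
    rw [Submodule.mem_colon_singleton, smul_eq_mul] at hr
    obtain ⟨s, hs, hsr | hsa⟩ :=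
      exists_lineRestriction_ne_zero_and_mul_mem_or_mul_mem hI hrad hx (hsmooth x hx) hr
    · exact ⟨s, hs, hsr⟩
    · exact absurd
        (lineRestriction_eq_zero_of_mem hJ hx₁.2 (Submodule.mem_colon_singleton.2 hsa)) hs
  exact hs0 (lineRestriction_eq_zero_of_mem (isHomog_colon hI hJ) hx₂.2 hs)

lemma mem_or_mem_of_mul_mem_of_isHomogeneous [IsAlgClosed K] (hI : IsHomog I) (hrad : I.IsRadical)
    (hconn : IsConnectedProjVariety I) (hsmooth : ∀ x ∈ projZeros I, n ≤ jacobianRank I x + 1)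
    {a b : MvPolynomial (Fin (n + 1)) K} {e : ℕ} (ha : a.IsHomogeneous e) (hab : a * b ∈ I) :
    a ∈ I ∨ b ∈ I := by
  have hJ := isHomog_colon_singleton hI ha
  have hJ' := isHomog_colon hI hJ
  rcases hconn.2 _ _ hJ hJ' (projZeros_subset_union_colon I _)
    (projZeros_inter_colon_eq_empty hI hrad hsmooth ha) with h | h
  · refine .inr (le_of_projZeros_subset hrad hconn.1 hJ h ?_)
    rwa [Submodule.mem_colon_singleton, smul_eq_mul, mul_comm]
  · refine .inl (le_of_projZeros_subset hrad hconn.1 hJ' h (Submodule.mem_colon.2 fun r hr ↦ ?_))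
    rw [smul_eq_mul, mul_comm]
    exact Submodule.mem_colon_singleton.1 hr

attribute [local instance] MvPolynomial.gradedAlgebra in
theorem isPrime_of_isConnectedProjVariety [IsAlgClosed K] (hI : IsHomog I) (hrad : I.IsRadical)
    (hconn : IsConnectedProjVariety I) (hsmooth : ∀ x ∈ projZeros I, n ≤ jacobianRank I x + 1) :
    I.IsPrime := by
  have hhom : I.IsHomogeneous (homogeneousSubmodule (Fin (n + 1)) K) := fun d f hf ↦ by
    have := hI f hf d
    rwa [← decomposition.decompose'_apply] at this
  refine hhom.isPrime_of_homogeneous_mem_or_mem ?_ ?_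
  · rintro rfl
    obtain ⟨x, hx⟩ := hconn.1
    simpa using hx.2 1 trivial
  · rintro a b ⟨e, ha⟩ - hab
    exact mem_or_mem_of_mul_mem_of_isHomogeneous hI hrad hconn hsmooth ha hab

end Primality

/-! ### The Hilbert function of a graph degeneration -/

section ExponentCount

variable {σ : Type*}

lemma eq_single_add_single_of_support_subset [DecidableEq σ] {a b : σ} (hab : a ≠ b) {u : σ →₀ ℕ}
    (hu : u.support ⊆ {a, b}) : u = Finsupp.single a (u a) + Finsupp.single b (u b) := by
  conv_lhs => rw [← u.sum_single, u.sum_of_support_subset hu _ (by simp), Finset.sum_pair hab]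

lemma ncard_support_eq_singleton_and_degree_eq (a : σ) {k : ℕ} (hk : k ≠ 0) :
    {u : σ →₀ ℕ | u.support = {a} ∧ u.degree = k}.ncard = 1 := by
  refine Set.ncard_eq_one.2 ⟨Finsupp.single a k, Set.ext fun u ↦ ⟨?_, ?_⟩⟩
  · rintro ⟨hu, rfl⟩
    rw [(Finsupp.support_eq_singleton.1 hu).2]
    simp
  · rintro rfl
    exact ⟨by simp [Finsupp.support_single, hk], Finsupp.degree_single a k⟩

lemma ncard_support_eq_pair_and_degree_eq [DecidableEq σ] {a b : σ} (hab : a ≠ b) (k : ℕ) :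
    {u : σ →₀ ℕ | u.support = {a, b} ∧ u.degree = k}.ncard = k - 1 := by
  have himage : {u : σ →₀ ℕ | u.support = {a, b} ∧ u.degree = k} =
      (fun i ↦ Finsupp.single a (i + 1) + Finsupp.single b (k - (i + 1))) ''
        (Finset.range (k - 1) : Set ℕ) := by
    ext u
    constructor
    · rintro ⟨hu, rfl⟩
      have ha : u a ≠ 0 := Finsupp.mem_support_iff.1 (by simp [hu])
      have hb : u b ≠ 0 := Finsupp.mem_support_iff.1 (by simp [hu])
      have hdecomp := eq_single_add_single_of_support_subset hab hu.subset
      have hdeg : u.degree = u a + u b := by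
        conv_lhs => rw [hdecomp]
        simp
      refine ⟨u a - 1, by simp; omega, ?_⟩
      conv_rhs => rw [hdecomp]
      beta_reduce
      rw [show u a - 1 + 1 = u a by omega, show u.degree - u a = u b by omega]
    · rintro ⟨i, hi, rfl⟩
      rw [Finset.coe_range, Set.mem_Iio] at hi
      exact ⟨Finsupp.support_single_add_single hab (by omega) (by omega), by
        rw [map_add, Finsupp.degree_single, Finsupp.degree_single]
        omega⟩
  rw [himage, Set.ncard_image_of_injective, Set.ncard_coe_finset, Finset.card_range]
  intro i j hij
  simpa [Finsupp.single_apply, hab.symm] using DFunLike.congr_fun hij a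

end ExponentCount

/-- The edges of a simplicial complex, as two-element faces. -/
def SComplex.edges {n : ℕ} (Δ : SComplex n) : Set (Finset (Fin (n + 1))) :=
  {s | s ∈ Δ.faces ∧ s.card = 2}

lemma finite_inter_degree_eq {σ : Type*} [Finite σ] (A : Set (σ →₀ ℕ)) (k : ℕ) :
    (A ∩ {u | u.degree = k}).Finite :=
  (Finsupp.finite_of_degree_eq k).subset Set.inter_subset_right

namespace IsGraphDegeneration

variable {K : Type*} [Field K] {n : ℕ} {I : Ideal (MvPolynomial (Fin (n + 1)) K)}
  {Δ : SComplex n} {w : Fin (n + 1) → ℕ} (hG : IsGraphDegeneration I Δ w)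
include hG

lemma support_eq_singleton_or_mem_edges {u : Fin (n + 1) →₀ ℕ} (hu : u ∈ Δ.faceExponents)
    (hu0 : u ≠ 0) : (∃ a, u.support = {a}) ∨ u.support ∈ Δ.edges := by
  have hle := hG.card_le_two _ hu
  have hne : u.support.card ≠ 0 := by
    rwa [Ne, Finset.card_eq_zero, Finsupp.support_eq_empty]
  obtain hcard | hcard : u.support.card = 1 ∨ u.support.card = 2 := by omega
  exacts [.inl (Finset.card_eq_one.1 hcard), .inr ⟨hu, hcard⟩]

theorem ncard_faceExponents {k : ℕ} (hk : k ≠ 0) :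
    (Δ.faceExponents ∩ {u | u.degree = k}).ncard = n + 1 + Δ.edges.ncard * (k - 1) := by
  classical
  have hfin := finite_inter_degree_eq Δ.faceExponents k
  let vertices : Finset (Finset (Fin (n + 1))) := Finset.univ.image singleton
  have hdisj : Disjoint vertices Δ.edges.toFinset := by
    simp only [vertices, Finset.disjoint_left, Finset.mem_image, Set.mem_toFinset]
    rintro _ ⟨a, -, rfl⟩ hs
    simpa using hs.2
  have hsupport : ∀ u ∈ hfin.toFinset, u.support ∈ vertices ∪ Δ.edges.toFinset := by
    intro u hu
    obtain ⟨hface, hdeg⟩ := hfin.mem_toFinset.1 hu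
    obtain ⟨a, ha⟩ | hedge := hG.support_eq_singleton_or_mem_edges hface
      (fun h ↦ hk (by simpa [h] using hdeg.symm))
    · exact Finset.mem_union_left _ (by simp [vertices, ha])
    · exact Finset.mem_union_right _ (Set.mem_toFinset.2 hedge)
  have hfiber : ∀ s ∈ Δ.faces, (hfin.toFinset.filter fun u ↦ u.support = s).card =
      {u : Fin (n + 1) →₀ ℕ | u.support = s ∧ u.degree = k}.ncard := by
    intro s hs
    rw [← Set.ncard_coe_finset]
    congr 1
    ext u
    simp only [Finset.coe_filter, Set.Finite.mem_toFinset, Set.mem_ofPred_eq, Set.mem_inter_iff,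
      SComplex.faceExponents]
    constructor
    · exact fun h ↦ ⟨h.2, h.1.2⟩
    · rintro ⟨rfl, hdeg⟩
      exact ⟨⟨hs, hdeg⟩, rfl⟩
  rw [Set.ncard_eq_toFinset_card _ hfin, Finset.card_eq_sum_card_fiberwise hsupport,
    Finset.sum_union hdisj, Finset.sum_image Finset.singleton_injective.injOn,
    Set.ncard_eq_toFinset_card']
  congr 1
  · refine (Finset.sum_congr rfl fun a _ ↦ ?_).trans (Fintype.card_eq_sum_ones.symm.trans (by simp))
    rw [hfiber _ (hG.vertex_mem a), ncard_support_eq_singleton_and_degree_eq a hk]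
  · refine Finset.sum_const_nat fun s hs ↦ ?_
    obtain ⟨hface, hcard⟩ := Set.mem_toFinset.1 hs
    obtain ⟨a, b, hab, rfl⟩ := Finset.card_eq_two.1 hcard
    rw [hfiber _ hface, ncard_support_eq_pair_and_degree_eq hab]

lemma map_homogeneousSubmodule_eq {M : Type*} [AddCommGroup M] [Module K M]
    {ψ : MvPolynomial (Fin (n + 1)) K →ₗ[K] M} {k : ℕ}
    (hψ : ∀ P, P.IsHomogeneous k → (ψ P = 0 ↔ P ∈ I)) :
    (homogeneousSubmodule (Fin (n + 1)) K k).map ψ =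
      (restrictSupport K (Δ.faceExponents ∩ {u | u.degree = k})).map ψ := by
  have hle : restrictSupport K (Δ.faceExponents ∩ {u | u.degree = k}) ≤
      homogeneousSubmodule (Fin (n + 1)) K k := by
    rw [homogeneousSubmodule_eq_finsupp_supported]
    exact restrictSupport_mono K Set.inter_subset_right
  refine le_antisymm ?_ (Submodule.map_mono hle)
  rintro _ ⟨P, hP, rfl⟩
  obtain ⟨G, hGk, hPG⟩ := hG.exists_normalForm (A := {u | u.degree = k})
    (fun u hu v hv ↦ hv.1.trans hu) (P := P) (by
      rwa [homogeneousSubmodule_eq_finsupp_supported] at hP)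
  refine ⟨G, hGk, ?_⟩
  rw [eq_comm, ← sub_eq_zero, ← map_sub, hψ _ (Submodule.sub_mem _ hP (hle hGk))]
  exact hPG

theorem finrank_map_homogeneousSubmodule {M : Type*} [AddCommGroup M] [Module K M]
    {ψ : MvPolynomial (Fin (n + 1)) K →ₗ[K] M} {k : ℕ}
    (hψ : ∀ P, P.IsHomogeneous k → (ψ P = 0 ↔ P ∈ I)) :
    Module.finrank K ((homogeneousSubmodule (Fin (n + 1)) K k).map ψ) =
      (Δ.faceExponents ∩ {u | u.degree = k}).ncard := by
  have hinj : Function.Injective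
      (ψ.domRestrict (restrictSupport K (Δ.faceExponents ∩ {u | u.degree = k}))) := by
    rw [← LinearMap.ker_eq_bot, LinearMap.ker_eq_bot']
    rintro ⟨P, hP⟩ hP0
    have hhom : P ∈ homogeneousSubmodule (Fin (n + 1)) K k := by
      rw [homogeneousSubmodule_eq_finsupp_supported]
      exact restrictSupport_mono K Set.inter_subset_right hP
    exact Subtype.ext (hG.eq_zero_of_mem P ((hψ P hhom).1 hP0)
      (restrictSupport_mono K Set.inter_subset_left hP))
  rw [hG.map_homogeneousSubmodule_eq hψ, ← LinearMap.range_domRestrict,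
    LinearMap.finrank_range_of_inj hinj, Module.finrank_eq_nat_card_basis
      (basisRestrictSupport K (Δ.faceExponents ∩ {u | u.degree = k})), Nat.card_coe_set_eq]

end IsGraphDegeneration

/-! ### The rational function attached to an edge -/

section BinaryForm

variable {K σ : Type*} [Field K]

/-- The homogenization of `p` as a form of degree `d` in the variables `X i` and `X j`, where
`X i / X j` plays the role of the variable of `p`. Coefficients of `p` above `d` are discarded. -/
noncomputable def binaryForm (i j : σ) (d : ℕ) (p : Polynomial K) : MvPolynomial σ K :=
  rename ![i, j] (p.homogenize d)

lemma isHomogeneous_binaryForm (i j : σ) (d : ℕ) (p : Polynomial K) :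
    (binaryForm i j d p).IsHomogeneous d :=
  p.isHomogeneous_homogenize.rename_isHomogeneous

lemma binaryForm_mem_restrictSupport [DecidableEq σ] (i j : σ) (d : ℕ) (p : Polynomial K) :
    binaryForm i j d p ∈ restrictSupport K {u | u.support ⊆ {i, j} ∧ u.degree = d} := by
  refine (mem_restrictSupport_iff K).2 fun u hu ↦ ⟨?_, ?_⟩
  · obtain ⟨v, rfl, -⟩ := coeff_rename_ne_zero _ _ _ (mem_support_iff.1 hu)
    refine Finsupp.mapDomain_support.trans (Finset.image_subset_iff.2 fun k _ ↦ ?_)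
    fin_cases k <;> simp
  · by_contra h
    exact mem_support_iff.1 hu ((isHomogeneous_binaryForm i j d p).coeff_eq_zero h)

lemma binaryForm_ne_zero {i j : σ} (hij : i ≠ j) {d : ℕ} {p : Polynomial K} (hp : p ≠ 0)
    (hd : p.natDegree ≤ d) : binaryForm i j d p ≠ 0 := by
  have hinj : Function.Injective ![i, j] := by
    intro a b hab
    fin_cases a <;> fin_cases b <;> simp_all
  rw [binaryForm, Ne, map_eq_zero_iff _ (rename_injective _ hinj)]
  exact fun h ↦ hp (Polynomial.eq_zero_of_homogenize_eq_zero hd h)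

lemma map_binaryForm {L : Type*} [Field L] [Algebra K L] (π : MvPolynomial σ K →ₐ[K] L) {i j : σ}
    (hj : π (X j) ≠ 0) {d : ℕ} {p : Polynomial K} (hd : p.natDegree ≤ d) :
    π (binaryForm i j d p) = π (X j) ^ d * Polynomial.aeval (π (X i) / π (X j)) p := by
  have hscale : (fun k ↦ π (X (![i, j] k))) = fun k ↦ ![π (X i) / π (X j), 1] k * π (X j) := by
    funext k
    fin_cases k
    · simp [hj]
    · simp
  rw [aeval_unique π, binaryForm, aeval_rename]
  change aeval (fun k ↦ π (X (![i, j] k))) _ = _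
  rw [hscale, aeval_mul_const_of_isHomogeneous p.isHomogeneous_homogenize,
    Polynomial.aeval_homogenize_of_eq_one hd _ rfl, mul_comm]
  simp

end BinaryForm

section Transcendental

lemma linearIndependent_pow_of_transcendental {R A : Type*} [CommRing R] [CommRing A] [Algebra R A]
    {x : A} (hx : Transcendental R x) : LinearIndependent R fun i : ℕ ↦ x ^ i := by
  have := (Polynomial.basisMonomials R).linearIndependent.map'
    (Polynomial.aeval (R := R) x).toLinearMap
    (LinearMap.ker_eq_bot.2 (transcendental_iff_injective.1 hx))
  simpa [Function.comp_def] using this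

lemma linearIndependent_pow_mul_pow {K L : Type*} [Field K] [Field L] [Algebra K L] {f h : L}
    (hf : Transcendental K f) (hh : Transcendental (Algebra.adjoin K {f}) h) :
    LinearIndependent K fun p : ℕ × ℕ ↦ f ^ p.1 * h ^ p.2 := by
  have hf' : Transcendental K (⟨f, Algebra.self_mem_adjoin_singleton K f⟩ : Algebra.adjoin K {f}) :=
    fun halg ↦ hf (halg.algHom (Algebra.adjoin K {f}).val)
  exact linearIndependent_smul (linearIndependent_pow_of_transcendental hf')
    (linearIndependent_pow_of_transcendental hh)

end Transcendental

lemma pow_mul_mem_map_homogeneousSubmodule {K σ L : Type*} [Field K] [Field L] [Algebra K L]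
    {π : MvPolynomial σ K →ₐ[K] L} {i j : σ} (hj : π (X j) ≠ 0) {a : MvPolynomial σ K} {e : ℕ}
    (ha : a.IsHomogeneous e) {r s N : ℕ} (hr : r ≤ N) (hs : s ≤ N) :
    π (X j) ^ ((e + 1) * N) * ((π (X i) / π (X j)) ^ r * (π a / π (X j) ^ e) ^ s) ∈
      (homogeneousSubmodule σ K ((e + 1) * N)).map π.toLinearMap := by
  obtain ⟨r', hr'⟩ := Nat.exists_eq_add_of_le hr
  obtain ⟨s', hs'⟩ := Nat.exists_eq_add_of_le hs
  have hsplit : (e + 1) * N = 1 * r + e * s + 1 * (r' + e * s') := by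
    calc (e + 1) * N = e * N + N := by ring
      _ = e * (s + s') + (r + r') := by rw [← hr', ← hs']
      _ = _ := by ring
  refine ⟨X i ^ r * a ^ s * X j ^ (r' + e * s'), ?_, ?_⟩
  · rw [hsplit]
    exact (((isHomogeneous_X K i).pow r).mul (ha.pow s)).mul ((isHomogeneous_X K j).pow _)
  · rw [hsplit]
    simp only [AlgHom.toLinearMap_apply, map_mul, map_pow, pow_add, pow_mul, div_pow]
    field_simp

/-- The subalgebra of all `π P / π t ^ M`, provided that `π t ≠ 0`. -/
def fractionsAway {K A L : Type*} [Field K] [CommRing A] [Algebra K A] [Field L] [Algebra K L]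
    (π : A →ₐ[K] L) (t : A) : Subalgebra K L where
  carrier := {ξ | ∃ M P, π t ^ M * ξ = π P}
  mul_mem' := by
    rintro a b ⟨M, P, hP⟩ ⟨N, Q, hQ⟩
    exact ⟨M + N, P * Q, by rw [map_mul, ← hP, ← hQ]; ring⟩
  add_mem' := by
    rintro a b ⟨M, P, hP⟩ ⟨N, Q, hQ⟩
    exact ⟨M + N, P * t ^ N + Q * t ^ M, by simp only [map_add, map_mul, map_pow, ← hP, ← hQ]; ring⟩
  algebraMap_mem' r := ⟨0, algebraMap K A r, by simp⟩

lemma exists_mul_eq_aeval_of_isAlgebraic {K L : Type*} [Field K] [Field L] [Algebra K L] {f h : L}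
    (hh : IsAlgebraic (Algebra.adjoin K {f}) h) (h0 : h ≠ 0) :
    ∃ y ∈ Algebra.adjoin K {f, h}, ∃ p : Polynomial K,
      Polynomial.aeval f p ≠ 0 ∧ y * h = Polynomial.aeval f p := by
  obtain ⟨q, hq0, hq⟩ :=
    hh.exists_nonzero_coeff_and_aeval_eq_zero (mem_nonZeroDivisors_of_ne_zero h0)
  obtain ⟨p, hp⟩ := (Algebra.adjoin_singleton_eq_range_aeval K f).le (q.coeff 0).2
  replace hp : Polynomial.aeval f p = q.coeff 0 := hp
  have hle : Algebra.adjoin K {f} ≤ Algebra.adjoin K {f, h} := Algebra.adjoin_mono (by simp)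
  refine ⟨-Polynomial.aeval h q.divX, neg_mem ?_, p, ?_, ?_⟩
  · rw [Polynomial.aeval_eq_sum_range]
    exact sum_mem fun i _ ↦ mul_mem (hle (q.divX.coeff i).2)
      (pow_mem (Algebra.subset_adjoin (by simp)) i)
  · rw [hp]
    exact fun h ↦ hq0 (Subtype.ext h)
  · rw [← q.divX_mul_X_add, map_add, map_mul, Polynomial.aeval_X, Polynomial.aeval_C] at hq
    rw [hp, neg_mul]
    exact neg_eq_of_add_eq_zero_right hq

namespace IsGraphDegeneration

variable {K : Type*} [Field K] {n : ℕ} {L : Type*} [Field L] [Algebra K L]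
  {π : MvPolynomial (Fin (n + 1)) K →ₐ[K] L} {Δ : SComplex n} {w : Fin (n + 1) → ℕ}
  (hG : IsGraphDegeneration (RingHom.ker π) Δ w)
include hG

lemma map_X_ne_zero (i : Fin (n + 1)) : π (X i) ≠ 0 := fun h ↦
  X_ne_zero i (hG.eq_zero_of_mem _ h (monomial_mem_restrictSupport_of_mem
    (Δ.down_closed (hG.vertex_mem i) Finsupp.support_single_subset) 1))

variable {i j : Fin (n + 1)} (hij : i ≠ j) (he : {i, j} ∈ Δ.faces)
include hij he

lemma transcendental_div : Transcendental K (π (X i) / π (X j)) := by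
  rw [transcendental_iff]
  intro p hp
  by_contra hp0
  have hker : binaryForm i j p.natDegree p ∈ RingHom.ker π := by
    rw [RingHom.mem_ker, map_binaryForm π (hG.map_X_ne_zero j) le_rfl, hp, mul_zero]
  exact binaryForm_ne_zero hij hp0 le_rfl (hG.eq_zero_of_mem _ hker
    (restrictSupport_mono K (fun u hu ↦ Δ.down_closed he hu.1)
      (binaryForm_mem_restrictSupport i j _ p)))

-- Otherwise the Hilbert function, which is bounded by a linear function, would grow quadratically.
theorem isAlgebraic_div {a : MvPolynomial (Fin (n + 1)) K} {e : ℕ} (ha : a.IsHomogeneous e) :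
    IsAlgebraic (Algebra.adjoin K {π (X i) / π (X j)}) (π a / π (X j) ^ e) := by
  have hj := hG.map_X_ne_zero j
  by_contra htrans
  have hgrowth (N : ℕ) (hN : N ≠ 0) :
      (N + 1) * (N + 1) ≤ n + 1 + Δ.edges.ncard * ((e + 1) * N - 1) := by
    have hfinrank := hG.finrank_map_homogeneousSubmodule (ψ := π.toLinearMap)
      (k := (e + 1) * N) fun P _ ↦ Iff.rfl
    rw [hG.ncard_faceExponents (by positivity)] at hfinrank
    have : Module.Finite K ((homogeneousSubmodule _ K ((e + 1) * N)).map π.toLinearMap) :=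
      Module.finite_of_finrank_pos (by omega)
    have hindep := ((linearIndependent_pow_mul_pow (hG.transcendental_div hij he) htrans).map'
      (LinearMap.mulLeft K (π (X j) ^ ((e + 1) * N)))
      (LinearMap.ker_eq_bot.2 (mul_right_injective₀ (pow_ne_zero _ hj)))).comp
      (fun p : Fin (N + 1) × Fin (N + 1) ↦ ((p.1 : ℕ), (p.2 : ℕ)))
      fun p q hpq ↦ Prod.ext (Fin.ext (Prod.ext_iff.1 hpq).1) (Fin.ext (Prod.ext_iff.1 hpq).2)
    have hindep' : LinearIndependent K fun p : Fin (N + 1) × Fin (N + 1) ↦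
        (⟨_, pow_mul_mem_map_homogeneousSubmodule hj ha (Fin.is_le p.1) (Fin.is_le p.2)⟩ :
          (homogeneousSubmodule _ K ((e + 1) * N)).map π.toLinearMap) :=
      LinearIndependent.of_comp (Submodule.subtype _) hindep
    simpa [hfinrank] using hindep'.fintype_card_le_finrank
  have hlinear := (hgrowth (n + 1 + Δ.edges.ncard * (e + 1)) (by omega)).trans
    (Nat.add_le_add_left (Nat.mul_le_mul_left _ (Nat.sub_le _ 1)) _)
  rw [← Nat.mul_assoc] at hlinear
  generalize Δ.edges.ncard * (e + 1) = A at hlinear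
  nlinarith

theorem exists_mul_sub_binaryForm_mem {a : MvPolynomial (Fin (n + 1)) K} {e : ℕ}
    (ha : a.IsHomogeneous e) (ha0 : π a ≠ 0) : ∃ g, ∃ p : Polynomial K, ∃ M, p ≠ 0 ∧
      p.natDegree ≤ M ∧ a * g - binaryForm i j M p ∈ RingHom.ker π := by
  have hj := hG.map_X_ne_zero j
  obtain ⟨y, hy, p, hp0, hyp⟩ := exists_mul_eq_aeval_of_isAlgebraic
    (hG.isAlgebraic_div hij he ha) (div_ne_zero ha0 (pow_ne_zero e hj))
  have hle : Algebra.adjoin K {π (X i) / π (X j), π a / π (X j) ^ e} ≤ fractionsAway π (X j) := by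
    rw [Algebra.adjoin_le_iff, Set.insert_subset_iff, Set.singleton_subset_iff]
    exact ⟨⟨1, X i, by field_simp⟩, ⟨e, a, by field_simp⟩⟩
  obtain ⟨M, P, hP⟩ := hle hy
  refine ⟨P * X j ^ p.natDegree, p, M + e + p.natDegree, ?_, by omega, ?_⟩
  · rintro rfl
    simp at hp0
  · rw [RingHom.mem_ker, map_sub, map_binaryForm π hj (by omega), ← hyp]
    simp only [map_mul, map_pow, ← hP, pow_add]
    field_simp
    ring

end IsGraphDegeneration

/-! ### Leading terms along an edge through the last vertex -/

section WeightBound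

variable {K σ : Type*} [Field K]

lemma exists_mem_restrictSupport_weight_le (w : σ → ℕ) (P : MvPolynomial σ K) :
    ∃ θ, P ∈ restrictSupport K {u | Finsupp.weight w u ≤ θ} :=
  ⟨P.support.sup (Finsupp.weight w),
    (mem_restrictSupport_iff K).2 fun _ hu ↦ Finset.le_sup (f := Finsupp.weight w) hu⟩

lemma mem_restrictSupport_degree_eq_iff {P : MvPolynomial σ K} {k : ℕ} :
    P ∈ restrictSupport K {u | u.degree = k} ↔ P.IsHomogeneous k := by
  rw [← mem_homogeneousSubmodule, homogeneousSubmodule_eq_finsupp_supported]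
  rfl

lemma mem_restrictSupport_inter_iff {A B : Set (σ →₀ ℕ)} {P : MvPolynomial σ K} :
    P ∈ restrictSupport K (A ∩ B) ↔ P ∈ restrictSupport K A ∧ P ∈ restrictSupport K B := by
  simp only [mem_restrictSupport_iff, Set.subset_inter_iff]

lemma sub_monomial_coeff_mem_restrictSupport {A : Set (σ →₀ ℕ)} {P : MvPolynomial σ K}
    (hP : P ∈ restrictSupport K A) (u : σ →₀ ℕ) :
    P - monomial u (coeff u P) ∈ restrictSupport K (A \ {u}) := by
  classical
  rw [mem_restrictSupport_iff] at hP ⊢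
  intro v hv
  rw [Finset.mem_coe, mem_support_iff, coeff_sub, coeff_monomial] at hv
  have hne : u ≠ v := by
    rintro rfl
    simp at hv
  rw [if_neg hne, sub_zero] at hv
  exact ⟨hP (mem_support_iff.2 hv), hne.symm⟩

lemma X_mul_X_pow_eq_monomial (i j : σ) (N : ℕ) :
    (X i * X j : MvPolynomial σ K) ^ N =
      monomial (N • (Finsupp.single i 1 + Finsupp.single j 1)) 1 := by
  rw [X, X, monomial_mul, monomial_pow]
  simp

end WeightBound

/-- `P` has degree `D` and is congruent modulo `I` to a nonzero multiple of a monomial in `X l` and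
`X (Fin.last n)` plus terms of the same degree and smaller weight. -/
def HasEdgeLeadingTerm {K : Type*} [Field K] {n : ℕ} (I : Ideal (MvPolynomial (Fin (n + 1)) K))
    (w : Fin (n + 1) → ℕ) (l : Fin (n + 1)) (D : ℕ) (P : MvPolynomial (Fin (n + 1)) K) : Prop :=
  ∃ u : Fin (n + 1) →₀ ℕ, u.support ⊆ {l, Fin.last n} ∧ u.degree = D ∧ ∃ κ : K, κ ≠ 0 ∧
    ∃ H ∈ restrictSupport K (lowerExponents w u), P - (monomial u κ + H) ∈ I

namespace IsGraphDegeneration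

variable {K : Type*} [Field K] {n : ℕ} {I : Ideal (MvPolynomial (Fin (n + 1)) K)}
  {Δ : SComplex n} {w : Fin (n + 1) → ℕ} (hG : IsGraphDegeneration I Δ w)
  {l : Fin (n + 1)} (hl : l < Fin.last n)
include hG hl

omit hl in
lemma weight_edge :
    Finsupp.weight w (Finsupp.single l 1 + Finsupp.single (Fin.last n) 1) = w l := by
  simp [Finsupp.weight_single, hG.weight_last]

lemma eq_of_support_subset_edge {u v : Fin (n + 1) →₀ ℕ} (hu : u.support ⊆ {l, Fin.last n})
    (hv : v.support ⊆ {l, Fin.last n}) (hdeg : u.degree = v.degree)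
    (hweight : Finsupp.weight w u = Finsupp.weight w v) : u = v := by
  rw [eq_single_add_single_of_support_subset hl.ne hu,
    eq_single_add_single_of_support_subset hl.ne hv] at hdeg hweight ⊢
  simp only [map_add, Finsupp.degree_single, Finsupp.weight_single, hG.weight_last, smul_eq_mul,
    mul_zero, add_zero] at hdeg hweight
  have hcoord := Nat.eq_of_mul_eq_mul_right (hG.weight_pos hl) hweight
  rw [hcoord, show u (Fin.last n) = v (Fin.last n) by omega]

lemma support_subset_edge_of_add_mem_faceExponents {u : Fin (n + 1) →₀ ℕ}
    (hu : u + (Finsupp.single l 1 + Finsupp.single (Fin.last n) 1) ∈ Δ.faceExponents) :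
    u.support ⊆ {l, Fin.last n} := by
  have hedge : {l, Fin.last n} ⊆
      (u + (Finsupp.single l 1 + Finsupp.single (Fin.last n) 1)).support := by
    rw [← Finsupp.support_single_add_single hl.ne (one_ne_zero (α := ℕ)) (one_ne_zero (α := ℕ))]
    exact Finsupp.support_mono le_add_self
  rw [Finset.eq_of_subset_of_card_le hedge
    ((hG.card_le_two _ hu).trans_eq (Finset.card_pair hl.ne).symm)]
  exact Finsupp.support_mono le_self_add

-- Multiplying by `X l * X (Fin.last n)` raises the weight by less than `w l`, unless the top
-- weight is attained at a monomial in `X l` and `X (Fin.last n)` alone.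
lemma exists_mul_edge_sub_mem {D θ : ℕ} {P : MvPolynomial (Fin (n + 1)) K}
    (hP : P ∈ restrictSupport K {u | u.degree = D ∧ Finsupp.weight w u ≤ θ ∧
      ¬(u.support ⊆ {l, Fin.last n} ∧ Finsupp.weight w u = θ)}) :
    ∃ H ∈ restrictSupport K (Δ.faceExponents ∩
      {u | u.degree = D + 2 ∧ Finsupp.weight w u < θ + w l}),
      P * (X l * X (Fin.last n)) - H ∈ I := by
  refine exists_sub_mem_of_mem_sup ?_
  have hmul := mul_mem_restrictSupport_add hP (monomial_mem_restrictSupport_of_mem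
    (Set.mem_singleton (Finsupp.single l 1 + Finsupp.single (Fin.last n) 1)) (1 : K))
  rw [← one_smul ℕ (Finsupp.single l 1 + _), ← X_mul_X_pow_eq_monomial, pow_one] at hmul
  refine restrictSupport_le_of_forall_monomial_mem ?_ hmul
  rintro _ ⟨u, ⟨hdeg, hle, hpure⟩, _, rfl, rfl⟩
  rw [one_smul]
  beta_reduce
  set v := u + (Finsupp.single l 1 + Finsupp.single (Fin.last n) 1) with hv
  have hvdeg : v.degree = D + 2 := by simp [hv, hdeg]
  have hvweight : Finsupp.weight w v = Finsupp.weight w u + w l := by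
    rw [hv, map_add, hG.weight_edge]
  by_cases hface : v ∈ Δ.faceExponents
  · have hne : Finsupp.weight w u ≠ θ := fun h ↦
      hpure ⟨hG.support_subset_edge_of_add_mem_faceExponents hl hface, h⟩
    refine Submodule.mem_sup_left (monomial_mem_restrictSupport_of_mem ?_ 1)
    exact ⟨hface, hvdeg, by omega⟩
  · refine sup_le_sup_right (restrictSupport_mono K (Set.inter_subset_inter_right _ ?_)) _
      (hG.monomial_mem_sup v hface)
    exact fun v' hv' ↦ ⟨hv'.1.trans hvdeg, hv'.2.trans_le (by omega)⟩

lemma exists_mul_edge_sub_mem_or_hasEdgeLeadingTerm {D θ : ℕ}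
    {P : MvPolynomial (Fin (n + 1)) K}
    (hP : P ∈ restrictSupport K {u | u.degree = D ∧ Finsupp.weight w u ≤ θ}) :
    (∃ H ∈ restrictSupport K (Δ.faceExponents ∩
      {u | u.degree = D + 2 ∧ Finsupp.weight w u < θ + w l}),
      P * (X l * X (Fin.last n)) - H ∈ I) ∨
    HasEdgeLeadingTerm I w l (D + 2) (P * (X l * X (Fin.last n))) := by
  by_cases htop : ∃ u ∈ P.support, u.support ⊆ {l, Fin.last n} ∧ Finsupp.weight w u = θ
  · obtain ⟨u, huP, hu, rfl⟩ := htop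
    have hudeg : u.degree = D := ((mem_restrictSupport_iff K).1 hP huP).1
    have hrest := sub_monomial_coeff_mem_restrictSupport hP u
    have hlow : {v | v.degree = D ∧ Finsupp.weight w v ≤ Finsupp.weight w u} \ {u} ⊆
        {v | v.degree = D ∧ Finsupp.weight w v ≤ Finsupp.weight w u ∧
          ¬(v.support ⊆ {l, Fin.last n} ∧ Finsupp.weight w v = Finsupp.weight w u)} :=
      fun v ⟨hv, hvu⟩ ↦ ⟨hv.1, hv.2, fun h ↦ hvu
        (hG.eq_of_support_subset_edge hl h.1 hu (hv.1.trans hudeg.symm) h.2)⟩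
    obtain ⟨H, hH, hHI⟩ := hG.exists_mul_edge_sub_mem hl (restrictSupport_mono K hlow hrest)
    refine .inr ⟨u + (Finsupp.single l 1 + Finsupp.single (Fin.last n) 1), ?_, by simp [hudeg],
      coeff u P, mem_support_iff.1 huP, H, ?_, ?_⟩
    · refine Finsupp.support_add.trans (Finset.union_subset hu ?_)
      rw [Finsupp.support_single_add_single hl.ne (one_ne_zero (α := ℕ)) (one_ne_zero (α := ℕ))]
    · refine restrictSupport_mono K ?_ hH
      rintro v hv
      constructor
      · simp [hudeg, hv.2.1]
      · rw [map_add, hG.weight_edge]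
        exact hv.2.2
    · rw [sub_mul, ← pow_one (X l * X (Fin.last n)), X_mul_X_pow_eq_monomial, one_smul,
        monomial_mul, mul_one] at hHI
      rwa [← pow_one (X l * X (Fin.last n)), X_mul_X_pow_eq_monomial, one_smul, ← sub_sub]
  · refine .inl (hG.exists_mul_edge_sub_mem hl ((mem_restrictSupport_iff K).2 fun u hu ↦ ?_))
    have hu' := (mem_restrictSupport_iff K).1 hP hu
    exact ⟨hu'.1, hu'.2, fun h ↦ htop ⟨u, hu, h⟩⟩

lemma exists_mul_edge_pow_sub_mem {k θ : ℕ} {a : MvPolynomial (Fin (n + 1)) K}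
    (ha : a ∈ restrictSupport K {u | u.degree = k ∧ Finsupp.weight w u ≤ θ})
    (hlead : ∀ N, ¬HasEdgeLeadingTerm I w l (k + 2 * N) (a * (X l * X (Fin.last n)) ^ N))
    (N : ℕ) :
    ∃ G ∈ restrictSupport K (Δ.faceExponents ∩
      {u | u.degree = k + 2 * N ∧ Finsupp.weight w u ≤ θ + N * (w l - 1)}),
      a * (X l * X (Fin.last n)) ^ N - G ∈ I := by
  induction N with
  | zero =>
    simpa using hG.exists_normalForm (A := {u | u.degree = k ∧ Finsupp.weight w u ≤ θ})
      (fun u hu v hv ↦ ⟨hv.1.trans hu.1, hv.2.le.trans hu.2⟩) ha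
  | succ N ih =>
    obtain ⟨G, hGmem, hGI⟩ := ih
    have hpow {H : MvPolynomial (Fin (n + 1)) K} (hH : G * (X l * X (Fin.last n)) - H ∈ I) :
        a * (X l * X (Fin.last n)) ^ (N + 1) - H ∈ I := by
      convert I.add_mem (I.mul_mem_right (X l * X (Fin.last n)) hGI) hH using 1
      ring
    rcases hG.exists_mul_edge_sub_mem_or_hasEdgeLeadingTerm hl
      (restrictSupport_mono K Set.inter_subset_right hGmem) with ⟨H, hH, hHI⟩ | hterm
    · refine ⟨H, restrictSupport_mono K (Set.inter_subset_inter_right _ ?_) hH, hpow hHI⟩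
      rintro u ⟨hdeg, hweight⟩
      refine ⟨hdeg, ?_⟩
      have := hG.weight_pos hl
      rw [Nat.succ_mul]
      omega
    · obtain ⟨u, hu, hdeg, κ, hκ, H, hH, hHI⟩ := hterm
      exact (hlead (N + 1) ⟨u, hu, hdeg, κ, hκ, H, hH, hpow hHI⟩).elim

lemma le_weight_of_mul_sub_binaryForm_mem (he : {l, Fin.last n} ∈ Δ.faces)
    {a g G : MvPolynomial (Fin (n + 1)) K} {p : Polynomial K} {M N W θ : ℕ} (hp : p ≠ 0)
    (hM : p.natDegree ≤ M) (hg : a * g - binaryForm l (Fin.last n) M p ∈ I)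
    (hG' : a * (X l * X (Fin.last n)) ^ N - G ∈ I)
    (hW : g ∈ restrictSupport K {u | Finsupp.weight w u ≤ W})
    (hθ : G ∈ restrictSupport K {u | Finsupp.weight w u ≤ θ}) : N * w l ≤ W + θ := by
  set y : MvPolynomial (Fin (n + 1)) K := X l * X (Fin.last n)
  set b := binaryForm l (Fin.last n) M p
  have hprod : g * G ∈ restrictSupport K {u | Finsupp.weight w u ≤ W + θ} := by
    refine restrictSupport_mono K ?_ (mul_mem_restrictSupport_add hW hθ)
    rintro _ ⟨u, hu, v, hv, rfl⟩
    exact (map_add (Finsupp.weight w) u v).trans_le (Nat.add_le_add hu hv)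
  obtain ⟨F, hF, hFI⟩ := hG.exists_normalForm (fun u hu v hv ↦ hv.2.le.trans hu) hprod
  have hby : b * y ^ N ∈ restrictSupport K (Δ.faceExponents ∩
      {u | N * w l ≤ Finsupp.weight w u}) := by
    rw [X_mul_X_pow_eq_monomial]
    refine restrictSupport_mono K ?_ (mul_mem_restrictSupport_add
      (binaryForm_mem_restrictSupport _ _ _ _) (monomial_mem_restrictSupport_of_mem rfl 1))
    rintro _ ⟨u, hu, _, rfl, rfl⟩
    refine ⟨Δ.down_closed he (Finsupp.support_add.trans (Finset.union_subset hu.1 ?_)), ?_⟩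
    · refine Finsupp.support_smul.trans ?_
      rw [Finsupp.support_single_add_single hl.ne (one_ne_zero (α := ℕ)) (one_ne_zero (α := ℕ))]
    · simp only [Set.mem_ofPred_eq, map_add, map_nsmul, hG.weight_edge, smul_eq_mul]
      exact Nat.le_add_left _ _
  have hbF : b * y ^ N = F := by
    refine sub_eq_zero.1 (hG.eq_zero_of_mem _ ?_ (Submodule.sub_mem _
      (restrictSupport_mono K Set.inter_subset_left hby)
      (restrictSupport_mono K Set.inter_subset_left hF)))
    convert I.sub_mem (I.add_mem (I.mul_mem_left g hG') hFI) (I.mul_mem_right (y ^ N) hg) using 1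
    ring
  obtain ⟨u, hu⟩ := support_nonempty.2 (mul_ne_zero (binaryForm_ne_zero hl.ne hp hM)
    (pow_ne_zero N (mul_ne_zero (X_ne_zero l) (X_ne_zero (Fin.last n)))))
  exact (((mem_restrictSupport_iff K).1 hby hu).2).trans
    ((mem_restrictSupport_iff K).1 hF (hbF ▸ hu)).2

end IsGraphDegeneration

lemma IsGraphDegeneration.exists_hasEdgeLeadingTerm {K L : Type*} [Field K] [Field L]
    [Algebra K L] {n : ℕ} {π : MvPolynomial (Fin (n + 1)) K →ₐ[K] L} {Δ : SComplex n}
    {w : Fin (n + 1) → ℕ} (hG : IsGraphDegeneration (RingHom.ker π) Δ w) {l : Fin (n + 1)}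
    (hl : l < Fin.last n) (he : {l, Fin.last n} ∈ Δ.faces) {k : ℕ}
    {a : MvPolynomial (Fin (n + 1)) K} (ha : a.IsHomogeneous k) (ha0 : π a ≠ 0) :
    ∃ N, HasEdgeLeadingTerm (RingHom.ker π) w l (k + 2 * N) (a * (X l * X (Fin.last n)) ^ N) := by
  by_contra! hlead
  obtain ⟨θ, hθ⟩ := exists_mem_restrictSupport_weight_le w a
  obtain ⟨g, p, M, hp, hM, hg⟩ := hG.exists_mul_sub_binaryForm_mem hl.ne he ha ha0
  obtain ⟨W, hW⟩ := exists_mem_restrictSupport_weight_le w g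
  have ha' : a ∈ restrictSupport K {u | u.degree = k ∧ Finsupp.weight w u ≤ θ} :=
    mem_restrictSupport_inter_iff.2 ⟨mem_restrictSupport_degree_eq_iff.2 ha, hθ⟩
  obtain ⟨G, hGmem, hGI⟩ := hG.exists_mul_edge_pow_sub_mem hl ha' hlead (W + θ + 1)
  have hle := hG.le_weight_of_mul_sub_binaryForm_mem hl he hp hM hg hGI hW
    (restrictSupport_mono K (fun u hu ↦ hu.2.2) hGmem)
  obtain ⟨c, hc⟩ := Nat.exists_eq_add_one_of_ne_zero (hG.weight_pos hl).ne'
  rw [hc, Nat.add_sub_cancel, Nat.mul_succ] at hle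
  omega

/-! ### Valuations and leading terms at poles -/

section Valuation

variable {Γ : Type*} [LinearOrderedCommGroupWithZero Γ]

-- Maximizes the slope `log (φ i) / c i`.
lemma exists_forall_pow_le_pow {ι : Type*} (φ : ι → Γ) (c : ι → ℕ) {s : Finset ι}
    (hs : s.Nonempty) (hc : ∀ i ∈ s, c i ≠ 0) : ∃ l ∈ s, ∀ m ∈ s, φ m ^ c l ≤ φ l ^ c m := by
  induction hs using Finset.Nonempty.cons_induction with
  | singleton a => simp
  | cons a s ha _ ih =>
    obtain ⟨l, hl, hmax⟩ := ih fun i hi ↦ hc i (Finset.mem_cons_of_mem hi)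
    simp only [Finset.mem_cons, exists_eq_or_imp, forall_eq_or_imp, le_refl, true_and]
    rcases le_total (φ a ^ c l) (φ l ^ c a) with hal | hla
    · exact .inr ⟨l, hl, hal, hmax⟩
    · refine .inl fun m hm ↦ ?_
      rw [← pow_le_pow_iff_left₀ zero_le zero_le (hc l (Finset.mem_cons_of_mem hl))]
      calc (φ m ^ c a) ^ c l = (φ m ^ c l) ^ c a := pow_right_comm ..
        _ ≤ (φ l ^ c m) ^ c a := pow_le_pow_left₀ zero_le (hmax m hm) _
        _ = (φ l ^ c a) ^ c m := pow_right_comm ..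
        _ ≤ (φ a ^ c l) ^ c m := pow_le_pow_left₀ zero_le hla _
        _ = (φ a ^ c m) ^ c l := pow_right_comm ..

variable {K L : Type*} [Field K] [Field L] [Algebra K L] {v : Valuation L Γ}
  (hv : ∀ c : K, v (algebraMap K L c) ≤ 1)
include hv

lemma valuation_aeval_pow_lt {σ : Type*} {y : σ → L} {g : σ → Γ} {β : ℕ} (hβ : β ≠ 0)
    (hg : ∀ i, v (y i) ^ β ≤ g i) {B : Γ} (hB : B ≠ 0) {P : MvPolynomial σ K}
    (hP : P ∈ restrictSupport K {u | u.prod (fun i k ↦ g i ^ k) < B}) :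
    v (aeval y P) ^ β < B := by
  rw [mem_restrictSupport_iff] at hP
  rcases P.support.eq_empty_or_nonempty with hempty | hne
  · rw [support_eq_empty.1 hempty, map_zero, map_zero, zero_pow hβ]
    exact zero_lt_iff.2 hB
  · obtain ⟨u, hu, hmax⟩ := Finset.exists_max_image P.support
      (fun u ↦ v (algebraMap K L (coeff u P) * u.prod fun i k ↦ y i ^ k)) hne
    calc v (aeval y P) ^ β ≤ v (algebraMap K L (coeff u P) * u.prod fun i k ↦ y i ^ k) ^ β :=
          pow_le_pow_left₀ zero_le (v.map_sum_le hmax) β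
      _ ≤ (u.prod fun i k ↦ v (y i) ^ k) ^ β := by
          rw [map_mul, Finsupp.prod, map_prod]
          simp only [map_pow]
          exact pow_le_pow_left₀ zero_le (mul_le_of_le_one_left' (hv _)) β
      _ ≤ u.prod fun i k ↦ g i ^ k := by
          rw [Finsupp.prod, ← Finset.prod_pow]
          refine Finset.prod_le_prod' fun i _ ↦ ?_
          rw [pow_right_comm]
          exact pow_le_pow_left₀ zero_le (hg i) _
      _ < B := hP hu

lemma valuation_eq_of_sub_algebraMap_mul_lt {κ : K} (hκ : κ ≠ 0) {g f : L}
    (h : v (g - algebraMap K L κ * f) < v f) : v g = v f := by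
  have hκ1 : v (algebraMap K L κ) = 1 := by
    refine le_antisymm (hv κ) ?_
    have hinv := hv κ⁻¹
    rw [map_inv₀, map_inv₀] at hinv
    exact (inv_le_one₀ (zero_lt_iff.2 (by simpa using hκ))).1 hinv
  have hκf : v (algebraMap K L κ * f) = v f := by rw [map_mul, hκ1, one_mul]
  exact (v.map_eq_of_sub_lt (hκf ▸ h)).trans hκf

end Valuation

section ValuationSubring

variable {A L : Type*} [CommRing A] [Field L] [Algebra A L] {ξ : L}

lemma mem_valuationSubring_of_isIntegral (hξ : IsIntegral A ξ) {O : ValuationSubring L}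
    (hO : ∀ a, algebraMap A L a ∈ O) : ξ ∈ O := by
  obtain ⟨p, hp, hp0⟩ := hξ
  have hint : IsIntegral O ξ :=
    ⟨p.map ((algebraMap A L).codRestrict O.toSubring hO), hp.map _, by
      rw [Polynomial.eval₂_map]
      exact hp0⟩
  obtain ⟨y, rfl⟩ := IsIntegrallyClosed.isIntegral_iff.1 hint
  exact y.2

lemma isIntegral_of_forall_mem_valuationSubring
    (h : ∀ O : ValuationSubring L, (∀ a, algebraMap A L a ∈ O) → ξ ∈ O) : IsIntegral A ξ := by
  have hmem : ξ ∈ ⨅ V : {V : ValuationSubring L // Set.range (algebraMap A L) ⊆ V.toSubring},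
      V.1.toSubring :=
    Subring.mem_iInf.2 fun V ↦ h V.1 fun a ↦ V.2 ⟨a, rfl⟩
  rw [iInf_valuationSubring_superset, ← RingHom.coe_range, Subring.closure_eq] at hmem
  obtain ⟨p, hp, hp0⟩ := hmem
  obtain ⟨q, rfl, -, hq⟩ := Polynomial.lifts_and_degree_eq_and_monic
    ((Polynomial.lifts_iff_coeff_lifts (f := (algebraMap A L).rangeRestrict) p).2 fun k ↦
      (algebraMap A L).rangeRestrict_surjective _) hp
  exact ⟨q, hq, by rwa [Polynomial.eval₂_map] at hp0⟩

end ValuationSubring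

section Pole

variable {K L : Type*} [Field K] [Field L] [Algebra K L]

variable (K) in
/-- The valuation ring `O` of `L / K` is a pole of `f`. -/
def IsPole (f : L) (O : ValuationSubring L) : Prop :=
  (∀ c : K, algebraMap K L c ∈ O) ∧ f ∉ O

variable (K) in
/-- There are a nonzero constant `κ` and an integer `m` such that `κ * f ^ m` is the leading term
of `ξ` at every pole of `f`. -/
def HasPolarLeadingTerm (f ξ : L) : Prop :=
  ∃ κ : K, κ ≠ 0 ∧ ∃ m : ℤ, ∀ O : ValuationSubring L, IsPole K f O →
    O.valuation (ξ - algebraMap K L κ * f ^ m) < O.valuation (f ^ m)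

variable {f ξ : L} {O : ValuationSubring L}

lemma IsPole.one_lt_valuation (hO : IsPole K f O) : 1 < O.valuation f := by
  rw [← not_le, O.valuation_le_one_iff]
  exact hO.2

lemma IsPole.valuation_algebraMap_le_one (hO : IsPole K f O) (c : K) :
    O.valuation (algebraMap K L c) ≤ 1 :=
  (O.valuation_le_one_iff _).2 (hO.1 c)

lemma IsPole.valuation_zpow_lt_zpow_iff (hO : IsPole K f O) {r s : ℤ} :
    O.valuation (f ^ r) < O.valuation (f ^ s) ↔ r < s := by
  rw [map_zpow₀, map_zpow₀, zpow_lt_zpow_iff_right₀ hO.one_lt_valuation]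

variable [IsAlgClosed K]

lemma mem_adjoin_of_isIntegral_of_forall_isPole_mem
    (hint : IsIntegral (Algebra.adjoin K {f}) ξ) (h : ∀ O, IsPole K f O → ξ ∈ O) :
    ξ ∈ Algebra.adjoin K {f} := by
  have hintK : IsIntegral K ξ := by
    refine isIntegral_of_forall_mem_valuationSubring fun O hO ↦ ?_
    by_cases hf : f ∈ O
    · refine mem_valuationSubring_of_isIntegral hint fun a ↦ ?_
      exact Algebra.adjoin_induction (p := fun x _ ↦ x ∈ O)
        (fun x hx ↦ by rwa [Set.mem_singleton_iff.1 hx]) hO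
        (fun x y _ _ ↦ O.add_mem x y) (fun x y _ _ ↦ O.mul_mem x y) a.2
    · exact h O ⟨hO, hf⟩
  obtain ⟨c, rfl⟩ := hintK.mem_range_algebraMap_of_minpoly_splits (K := K) (IsAlgClosed.splits _)
  exact Subalgebra.algebraMap_mem _ c

variable {A : Subalgebra K L} (hf : f ∈ A)
  (hA : ∀ η ∈ A, η ≠ 0 → HasPolarLeadingTerm K f η)
include hf hA

lemma mem_adjoin_of_isIntegral_of_valuation_lt {j : ℕ} (hξA : ξ ∈ A)
    (hint : IsIntegral (Algebra.adjoin K {f}) ξ)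
    (hlt : ∀ O, IsPole K f O → O.valuation ξ < O.valuation (f ^ j)) :
    ξ ∈ Algebra.adjoin K {f} := by
  induction j generalizing ξ with
  | zero =>
    refine mem_adjoin_of_isIntegral_of_forall_isPole_mem hint fun O hO ↦ ?_
    exact (O.valuation_le_one_iff ξ).1 (by simpa using (hlt O hO).le)
  | succ j ih =>
    rcases eq_or_ne ξ 0 with rfl | hξ0
    · exact zero_mem _
    obtain ⟨κ, hκ, m, hlead⟩ := hA ξ hξA hξ0
    by_cases hmj : m = j
    · have hsub : algebraMap K L κ * f ^ j ∈ Algebra.adjoin K {f} :=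
        mul_mem (Subalgebra.algebraMap_mem _ κ) (pow_mem (Algebra.self_mem_adjoin_singleton K f) j)
      rw [← sub_add_cancel ξ (algebraMap K L κ * f ^ j)]
      refine add_mem (ih ?_ ?_ ?_) hsub
      · exact sub_mem hξA (mul_mem (A.algebraMap_mem κ) (pow_mem hf j))
      · exact hint.sub (isIntegral_algebraMap (x := (⟨_, hsub⟩ : Algebra.adjoin K {f})))
      · simpa only [hmj, zpow_natCast] using hlead
    · refine ih hξA hint fun O hO ↦ ?_
      have hval := valuation_eq_of_sub_algebraMap_mul_lt hO.valuation_algebraMap_le_one hκ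
        (hlead O hO)
      have hlt' := hlt O hO
      rw [hval, ← zpow_natCast, hO.valuation_zpow_lt_zpow_iff] at hlt' ⊢
      push_cast at hlt'
      omega

theorem mem_adjoin_of_isIntegral_of_hasPolarLeadingTerm (hξA : ξ ∈ A)
    (hint : IsIntegral (Algebra.adjoin K {f}) ξ) : ξ ∈ Algebra.adjoin K {f} := by
  rcases eq_or_ne ξ 0 with rfl | hξ0
  · exact zero_mem _
  obtain ⟨κ, hκ, m, hlead⟩ := hA ξ hξA hξ0
  refine mem_adjoin_of_isIntegral_of_valuation_lt hf hA (j := m.toNat + 1) hξA hint fun O hO ↦ ?_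
  rw [valuation_eq_of_sub_algebraMap_mul_lt hO.valuation_algebraMap_le_one hκ (hlead O hO),
    ← zpow_natCast, hO.valuation_zpow_lt_zpow_iff]
  omega

theorem exists_aeval_mul_eq_aeval_of_hasPolarLeadingTerm (hξA : ξ ∈ A)
    (halg : IsAlgebraic (Algebra.adjoin K {f}) ξ) : ∃ c p : Polynomial K, c ≠ 0 ∧
      Polynomial.aeval f c * ξ = Polynomial.aeval f p := by
  have hrange := (Algebra.adjoin_singleton_eq_range_aeval K f).le
  obtain ⟨y, hy0, hint⟩ := halg.exists_integral_multiple
  rw [Subalgebra.smul_def, smul_eq_mul] at hint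
  obtain ⟨c, hc : Polynomial.aeval f c = y⟩ := hrange y.2
  have hyA : (y : L) ∈ A := Algebra.adjoin_le (Set.singleton_subset_iff.2 hf) y.2
  obtain ⟨p, hp : Polynomial.aeval f p = y * ξ⟩ :=
    hrange (mem_adjoin_of_isIntegral_of_hasPolarLeadingTerm hf hA (mul_mem hyA hξA) hint)
  refine ⟨c, p, ?_, by rw [hc, hp]⟩
  rintro rfl
  exact hy0 (Subtype.ext (by rw [← hc, map_zero]; rfl))

end Pole

/-! ### Every vertex but the last has a larger neighbour -/

section AffineCoord

variable {K σ L : Type*} [Field K] [Field L] [Algebra K L]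

/-- The affine coordinate `X i / X j` on the chart where the `j`-th coordinate does not vanish. -/
noncomputable abbrev affineCoord (π : MvPolynomial σ K →ₐ[K] L) (j i : σ) : L :=
  π (X i) / π (X j)

lemma map_div_pow_eq_aeval_affineCoord {π : MvPolynomial σ K →ₐ[K] L} {j : σ} (hj : π (X j) ≠ 0)
    {P : MvPolynomial σ K} {k : ℕ} (hP : P.IsHomogeneous k) :
    π P / π (X j) ^ k = aeval (affineCoord π j) P := by
  rw [div_eq_iff (pow_ne_zero k hj), ← aeval_mul_const_of_isHomogeneous hP]
  conv_lhs => rw [aeval_unique π]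
  simp only [affineCoord, Function.comp_def, div_mul_cancel₀ _ hj]

end AffineCoord

section WeightFiltration

/-- The exponents whose weight falls short by at least `t` of the weight of the power of `X j` of
the same degree. -/
def weightDropExponents {σ : Type*} (w : σ → ℕ) (j : σ) (t : ℕ) : Set (σ →₀ ℕ) :=
  {u | Finsupp.weight w u + t ≤ u.degree * w j}

lemma weightDropExponents_add_subset {σ : Type*} (w : σ → ℕ) (j : σ) (s t : ℕ) :
    weightDropExponents w j s + weightDropExponents w j t ⊆ weightDropExponents w j (s + t) := by
  rintro _ ⟨u, hu, v, hv, rfl⟩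
  simp only [weightDropExponents, Set.mem_ofPred_eq, map_add, add_mul] at hu hv ⊢
  omega

variable {K L σ : Type*} [Field K] [Field L] [Algebra K L] {π : MvPolynomial σ K →ₐ[K] L}
  {w : σ → ℕ} {j : σ} {s t : ℕ}

variable (π w j t) in
/-- The span of the monomials in the affine coordinates `X i / X j` whose exponents lie in
`weightDropExponents w j t`. -/
noncomputable def weightFiltration : Submodule K L :=
  (restrictSupport K (weightDropExponents w j t)).map (aeval (affineCoord π j)).toLinearMap

lemma mul_mem_weightFiltration {ξ η : L} (hξ : ξ ∈ weightFiltration π w j s)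
    (hη : η ∈ weightFiltration π w j t) : ξ * η ∈ weightFiltration π w j (s + t) := by
  obtain ⟨P, hP, rfl⟩ := hξ
  obtain ⟨Q, hQ, rfl⟩ := hη
  exact ⟨P * Q, restrictSupport_mono K (weightDropExponents_add_subset w j s t)
    (mul_mem_restrictSupport_add hP hQ), map_mul (aeval _) P Q⟩

lemma prod_affineCoord_pow_mem_weightFiltration {u : σ →₀ ℕ}
    (hu : u ∈ weightDropExponents w j t) :
    (u.prod fun i k ↦ affineCoord π j i ^ k) ∈ weightFiltration π w j t :=
  ⟨monomial u 1, monomial_mem_restrictSupport_of_mem hu 1, by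
    rw [AlgHom.toLinearMap_apply, aeval_monomial, map_one, one_mul]⟩

lemma algebraMap_mem_weightFiltration (c : K) : algebraMap K L c ∈ weightFiltration π w j 0 :=
  ⟨C c, monomial_mem_restrictSupport_of_mem (by simp [weightDropExponents]) c, by simp⟩

lemma exists_map_eq_mul_pow_of_mem_weightFiltration (hj : π (X j) ≠ 0) {ξ : L}
    (hξ : ξ ∈ weightFiltration π w j t) :
    ∃ N, ∃ Q ∈ restrictSupport K (weightDropExponents w j t ∩ {u | u.degree = N}),
      π Q = ξ * π (X j) ^ N := by
  obtain ⟨P, hP, rfl⟩ := hξ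
  rw [SetLike.mem_coe, mem_restrictSupport_iff] at hP
  have hdeg {u : σ →₀ ℕ} (hu : u ∈ P.support) :
      (u + Finsupp.single j (P.totalDegree - u.degree)).degree = P.totalDegree := by
    rw [map_add, Finsupp.degree_single]
    exact Nat.add_sub_cancel' (le_totalDegree hu)
  set Q := ∑ u ∈ P.support,
    monomial (u + Finsupp.single j (P.totalDegree - u.degree)) (coeff u P) with hQ
  have hQmem : Q ∈ restrictSupport K
      (weightDropExponents w j t ∩ {u | u.degree = P.totalDegree}) := by
    refine sum_mem fun u hu ↦ monomial_mem_restrictSupport_of_mem (Set.mem_inter ?_ (hdeg hu)) _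
    refine weightDropExponents_add_subset w j t 0 (Set.add_mem_add (hP hu) ?_)
    simp only [weightDropExponents, Set.mem_ofPred_eq, Finsupp.weight_single, smul_eq_mul,
      Finsupp.degree_single, add_zero, le_refl]
  refine ⟨P.totalDegree, Q, hQmem, ?_⟩
  rw [← div_eq_iff (pow_ne_zero _ hj), map_div_pow_eq_aeval_affineCoord hj
    (mem_restrictSupport_degree_eq_iff.1 (restrictSupport_mono K Set.inter_subset_right hQmem)),
    hQ, map_sum, AlgHom.toLinearMap_apply]
  conv_rhs => rw [P.as_sum, map_sum]
  refine Finset.sum_congr rfl fun u _ ↦ ?_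
  rw [← mul_one (coeff u P), ← monomial_mul, map_mul, mul_one, ← X_pow_eq_monomial]
  simp [affineCoord, div_self hj]

/-- The valuation ring `O` contains the zeroth step of the weight filtration, and its maximal ideal
contains the first. -/
def DominatesWeightFiltration (π : MvPolynomial σ K →ₐ[K] L) (w : σ → ℕ) (j : σ)
    (O : ValuationSubring L) : Prop :=
  (∀ ξ ∈ weightFiltration π w j 0, O.valuation ξ ≤ 1) ∧
    ∀ ξ ∈ weightFiltration π w j 1, O.valuation ξ < 1

lemma exists_dominatesWeightFiltration (h1 : (1 : L) ∉ weightFiltration π w j 1) :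
    ∃ O, DominatesWeightFiltration π w j O := by
  have hle : weightFiltration π w j 1 ≤ weightFiltration π w j 0 :=
    Submodule.map_mono (restrictSupport_mono K fun u hu ↦ Nat.le_of_succ_le hu)
  let B : Subalgebra K L := (weightFiltration π w j 0).toSubalgebra
    (by simpa using algebraMap_mem_weightFiltration (π := π) (w := w) (j := j) 1)
    fun ξ η hξ hη ↦ by simpa using mul_mem_weightFiltration hξ hη
  let 𝔪 : Ideal B.toSubring :=
    { carrier := {ξ | (ξ : L) ∈ weightFiltration π w j 1}
      add_mem' := (weightFiltration π w j 1).add_mem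
      zero_mem' := zero_mem (weightFiltration π w j 1)
      smul_mem' := fun c ξ hξ ↦ by simpa using mul_mem_weightFiltration c.2 hξ }
  obtain ⟨O, hB, h𝔪⟩ := Ideal.image_subset_nonunits_valuationSubring 𝔪
    ((Ideal.ne_top_iff_one 𝔪).2 h1)
  exact ⟨O, fun ξ hξ ↦ (O.valuation_le_one_iff ξ).2 (hB hξ),
    fun ξ hξ ↦ O.mem_nonunits_iff.1 (h𝔪 ⟨⟨ξ, hle hξ⟩, hξ, rfl⟩)⟩

namespace DominatesWeightFiltration

variable {O : ValuationSubring L} (hO : DominatesWeightFiltration π w j O)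
include hO

lemma valuation_affineCoord_lt_one {l : σ} (hl : w l < w j) :
    O.valuation (affineCoord π j l) < 1 := by
  have hmem := prod_affineCoord_pow_mem_weightFiltration (π := π) (w := w) (j := j) (t := 1)
    (u := Finsupp.single l 1) (by simpa [weightDropExponents, Finsupp.weight_single] using hl)
  simpa using hO.2 _ hmem

-- The monomial `X l ^ (w m - w j) * X m ^ (w j - w l)` has the weight of a power of `X j`.
lemma valuation_pow_mul_pow_le_one {l m : σ} (hl : w l < w j) (hm : w j < w m) :
    O.valuation (affineCoord π j l) ^ (w m - w j) *
      O.valuation (affineCoord π j m) ^ (w j - w l) ≤ 1 := by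
  have hmem := prod_affineCoord_pow_mem_weightFiltration (π := π) (w := w) (j := j) (t := 0)
    (u := Finsupp.single l (w m - w j) + Finsupp.single m (w j - w l)) (by
      obtain ⟨a, ha⟩ := Nat.exists_eq_add_of_lt hl
      obtain ⟨b, hb⟩ := Nat.exists_eq_add_of_lt hm
      simp only [weightDropExponents, Set.mem_ofPred_eq, map_add, Finsupp.weight_single,
        Finsupp.degree_single, smul_eq_mul]
      rw [show w m - w j = b + 1 by omega, show w j - w l = a + 1 by omega, hb, ha]
      apply le_of_eq
      ring)
  rw [Finsupp.prod_add_index' (by simp) (fun i ↦ pow_add _), Finsupp.prod_single_index (by simp),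
    Finsupp.prod_single_index (by simp)] at hmem
  simpa using hO.1 _ hmem

end DominatesWeightFiltration

end WeightFiltration

lemma prod_zpow_pow_eq_zpow_weight {σ G : Type*} [CommGroupWithZero G] {q : G} (hq : q ≠ 0)
    (c : σ → ℤ) (u : σ →₀ ℕ) :
    (u.prod fun i k ↦ (q ^ c i) ^ k) = q ^ Finsupp.weight c u := by
  induction u using Finsupp.induction_linear with
  | zero => simp
  | add u v hu hv =>
    rw [Finsupp.prod_add_index' (by simp) fun i ↦ pow_add _, hu, hv, map_add, zpow_add₀ hq]
  | single i k =>
    rw [Finsupp.prod_single_index (by simp), Finsupp.weight_single, ← zpow_natCast, ← zpow_mul,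
      nsmul_eq_mul, mul_comm]

lemma weight_natCast_sub {σ : Type*} (w : σ → ℕ) (a : ℕ) (u : σ →₀ ℕ) :
    Finsupp.weight (fun i ↦ (a : ℤ) - w i) u = u.degree * a - Finsupp.weight w u := by
  induction u using Finsupp.induction_linear with
  | zero => simp
  | add u v hu hv =>
    rw [map_add, hu, hv, map_add, map_add]
    push_cast
    ring
  | single i k => simp [Finsupp.weight_single, mul_sub]

namespace IsGraphDegeneration

variable {K L : Type*} [Field K] [Field L] [Algebra K L] {n : ℕ}
  {π : MvPolynomial (Fin (n + 1)) K →ₐ[K] L} {Δ : SComplex n} {w : Fin (n + 1) → ℕ}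
  (hG : IsGraphDegeneration (RingHom.ker π) Δ w) {j : Fin (n + 1)}
include hG

lemma one_notMem_weightFiltration : (1 : L) ∉ weightFiltration π w j 1 := by
  intro hone
  obtain ⟨N, Q, hQ, hπQ⟩ :=
    exists_map_eq_mul_pow_of_mem_weightFiltration (hG.map_X_ne_zero j) hone
  have hlower : ∀ u ∈ weightDropExponents w j 1 ∩ {u | u.degree = N},
      lowerExponents w u ⊆ weightDropExponents w j 1 ∩ {u | u.degree = N} := by
    rintro u ⟨hdrop, hdeg⟩ v ⟨hvdeg, hweight⟩
    refine ⟨?_, hvdeg.trans hdeg⟩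
    simp only [weightDropExponents, Set.mem_ofPred_eq, hvdeg] at hdrop ⊢
    omega
  obtain ⟨H, hH, hQH⟩ := hG.exists_normalForm hlower hQ
  rw [RingHom.mem_ker, map_sub, sub_eq_zero, hπQ, one_mul, ← map_pow, ← sub_eq_zero,
    ← map_sub] at hQH
  have hzero := hG.eq_zero_of_mem _ hQH (sub_mem (X_pow_eq_monomial (R := K) ▸
    monomial_mem_restrictSupport_of_mem
      (Δ.down_closed (hG.vertex_mem j) Finsupp.support_single_subset) 1)
    (restrictSupport_mono K Set.inter_subset_left hH))
  rw [← sub_eq_zero.1 hzero, X_pow_eq_monomial, monomial_mem_restrictSupport] at hH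
  have hdrop := (hH.resolve_right one_ne_zero).2.1
  simp [weightDropExponents, Finsupp.weight_single] at hdrop

lemma exists_lt_valuation_pow_le_zpow {O : ValuationSubring L}
    (hO : DominatesWeightFiltration π w j O) (hj : j < Fin.last n) :
    ∃ l, j < l ∧ ∀ m, O.valuation (affineCoord π j m) ^ (w j - w l) ≤
      O.valuation (affineCoord π j l) ^ ((w j : ℤ) - w m) := by
  obtain ⟨l, hl, hmax⟩ := exists_forall_pow_le_pow
    (fun i ↦ O.valuation (affineCoord π j i)) (fun i ↦ w j - w i) ⟨_, Finset.mem_Ioi.2 hj⟩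
    fun i hi ↦ (Nat.sub_pos_of_lt (hG.strictAnti (Finset.mem_Ioi.1 hi))).ne'
  have hl := Finset.mem_Ioi.1 hl
  refine ⟨l, hl, fun m ↦ ?_⟩
  rcases lt_trichotomy j m with hm | rfl | hm
  · rw [← Nat.cast_sub (hG.strictAnti hm).le, zpow_natCast]
    exact hmax m (Finset.mem_Ioi.2 hm)
  · simp [affineCoord, div_self (hG.map_X_ne_zero _)]
  · have hpos : 0 < O.valuation (affineCoord π j l) := by
      simpa [zero_lt_iff] using ⟨hG.map_X_ne_zero l, hG.map_X_ne_zero j⟩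
    rw [← neg_sub, ← Nat.cast_sub (hG.strictAnti hm).le, zpow_neg, zpow_natCast,
      ← one_div, le_div_iff₀ (pow_pos hpos _), mul_comm]
    exact hO.valuation_pow_mul_pow_le_one (hG.strictAnti hl) (hG.strictAnti hm)

theorem exists_lt_edge_mem (hj : j < Fin.last n) : ∃ l, j < l ∧ {j, l} ∈ Δ.faces := by
  obtain ⟨O, hO⟩ := exists_dominatesWeightFiltration (hG.one_notMem_weightFiltration (j := j))
  obtain ⟨l, hl, hle⟩ := hG.exists_lt_valuation_pow_le_zpow hO hj
  have hw := hG.strictAnti hl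
  have hj0 := hG.map_X_ne_zero j
  refine ⟨l, hl, by_contra fun he ↦ ?_⟩
  set q := O.valuation (affineCoord π j l) with hq
  have hq0 : q ≠ 0 := by simpa [hq] using ⟨hG.map_X_ne_zero l, hj0⟩
  obtain ⟨H, hH, hHI⟩ := hG.exists_lower_sub_mem
    (mt (SComplex.single_add_single_mem_faceExponents_iff hl.ne).1 he)
  have hlow : lowerExponents w (Finsupp.single j 1 + Finsupp.single l 1) ⊆
      {v | v.prod (fun i k ↦ (q ^ ((w j : ℤ) - w i)) ^ k) < q ^ (w j - w l)} := by
    rintro v ⟨hdeg, hweight⟩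
    simp only [map_add, Finsupp.degree_single, Finsupp.weight_single, one_smul] at hdeg hweight
    rw [Set.mem_ofPred_eq, prod_zpow_pow_eq_zpow_weight hq0, weight_natCast_sub, hdeg,
      ← zpow_natCast]
    refine zpow_lt_zpow_right_of_lt_one₀ (zero_lt_iff.2 hq0) (hO.valuation_affineCoord_lt_one hw) ?_
    omega
  have hlt := valuation_aeval_pow_lt
    (fun c ↦ hO.1 _ (algebraMap_mem_weightFiltration c)) (Nat.sub_pos_of_lt hw).ne' hle
    (pow_ne_zero _ hq0) (restrictSupport_mono K hlow hH)
  have hHl : aeval (affineCoord π j) H = affineCoord π j l := by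
    rw [RingHom.mem_ker, map_sub, sub_eq_zero] at hHI
    rw [← map_div_pow_eq_aeval_affineCoord hj0 (k := 2), ← hHI,
      ← one_smul ℕ (Finsupp.single j 1 + _), ← X_mul_X_pow_eq_monomial, pow_one, map_mul, sq,
      mul_div_mul_left _ _ hj0]
    exact mem_restrictSupport_degree_eq_iff.1
      (restrictSupport_mono K (fun v hv ↦ hv.1.trans (by simp)) hH)
  exact (hHl ▸ hlt).false

lemma edge_mem_of_covBy (hj : j ⋖ Fin.last n) : {j, Fin.last n} ∈ Δ.faces := by
  obtain ⟨l, hl, hface⟩ := hG.exists_lt_edge_mem hj.lt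
  rwa [(Fin.le_last l).antisymm (hj.ge_of_gt hl)] at hface

end IsGraphDegeneration

/-! ### Leading terms at the poles of the last affine coordinate -/

/-- The subalgebra of all `π P / π (X j) ^ k` with `P` homogeneous of degree `k`, provided that
`π (X j) ≠ 0`. -/
def degreeZeroFractions {K σ L : Type*} [Field K] [Field L] [Algebra K L]
    (π : MvPolynomial σ K →ₐ[K] L) (j : σ) : Subalgebra K L where
  carrier := {ξ | ∃ k P, P.IsHomogeneous k ∧ π (X j) ^ k * ξ = π P}
  mul_mem' := by
    rintro a b ⟨k, P, hP, haP⟩ ⟨m, Q, hQ, hbQ⟩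
    exact ⟨k + m, P * Q, hP.mul hQ, by rw [map_mul, ← haP, ← hbQ]; ring⟩
  add_mem' := by
    rintro a b ⟨k, P, hP, haP⟩ ⟨m, Q, hQ, hbQ⟩
    refine ⟨k + m, P * X j ^ m + Q * X j ^ k, (hP.mul ?_).add ?_, ?_⟩
    · exact isHomogeneous_X_pow j m
    · rw [add_comm k]
      exact hQ.mul (isHomogeneous_X_pow j k)
    · simp only [map_add, map_mul, map_pow, ← haP, ← hbQ]
      ring
  algebraMap_mem' r := ⟨0, C r, isHomogeneous_C _ r, by simp [← algebraMap_eq]⟩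

lemma prod_pow_pow_eq_pow_weight {σ M : Type*} [CommMonoid M] (w : σ → ℕ) (ψ : M) (u : σ →₀ ℕ) :
    (u.prod fun i k ↦ (ψ ^ w i) ^ k) = ψ ^ Finsupp.weight w u := by
  simp only [Finsupp.prod, ← pow_mul, Finset.prod_pow_eq_pow_sum, Finsupp.weight_apply,
    Finsupp.sum, smul_eq_mul, mul_comm]

section Steepest

variable {K L : Type*} [Field K] [Field L] [Algebra K L] {n : ℕ}

/-- At the valuation ring `O`, the slope `log |X m / X n| / w m` is maximal for `m = l`. -/
def IsSteepestAt (π : MvPolynomial (Fin (n + 1)) K →ₐ[K] L) (w : Fin (n + 1) → ℕ)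
    (O : ValuationSubring L) (l : Fin (n + 1)) : Prop :=
  ∀ m, O.valuation (affineCoord π (Fin.last n) m) ^ w l ≤
    O.valuation (affineCoord π (Fin.last n) l) ^ w m

variable {π : MvPolynomial (Fin (n + 1)) K →ₐ[K] L} {w : Fin (n + 1) → ℕ}
  {O : ValuationSubring L} {l : Fin (n + 1)}

lemma IsSteepestAt.valuation_map_div_pow_lt (hw : w l ≠ 0) (hz : π (X (Fin.last n)) ≠ 0)
    (hsteep : IsSteepestAt π w O l) (hO : IsPole K (affineCoord π (Fin.last n) l) O) {i D : ℕ}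
    {H : MvPolynomial (Fin (n + 1)) K}
    (hH : H ∈ restrictSupport K {u | u.degree = D ∧ Finsupp.weight w u < i * w l}) :
    O.valuation (π H / π (X (Fin.last n)) ^ D) <
      O.valuation (affineCoord π (Fin.last n) l ^ i) := by
  have hhom : H.IsHomogeneous D :=
    mem_restrictSupport_degree_eq_iff.1 (restrictSupport_mono K (fun u hu ↦ hu.1) hH)
  rw [map_div_pow_eq_aeval_affineCoord hz hhom, map_pow]
  refine lt_of_pow_lt_pow_left₀ (w l) zero_le ?_
  rw [← pow_mul]
  refine valuation_aeval_pow_lt hO.valuation_algebraMap_le_one hw hsteep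
    (pow_ne_zero _ (zero_lt_one.trans hO.one_lt_valuation).ne') (restrictSupport_mono K ?_ hH)
  intro u hu
  rw [Set.mem_ofPred_eq, prod_pow_pow_eq_pow_weight]
  exact pow_lt_pow_right₀ hO.one_lt_valuation hu.2

end Steepest

namespace IsGraphDegeneration

variable {K L : Type*} [Field K] [Field L] [Algebra K L] {n : ℕ}
  {π : MvPolynomial (Fin (n + 1)) K →ₐ[K] L} {Δ : SComplex n} {w : Fin (n + 1) → ℕ}
  (hG : IsGraphDegeneration (RingHom.ker π) Δ w) {l : Fin (n + 1)}
include hG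

lemma valuation_sub_lt_of_hasEdgeLeadingTerm (hl : l < Fin.last n) {D : ℕ}
    {P : MvPolynomial (Fin (n + 1)) K} (hP : HasEdgeLeadingTerm (RingHom.ker π) w l D P) :
    ∃ κ : K, κ ≠ 0 ∧ ∃ i : ℕ, ∀ O, IsPole K (affineCoord π (Fin.last n) l) O →
      IsSteepestAt π w O l →
      O.valuation (π P / π (X (Fin.last n)) ^ D -
        algebraMap K L κ * affineCoord π (Fin.last n) l ^ i) <
      O.valuation (affineCoord π (Fin.last n) l ^ i) := by
  have hz := hG.map_X_ne_zero (Fin.last n)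
  obtain ⟨u, hu, hdeg, κ, hκ, H, hH, hHI⟩ := hP
  rw [eq_single_add_single_of_support_subset hl.ne hu] at hdeg hH hHI
  generalize u l = i, u (Fin.last n) = j at hdeg hH hHI
  refine ⟨κ, hκ, i, fun O hO hsteep ↦ ?_⟩
  have hlow : lowerExponents w (Finsupp.single l i + Finsupp.single (Fin.last n) j) ⊆
      {v | v.degree = D ∧ Finsupp.weight w v < i * w l} := fun v hv ↦
    ⟨hv.1.trans hdeg, by simpa [Finsupp.weight_single, hG.weight_last] using hv.2⟩
  have hlt := hsteep.valuation_map_div_pow_lt (hG.weight_pos hl).ne' hz hO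
    (restrictSupport_mono K hlow hH)
  have hmap : π P = algebraMap K L κ * π (X l) ^ i * π (X (Fin.last n)) ^ j + π H := by
    rw [RingHom.mem_ker, map_sub, sub_eq_zero, map_add] at hHI
    rw [hHI, ← mul_one κ, ← monomial_mul, ← C_mul_X_pow_eq_monomial, ← X_pow_eq_monomial]
    simp only [map_mul, map_pow, mul_one, ← algebraMap_eq, AlgHom.commutes]
  convert hlt using 2
  simp only [map_add, Finsupp.degree_single] at hdeg
  rw [hmap, ← hdeg, pow_add, div_pow]
  field_simp
  ring

lemma exists_leadingTerm_of_isSteepestAt (hl : l < Fin.last n) (he : {l, Fin.last n} ∈ Δ.faces)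
    {k : ℕ} {a : MvPolynomial (Fin (n + 1)) K} (ha : a.IsHomogeneous k) (ha0 : π a ≠ 0) :
    ∃ κ : K, κ ≠ 0 ∧ ∃ m : ℤ, ∀ O, IsPole K (affineCoord π (Fin.last n) l) O →
      IsSteepestAt π w O l →
      O.valuation (π a / π (X (Fin.last n)) ^ k -
        algebraMap K L κ * affineCoord π (Fin.last n) l ^ m) <
      O.valuation (affineCoord π (Fin.last n) l ^ m) := by
  have hz := hG.map_X_ne_zero (Fin.last n)
  have hx := hG.map_X_ne_zero l
  obtain ⟨N, hlead⟩ := hG.exists_hasEdgeLeadingTerm hl he ha ha0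
  obtain ⟨κ, hκ, i, hlt⟩ := hG.valuation_sub_lt_of_hasEdgeLeadingTerm hl hlead
  refine ⟨κ, hκ, i - N, fun O hO hsteep ↦ ?_⟩
  have hf : affineCoord π (Fin.last n) l ≠ 0 := div_ne_zero hx hz
  have hfN : 0 < O.valuation (affineCoord π (Fin.last n) l ^ N) := by
    rw [zero_lt_iff, Ne, map_eq_zero]
    exact pow_ne_zero N hf
  rw [← mul_lt_mul_iff_left₀ hfN, ← map_mul, ← map_mul, sub_mul, mul_assoc,
    zpow_sub₀ hf, zpow_natCast, zpow_natCast, div_mul_cancel₀ _ (pow_ne_zero N hf)]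
  convert hlt O hO hsteep using 3
  simp only [map_mul, map_pow, pow_add, pow_mul', mul_pow, div_pow, affineCoord]
  field_simp

lemma exists_isPole_isSteepestAt (hl : l < Fin.last n) {O : ValuationSubring L}
    (hO : IsPole K (affineCoord π (Fin.last n) l) O) : ∃ m < Fin.last n,
      IsPole K (affineCoord π (Fin.last n) m) O ∧ IsSteepestAt π w O m := by
  obtain ⟨m, hm, hmax⟩ := exists_forall_pow_le_pow
    (fun i ↦ O.valuation (affineCoord π (Fin.last n) i)) w ⟨l, Finset.mem_Iio.2 hl⟩
    fun i hi ↦ (hG.weight_pos (Finset.mem_Iio.1 hi)).ne'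
  have hm := Finset.mem_Iio.1 hm
  refine ⟨m, hm, ⟨hO.1, fun hmem ↦ ?_⟩, fun i ↦ ?_⟩
  · exact (((one_lt_pow₀ hO.one_lt_valuation (hG.weight_pos hm).ne').trans_le
      (hmax l (Finset.mem_Iio.2 hl))).trans_le
      (pow_le_one' ((O.valuation_le_one_iff _).2 hmem) _)).false
  · rcases (Fin.le_last i).lt_or_eq with hi | rfl
    · exact hmax i (Finset.mem_Iio.2 hi)
    · simp [hG.weight_last, affineCoord, div_self (hG.map_X_ne_zero (Fin.last n))]

lemma edge_mem_of_isSteepestAt (hl : l < Fin.last n) {O : ValuationSubring L}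
    (hO : IsPole K (affineCoord π (Fin.last n) l) O) (hsteep : IsSteepestAt π w O l) :
    {l, Fin.last n} ∈ Δ.faces := by
  have hz := hG.map_X_ne_zero (Fin.last n)
  by_contra he
  obtain ⟨H, hH, hHI⟩ := hG.exists_lower_sub_mem
    (mt (SComplex.single_add_single_mem_faceExponents_iff hl.ne).1 he)
  have hlow : lowerExponents w (Finsupp.single l 1 + Finsupp.single (Fin.last n) 1) ⊆
      {v | v.degree = 2 ∧ Finsupp.weight w v < 1 * w l} := fun v hv ↦
    ⟨hv.1.trans (by simp), by simpa [hG.weight_edge] using hv.2⟩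
  have hlt := hsteep.valuation_map_div_pow_lt (hG.weight_pos hl).ne' hz hO
    (restrictSupport_mono K hlow hH)
  rw [RingHom.mem_ker, map_sub, sub_eq_zero] at hHI
  rw [← hHI, ← one_smul ℕ (Finsupp.single l 1 + _), ← X_mul_X_pow_eq_monomial, pow_one,
    pow_one, map_mul, sq, mul_div_mul_right _ _ hz] at hlt
  exact hlt.false

lemma isSteepestAt_of_covBy (hl : l ⋖ Fin.last n) {O : ValuationSubring L}
    (hO : IsPole K (affineCoord π (Fin.last n) l) O) : IsSteepestAt π w O l := by
  obtain ⟨m, hm, hOm, hsteep⟩ := hG.exists_isPole_isSteepestAt hl.lt hO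
  obtain ⟨κ, hκ, r, hlead⟩ := hG.exists_leadingTerm_of_isSteepestAt hm
    (hG.edge_mem_of_isSteepestAt hm hOm hsteep) (isHomogeneous_X K l) (hG.map_X_ne_zero l)
  have hval := valuation_eq_of_sub_algebraMap_mul_lt hO.valuation_algebraMap_le_one hκ
    (hlead O hOm hsteep)
  rw [pow_one] at hval
  have hr : 1 ≤ r := by
    have hone := hO.one_lt_valuation
    rw [hval, ← map_one O.valuation, ← zpow_zero (affineCoord π (Fin.last n) m),
      hOm.valuation_zpow_lt_zpow_iff] at hone
    omega
  have hle : O.valuation (affineCoord π (Fin.last n) m) ≤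
      O.valuation (affineCoord π (Fin.last n) l) := by
    rw [hval, map_zpow₀]
    simpa using zpow_le_zpow_right₀ hOm.one_lt_valuation.le hr
  have hweight : w m ≤ w l := (pow_le_pow_iff_right₀ hO.one_lt_valuation).1
    ((hsteep l).trans (pow_le_pow_left₀ zero_le hle _))
  rwa [le_antisymm (hl.le_of_lt hm) (hG.strictAnti.le_iff_ge.1 hweight)] at hsteep

lemma hasPolarLeadingTerm_of_covBy (hl : l ⋖ Fin.last n) {ξ : L}
    (hξ : ξ ∈ degreeZeroFractions π (Fin.last n)) (hξ0 : ξ ≠ 0) :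
    HasPolarLeadingTerm K (affineCoord π (Fin.last n) l) ξ := by
  have hz := hG.map_X_ne_zero (Fin.last n)
  obtain ⟨k, a, ha, hξa⟩ := hξ
  have ha0 : π a ≠ 0 := hξa ▸ mul_ne_zero (pow_ne_zero k hz) hξ0
  obtain ⟨κ, hκ, m, hlead⟩ :=
    hG.exists_leadingTerm_of_isSteepestAt hl.lt (hG.edge_mem_of_covBy hl) ha ha0
  rw [← hξa, mul_div_cancel_left₀ _ (pow_ne_zero k hz)] at hlead
  exact ⟨κ, hκ, m, fun O hO ↦ hlead O hO (hG.isSteepestAt_of_covBy hl hO)⟩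

theorem exists_aeval_mul_affineCoord_eq_aeval [IsAlgClosed K] (hl : l ⋖ Fin.last n)
    (i : Fin (n + 1)) : ∃ c p : Polynomial K, c ≠ 0 ∧
      Polynomial.aeval (affineCoord π (Fin.last n) l) c * affineCoord π (Fin.last n) i =
        Polynomial.aeval (affineCoord π (Fin.last n) l) p := by
  have hmem (m : Fin (n + 1)) :
      affineCoord π (Fin.last n) m ∈ degreeZeroFractions π (Fin.last n) :=
    ⟨1, X m, isHomogeneous_X K m, by
      rw [pow_one, mul_div_cancel₀ _ (hG.map_X_ne_zero (Fin.last n))]⟩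
  refine exists_aeval_mul_eq_aeval_of_hasPolarLeadingTerm (hmem l)
    (fun η ↦ hG.hasPolarLeadingTerm_of_covBy hl) (hmem i) ?_
  simpa using hG.isAlgebraic_div hl.lt.ne (hG.edge_mem_of_covBy hl) (isHomogeneous_X K i)

end IsGraphDegeneration

/-! ### Powers of a space of polynomials -/

section PolynomialSpace

open Polynomial (degreeLE)

lemma mem_degreeLE_iff_natDegree_le {R : Type*} [Semiring R] {p : Polynomial R} {d : ℕ} :
    p ∈ degreeLE R d ↔ p.natDegree ≤ d := by
  rw [Polynomial.mem_degreeLE, Polynomial.natDegree_le_iff_degree_le]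

lemma finrank_degreeLE (R : Type*) [CommRing R] [Nontrivial R] (d : ℕ) :
    Module.finrank R (degreeLE R d) = d + 1 := by
  rw [← Polynomial.degreeLT_succ_eq_degreeLE, (Polynomial.degreeLTEquiv R (d + 1)).finrank_eq,
    Module.finrank_fin_fun]

lemma degreeLE_mul_degreeLE (R : Type*) [CommSemiring R] (a b : ℕ) :
    degreeLE R a * degreeLE R b = degreeLE R (a + b : ℕ) := by
  classical
  refine le_antisymm (Submodule.mul_le.2 fun p hp q hq ↦ ?_) ?_
  · rw [mem_degreeLE_iff_natDegree_le] at hp hq ⊢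
    exact Polynomial.natDegree_mul_le_of_le hp hq
  · rw [Polynomial.degreeLE_eq_span_X_pow, Submodule.span_le, Finset.coe_image,
      Set.image_subset_iff]
    intro e he
    rw [Finset.mem_coe, Finset.mem_range] at he
    rw [Set.mem_preimage, ← Nat.sub_add_cancel (min_le_left e a), pow_add, mul_comm]
    refine Submodule.mul_mem_mul ?_ ?_ <;>
    · rw [mem_degreeLE_iff_natDegree_le]
      exact (Polynomial.natDegree_X_pow_le _).trans (by omega)

lemma degreeLE_pow (R : Type*) [CommSemiring R] (d k : ℕ) :
    degreeLE R d ^ k = degreeLE R (k * d : ℕ) := by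
  classical
  induction k with
  | zero =>
    rw [pow_zero, Submodule.one_eq_span, zero_mul, Polynomial.degreeLE_eq_span_X_pow]
    simp
  | succ k ih => rw [pow_succ, ih, degreeLE_mul_degreeLE, Nat.succ_mul]

lemma map_aeval_homogeneousSubmodule {R A σ : Type*} [CommSemiring R] [CommSemiring A]
    [Algebra R A] (g : σ → A) (k : ℕ) :
    (homogeneousSubmodule σ R k).map (aeval g).toLinearMap =
      Submodule.span R (Set.range g) ^ k := by
  rw [← homogeneousSubmodule_one_pow, Submodule.map_pow, homogeneousSubmodule_one_eq_span_X,
    Submodule.map_span, ← Set.range_comp]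
  simp only [Function.comp_def, AlgHom.toLinearMap_apply, aeval_X]

section Absorption

variable {R A : Type*} [CommSemiring R] [CommSemiring A] [Algebra R A] {V W : Submodule R A}

lemma pow_mul_le_pow_of_le {M N : ℕ} (h : V ^ M * W ≤ V ^ (M + 1)) (hMN : M ≤ N) :
    V ^ N * W ≤ V ^ (N + 1) := by
  obtain ⟨m, rfl⟩ := Nat.exists_eq_add_of_le' hMN
  calc V ^ (m + M) * W = V ^ m * (V ^ M * W) := by rw [pow_add, mul_assoc]
    _ ≤ V ^ m * V ^ (M + 1) := by gcongr
    _ = V ^ (m + M + 1) := by rw [← pow_add, add_assoc]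

lemma exists_pow_mul_le_pow_succ (hW : W.FG)
    (h : ∀ x ∈ W, ∃ N, ∀ a ∈ V ^ N, a * x ∈ V ^ (N + 1)) : ∃ M, V ^ M * W ≤ V ^ (M + 1) := by
  obtain ⟨s, rfl⟩ := hW
  choose! N hN using fun x (hx : x ∈ s) ↦ h x (Submodule.subset_span hx)
  refine ⟨s.sup N, ?_⟩
  rw [← Submodule.span_eq (V ^ s.sup N), Submodule.span_mul_span, Submodule.span_le]
  rintro _ ⟨a, ha, x, hx, rfl⟩
  rw [Finset.mem_coe] at hx
  have hle : V ^ N x * Submodule.span R {x} ≤ V ^ (N x + 1) := by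
    refine Submodule.mul_le.2 fun b hb y hy ↦ ?_
    obtain ⟨c, rfl⟩ := Submodule.mem_span_singleton.1 hy
    rw [mul_smul_comm]
    exact Submodule.smul_mem _ c (hN x hx b hb)
  exact pow_mul_le_pow_of_le hle (Finset.le_sup hx)
    (Submodule.mul_mem_mul ha (Submodule.mem_span_singleton_self x))

lemma pow_mul_pow_le_pow {M : ℕ} (h : V ^ M * W ≤ V ^ (M + 1)) (j : ℕ) :
    V ^ M * W ^ j ≤ V ^ (M + j) := by
  induction j with
  | zero => simp
  | succ j ih =>
    calc V ^ M * W ^ (j + 1) = V ^ M * W ^ j * W := by rw [pow_succ, mul_assoc]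
      _ ≤ V ^ (M + j) * W := by gcongr
      _ ≤ V ^ (M + j + 1) := pow_mul_le_pow_of_le h (Nat.le_add_right M j)

lemma pow_add_le_pow_mul_pow {j₀ : ℕ} (h : ∀ j, j₀ ≤ j → W ^ (j + 1) ≤ W ^ j * V) (r : ℕ) :
    W ^ (j₀ + r) ≤ W ^ j₀ * V ^ r := by
  induction r with
  | zero => simp
  | succ r ih =>
    calc W ^ (j₀ + r + 1) ≤ W ^ (j₀ + r) * V := h _ (Nat.le_add_right j₀ r)
      _ ≤ W ^ j₀ * V ^ r * V := by gcongr
      _ = W ^ j₀ * V ^ (r + 1) := by rw [pow_succ, mul_assoc]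

end Absorption

variable {K : Type*} [Field K] {V : Submodule K (Polynomial K)}

lemma exists_mem_degreeLE_mul {p : Polynomial K} (hp : p ∈ Ideal.span (V : Set (Polynomial K))) :
    ∃ b : ℕ, p ∈ degreeLE K b * V := by
  induction hp using Submodule.span_induction with
  | mem p hp =>
    exact ⟨0, one_mul p ▸ Submodule.mul_mem_mul
      (mem_degreeLE_iff_natDegree_le.2 Polynomial.natDegree_one.le) hp⟩
  | zero => exact ⟨0, zero_mem _⟩
  | add p q _ _ ihp ihq =>
    obtain ⟨a, ha⟩ := ihp
    obtain ⟨b, hb⟩ := ihq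
    have hmono {c : ℕ} (hc : c ≤ max a b) : degreeLE K c * V ≤ degreeLE K (max a b : ℕ) * V :=
      mul_le_mul' (Polynomial.degreeLE_mono (by exact_mod_cast hc)) le_rfl
    exact ⟨max a b, add_mem (hmono (le_max_left a b) ha) (hmono (le_max_right a b) hb)⟩
  | smul c p _ ih =>
    obtain ⟨b, hb⟩ := ih
    refine ⟨c.natDegree + b, ?_⟩
    rw [← degreeLE_mul_degreeLE, mul_assoc]
    exact Submodule.mul_mem_mul (mem_degreeLE_iff_natDegree_le.2 le_rfl) hb

lemma natDegree_div_le {p g : Polynomial K} {a : ℕ} (hp : p.natDegree ≤ a + g.natDegree) :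
    (p / g).natDegree ≤ a := by
  by_cases hdiv : p / g = 0
  · simp [hdiv]
  have hg : g ≠ 0 := by
    rintro rfl
    exact hdiv (EuclideanDomain.div_zero p)
  have hadd := Polynomial.degree_add_div hg (not_lt.1 (mt (Polynomial.div_eq_zero_iff hg).2 hdiv))
  rw [← Polynomial.degree_mul] at hadd
  have := Polynomial.natDegree_eq_of_degree_eq hadd
  rw [Polynomial.natDegree_mul hg hdiv] at this
  omega

-- Divide with remainder by `g`, and for the remainder write `1` as a combination of elements of
-- `V`.
lemma exists_degreeLE_pow_succ_le {g : Polynomial K} (hg : g ∈ V) (hd : g.natDegree ≠ 0)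
    (h1 : Ideal.span (V : Set (Polynomial K)) = ⊤) :
    ∃ j₀, ∀ j, j₀ ≤ j →
      degreeLE K g.natDegree ^ (j + 1) ≤ degreeLE K g.natDegree ^ j * V := by
  obtain ⟨b, hb⟩ := exists_mem_degreeLE_mul (V := V) (h1 ▸ Submodule.mem_top (x := 1))
  refine ⟨b + 1, fun j hj p hp ↦ ?_⟩
  rw [degreeLE_pow, mem_degreeLE_iff_natDegree_le] at hp
  rw [degreeLE_pow]
  have hquot : p / g ∈ degreeLE K (j * g.natDegree : ℕ) :=
    mem_degreeLE_iff_natDegree_le.2 (natDegree_div_le (by rwa [← Nat.succ_mul]))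
  have hrem : p % g * 1 ∈ degreeLE K (g.natDegree + b : ℕ) * V := by
    rw [← degreeLE_mul_degreeLE, mul_assoc]
    exact Submodule.mul_mem_mul
      (mem_degreeLE_iff_natDegree_le.2 (Polynomial.natDegree_mod_lt p hd).le) hb
  have hle : g.natDegree + b ≤ j * g.natDegree := by
    have := Nat.pos_of_ne_zero hd
    nlinarith
  rw [← EuclideanDomain.div_add_mod p g, mul_comm g, ← mul_one (p % g)]
  exact add_mem (Submodule.mul_mem_mul hquot hg)
    (mul_le_mul' (Polynomial.degreeLE_mono (by exact_mod_cast hle)) le_rfl hrem)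

theorem exists_degreeLE_le_pow {g : Polynomial K} (hg : g ∈ V) (hd : g.natDegree ≠ 0)
    (h1 : Ideal.span (V : Set (Polynomial K)) = ⊤)
    (habs : ∀ p : Polynomial K, p.natDegree ≤ g.natDegree →
      ∃ N, ∀ a ∈ V ^ N, a * p ∈ V ^ (N + 1)) :
    ∃ k ≠ 0, degreeLE K (k * g.natDegree : ℕ) ≤ V ^ k := by
  classical
  have hfg : (degreeLE K g.natDegree).FG := by
    rw [Polynomial.degreeLE_eq_span_X_pow]
    exact ⟨_, rfl⟩
  obtain ⟨M, hM⟩ := exists_pow_mul_le_pow_succ hfg fun p hp ↦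
    habs p (mem_degreeLE_iff_natDegree_le.1 hp)
  obtain ⟨j₀, hj₀⟩ := exists_degreeLE_pow_succ_le hg hd h1
  refine ⟨j₀ + (M + 1), by omega, ?_⟩
  calc degreeLE K ((j₀ + (M + 1)) * g.natDegree : ℕ)
      = degreeLE K g.natDegree ^ (j₀ + (M + 1)) := (degreeLE_pow ..).symm
    _ ≤ degreeLE K g.natDegree ^ j₀ * V ^ (M + 1) := pow_add_le_pow_mul_pow hj₀ (M + 1)
    _ = V ^ (M + 1) * degreeLE K g.natDegree ^ j₀ := mul_comm ..
    _ ≤ V ^ (M + 1 + j₀) := pow_mul_pow_le_pow (pow_mul_le_pow_of_le hM M.le_succ) j₀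
    _ = V ^ (j₀ + (M + 1)) := by rw [add_comm]

end PolynomialSpace

/-! ### Polynomial parametrizations -/

lemma exists_forall_map_mul_eq {ι R A F : Type*} [Finite ι] [CommMonoidWithZero R]
    [NoZeroDivisors R] [Nontrivial R] [Semigroup A] [FunLike F R A] [MulHomClass F R A] (φ : F)
    {y : ι → A} (h : ∀ i, ∃ c p, c ≠ 0 ∧ φ c * y i = φ p) :
    ∃ (c : R) (q : ι → R), c ≠ 0 ∧ ∀ i, φ c * y i = φ (q i) := by
  classical
  have := Fintype.ofFinite ι
  choose c p hc hcp using h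
  refine ⟨∏ i, c i, fun i ↦ (∏ m ∈ Finset.univ.erase i, c m) * p i,
    Finset.prod_ne_zero_iff.2 fun i _ ↦ hc i, fun i ↦ ?_⟩
  rw [← Finset.prod_erase_mul _ _ (Finset.mem_univ i), map_mul, mul_assoc, hcp, map_mul]

lemma exists_eq_mul_and_span_range_eq_top {ι R : Type*} [CommRing R] [IsDomain R]
    [IsPrincipalIdealRing R] {q : ι → R} (hq : q ≠ 0) :
    ∃ h g, h ≠ 0 ∧ (∀ i, q i = h * g i) ∧ Ideal.span (Set.range g) = ⊤ := by
  obtain ⟨h, hh : Ideal.span (Set.range q) = Ideal.span {h}⟩ :=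
    (IsPrincipalIdealRing.principal (Ideal.span (Set.range q))).principal
  have hdvd (i : ι) : h ∣ q i :=
    Ideal.mem_span_singleton.1 (hh ▸ Ideal.subset_span (Set.mem_range_self i))
  choose g hg using hdvd
  have hh0 : h ≠ 0 := by
    rintro rfl
    exact hq (funext fun i ↦ by rw [hg, zero_mul, Pi.zero_apply])
  refine ⟨h, g, hh0, hg, (Ideal.span_singleton_mul_right_inj hh0).1 ?_⟩
  rw [Ideal.mul_top, Ideal.span_mul_span', ← hh, Set.singleton_mul, ← Set.range_comp]
  exact congrArg Ideal.span (congrArg Set.range (funext fun i ↦ (hg i).symm))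

section Valuation

variable {Γ K L : Type*} [LinearOrderedCommGroupWithZero Γ] [Field K] [Field L] [Algebra K L]
  {v : Valuation L Γ} (hv : ∀ c : K, v (algebraMap K L c) ≤ 1) {f : L} (hf : 1 < v f)
include hv hf

lemma valuation_aeval_le {p : Polynomial K} {d : ℕ} (hp : p.natDegree ≤ d) :
    v (Polynomial.aeval f p) ≤ v f ^ d := by
  rw [Polynomial.aeval_eq_sum_range]
  refine v.map_sum_le fun i hi ↦ ?_
  rw [Algebra.smul_def, map_mul, map_pow]
  exact mul_le_of_le_one_of_le (hv _)
    (pow_le_pow_right₀ hf.le ((Finset.mem_range_succ_iff.1 hi).trans hp))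

lemma valuation_aeval {p : Polynomial K} (hp : p ≠ 0) :
    v (Polynomial.aeval f p) = v f ^ p.natDegree := by
  rw [← map_pow]
  refine valuation_eq_of_sub_algebraMap_mul_lt hv (Polynomial.leadingCoeff_ne_zero.2 hp) ?_
  have hlead : Polynomial.aeval f p - algebraMap K L p.leadingCoeff * f ^ p.natDegree =
      Polynomial.aeval f p.eraseLead := by
    rw [← Polynomial.self_sub_monomial_natDegree_leadingCoeff, map_sub, Polynomial.aeval_monomial]
  rw [hlead, map_pow]
  rcases p.eraseLead_natDegree_lt_or_eraseLead_eq_zero with hlt | hzero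
  · exact (valuation_aeval_le hv hf le_rfl).trans_lt (pow_lt_pow_right₀ hf hlt)
  · rw [hzero, map_zero, map_zero]
    exact pow_pos (zero_lt_one.trans hf) _

end Valuation

section Parametrization

variable {K L σ : Type*} [Field K] [Field L] [Algebra K L] {π : MvPolynomial σ K →ₐ[K] L} {f : L}
  {g : σ → Polynomial K} {Z : L}

variable (π f g Z) in
/-- The variety whose homogeneous coordinate ring is the image of `π` is parametrized by coprime
polynomials in the transcendental function `f`: in homogeneous coordinates, the point at parameter
`f` is `(g i (f))ᵢ`, the common scaling factor of the coordinates being `Z`. -/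
structure IsPolynomialParametrization : Prop where
  transcendental : Transcendental K f
  scale_ne_zero : Z ≠ 0
  span_eq_top : Ideal.span (Set.range g) = ⊤
  map_X (i : σ) : π (X i) = Polynomial.aeval f (g i) * Z

namespace IsPolynomialParametrization

variable (hpar : IsPolynomialParametrization π f g Z)
include hpar

lemma map_eq_of_isHomogeneous {P : MvPolynomial σ K} {k : ℕ} (hP : P.IsHomogeneous k) :
    π P = Polynomial.aeval f (aeval g P) * Z ^ k := by
  have hX : π ∘ X = fun i ↦ Polynomial.aeval f (g i) * Z := funext hpar.map_X
  rw [aeval_unique π, hX, aeval_mul_const_of_isHomogeneous hP, comp_aeval_apply]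

lemma aeval_eq_aeval_iff {p q : Polynomial K} :
    Polynomial.aeval f p = Polynomial.aeval f q ↔ p = q :=
  (transcendental_iff_injective.1 hpar.transcendental).eq_iff

lemma aeval_eq_zero_iff {P : MvPolynomial σ K} {k : ℕ} (hP : P.IsHomogeneous k) :
    aeval g P = 0 ↔ P ∈ RingHom.ker π := by
  rw [RingHom.mem_ker, hpar.map_eq_of_isHomogeneous hP,
    mul_eq_zero_iff_right (pow_ne_zero k hpar.scale_ne_zero),
    map_eq_zero_iff _ (transcendental_iff_injective.1 hpar.transcendental)]

lemma aeval_mul_mem_of_mem {O : ValuationSubring L} (hO : ∀ P, π P ∈ O) (hf : f ∈ O)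
    (p : Polynomial K) : Polynomial.aeval f p * Z ∈ O := by
  have haeval (q : Polynomial K) : Polynomial.aeval f q ∈ O := by
    rw [Polynomial.aeval_eq_sum_range]
    refine sum_mem fun i _ ↦ ?_
    rw [Algebra.smul_def, ← π.commutes]
    exact mul_mem (hO _) (pow_mem hf i)
  have hp : p ∈ Ideal.span (Set.range g) := hpar.span_eq_top ▸ Submodule.mem_top
  induction hp using Submodule.span_induction with
  | mem _ hi =>
    obtain ⟨i, rfl⟩ := hi
    exact hpar.map_X i ▸ hO (X i)
  | zero => simp
  | add p q _ _ hp hq =>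
    rw [map_add, add_mul]
    exact add_mem hp hq
  | smul c p _ hp =>
    rw [smul_eq_mul, map_mul, mul_assoc]
    exact mul_mem (haeval c) hp

lemma isIntegral_aeval_mul {m : σ} (hm : g m ≠ 0) {p : Polynomial K}
    (hp : p.natDegree ≤ (g m).natDegree) : IsIntegral π.range (Polynomial.aeval f p * Z) := by
  refine isIntegral_of_forall_mem_valuationSubring fun O hO ↦ ?_
  have hπO (P : MvPolynomial σ K) : π P ∈ O := hO ⟨π P, P, rfl⟩
  by_cases hfO : f ∈ O
  · exact hpar.aeval_mul_mem_of_mem hπO hfO p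
  · have hpole : IsPole K f O := ⟨fun c ↦ π.commutes c ▸ hπO (algebraMap K _ c), hfO⟩
    have hv := hpole.valuation_algebraMap_le_one
    rw [← O.valuation_le_one_iff]
    calc O.valuation (Polynomial.aeval f p * Z)
        ≤ O.valuation f ^ (g m).natDegree * O.valuation Z := by
          rw [map_mul]
          exact mul_le_mul' (valuation_aeval_le hv hpole.one_lt_valuation hp) le_rfl
      _ = O.valuation (π (X m)) := by
          rw [hpar.map_X, map_mul, valuation_aeval hv hpole.one_lt_valuation hm]
      _ ≤ 1 := (O.valuation_le_one_iff _).2 (hπO _)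

end IsPolynomialParametrization

end Parametrization

namespace IsGraphDegeneration

theorem exists_isPolynomialParametrization {K L : Type*} [Field K] [IsAlgClosed K] [Field L]
    [Algebra K L] {n : ℕ} {π : MvPolynomial (Fin (n + 1)) K →ₐ[K] L} {Δ : SComplex n}
    {w : Fin (n + 1) → ℕ} (hG : IsGraphDegeneration (RingHom.ker π) Δ w) {l : Fin (n + 1)}
    (hl : l ⋖ Fin.last n) :
    ∃ g Z, IsPolynomialParametrization π (affineCoord π (Fin.last n) l) g Z := by
  have hz := hG.map_X_ne_zero (Fin.last n)
  have htrans := hG.transcendental_div hl.lt.ne (hG.edge_mem_of_covBy hl)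
  set f := affineCoord π (Fin.last n) l
  have hinj {p : Polynomial K} : Polynomial.aeval f p = 0 ↔ p = 0 :=
    map_eq_zero_iff _ (transcendental_iff_injective.1 htrans)
  obtain ⟨c, q, hc, hq⟩ := exists_forall_map_mul_eq (Polynomial.aeval f)
    (hG.exists_aeval_mul_affineCoord_eq_aeval hl)
  have hq0 : q ≠ 0 := by
    rintro rfl
    have := hq (Fin.last n)
    rw [affineCoord, div_self hz, mul_one, Pi.zero_apply, map_zero] at this
    exact hc (hinj.1 this)
  obtain ⟨h, g, hh, hg, hspan⟩ := exists_eq_mul_and_span_range_eq_top hq0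
  have hcf := hinj.not.2 hc
  refine ⟨g, Polynomial.aeval f h * π (X (Fin.last n)) / Polynomial.aeval f c, htrans,
    div_ne_zero (mul_ne_zero (hinj.not.2 hh) hz) hcf, hspan, fun i ↦ ?_⟩
  have hi := hq i
  rw [hg, map_mul, affineCoord, mul_div_assoc', div_eq_iff hz] at hi
  rw [mul_div_assoc', eq_div_iff hcf, mul_comm, hi]
  ring

end IsGraphDegeneration

/-! ### Smoothness makes the homogeneous coordinate ring saturated in large degrees -/

section DenominatorIdeal

/-- The ideal of denominators of `η`, an element of a field containing the image of `A`. -/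
def denominatorIdeal {A L : Type*} [CommRing A] [Field L] (π : A →+* L) (η : L) : Ideal A where
  carrier := {s | ∃ t, π s * η = π t}
  add_mem' := by
    rintro a b ⟨s, hs⟩ ⟨t, ht⟩
    exact ⟨s + t, by rw [map_add, map_add, add_mul, hs, ht]⟩
  zero_mem' := ⟨0, by simp⟩
  smul_mem' := by
    rintro c a ⟨t, ht⟩
    exact ⟨c * t, by rw [smul_eq_mul, map_mul, map_mul, mul_assoc, ht]⟩

variable {K L σ : Type*} [Field K] [Field L] [Algebra K L] {π : MvPolynomial σ K →ₐ[K] L} {η : L}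

variable (π η) in
/-- `η` is a quotient of homogeneous elements of the image of `π` whose degrees differ by one. -/
def IsDegreeOneFraction : Prop :=
  ∃ d a b, a.IsHomogeneous (d + 1) ∧ b.IsHomogeneous d ∧ π b ≠ 0 ∧ π b * η = π a

lemma IsDegreeOneFraction.map_homogeneousComponent_mul (hη : IsDegreeOneFraction π η)
    (hI : IsHomog (RingHom.ker π)) {s t : MvPolynomial σ K} (hst : π s * η = π t) (e : ℕ) :
    π (homogeneousComponent e s) * η = π (homogeneousComponent (e + 1) t) := by
  obtain ⟨d, a, b, ha, hb, hb0, hab⟩ := hη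
  have hker : s * a - t * b ∈ RingHom.ker π := by
    rw [RingHom.mem_ker, map_sub, map_mul, map_mul, ← hab, ← hst]
    ring
  have hcomp := hI _ hker (e + (d + 1))
  rw [map_sub, homogeneousComponent_add_mul ha, ← add_assoc, add_right_comm,
    homogeneousComponent_add_mul hb, RingHom.mem_ker, map_sub, map_mul, map_mul, ← hab,
    sub_eq_zero] at hcomp
  apply mul_right_cancel₀ hb0
  rw [← hcomp]
  ring

end DenominatorIdeal

section Saturation

variable {K L : Type*} [Field K] [Field L] [Algebra K L] {n : ℕ}
  {π : MvPolynomial (Fin (n + 1)) K →ₐ[K] L} {η : L} (hI : IsHomog (RingHom.ker π))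
  (hsmooth : ∀ x ∈ projZeros (RingHom.ker π), n ≤ jacobianRank (RingHom.ker π) x + 1)
  (hη : IsDegreeOneFraction π η) (hint : IsIntegral π.range η)
include hI hsmooth hη hint

-- At a nonsingular point the local ring is integrally closed, so some denominator of `η` does not
-- vanish there.
lemma eq_zero_of_mem_zeroLocus_denominatorIdeal {x : Fin (n + 1) → K}
    (hx : x ∈ zeroLocus K (denominatorIdeal π.toRingHom η)) : x = 0 := by
  by_contra hx0
  simp only [mem_zeroLocus_iff, aeval_eq_eval] at hx
  have hxI : ∀ P ∈ RingHom.ker π, eval x P = 0 := fun P hP ↦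
    hx P ⟨0, by simp [RingHom.mem_ker.1 hP]⟩
  have ⟨_, a, b, _, _, hb0, hab⟩ := hη
  obtain ⟨s, t, hs, hst⟩ := exists_lineRestriction_ne_zero_and_mul_eq_of_isIntegral hI ⟨hx0, hxI⟩
    (hsmooth x ⟨hx0, hxI⟩) hb0 hab hint
  exact hs (lineRestriction_eq_zero_iff.2 fun e ↦
    hx _ ⟨_, hη.map_homogeneousComponent_mul hI hst e⟩)

theorem exists_forall_isHomogeneous_map_mul_eq [IsAlgClosed K] :
    ∃ N, ∀ a : MvPolynomial (Fin (n + 1)) K, a.IsHomogeneous N →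
      ∃ t : MvPolynomial (Fin (n + 1)) K, t.IsHomogeneous (N + 1) ∧ π a * η = π t := by
  have hle : idealOfVars (Fin (n + 1)) K ≤ (denominatorIdeal π.toRingHom η).radical := by
    rw [← vanishingIdeal_zeroLocus_eq_radical (K := K), idealOfVars, Ideal.span_le]
    rintro _ ⟨i, rfl⟩
    refine mem_vanishingIdeal_iff.2 fun x hx ↦ ?_
    rw [eq_zero_of_mem_zeroLocus_denominatorIdeal hI hsmooth hη hint hx, aeval_X, Pi.zero_apply]
  obtain ⟨N, hN⟩ := Ideal.exists_pow_le_of_le_radical_of_fg hle (idealOfVars_fg ..)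
  refine ⟨N, fun a ha ↦ ?_⟩
  have hmem : a ∈ idealOfVars (Fin (n + 1)) K ^ N := by
    rw [mem_pow_idealOfVars_iff]
    exact fun u hu ↦ (ha.degree_eq_sum_deg_support hu).le
  obtain ⟨t, ht⟩ := hN hmem
  refine ⟨homogeneousComponent (N + 1) t, homogeneousComponent_isHomogeneous _ _, ?_⟩
  rw [← hη.map_homogeneousComponent_mul hI ht, homogeneousComponent_of_mem ha, if_pos rfl]

end Saturation

namespace IsPolynomialParametrization

section

variable {K L σ : Type*} [Field K] [Field L] [Algebra K L] {π : MvPolynomial σ K →ₐ[K] L}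
  {i j : σ} {g : σ → Polynomial K} {Z : L}

lemma isDegreeOneFraction (hpar : IsPolynomialParametrization π (affineCoord π j i) g Z)
    (hj : π (X j) ≠ 0) {p : Polynomial K} {d : ℕ} (hgd : (g j).natDegree ≤ d)
    (hpd : p.natDegree ≤ d) :
    IsDegreeOneFraction π (Polynomial.aeval (affineCoord π j i) p * Z) := by
  have hXj := hpar.map_X j
  refine ⟨d, binaryForm i j d p * X j, binaryForm i j d (g j),
    (isHomogeneous_binaryForm i j d p).mul (isHomogeneous_X K j),
    isHomogeneous_binaryForm i j d (g j), ?_, ?_⟩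
  · rw [map_binaryForm π hj hgd]
    exact mul_ne_zero (pow_ne_zero d hj) (left_ne_zero_of_mul (hXj ▸ hj))
  · rw [map_mul, map_binaryForm π hj hgd, map_binaryForm π hj hpd]
    linear_combination (-(π (X j) ^ d * Polynomial.aeval (affineCoord π j i) p)) * hXj

end

variable {K L : Type*} [Field K] [IsAlgClosed K] [Field L] [Algebra K L] {n : ℕ}
  {π : MvPolynomial (Fin (n + 1)) K →ₐ[K] L} {i j m : Fin (n + 1)}
  {g : Fin (n + 1) → Polynomial K} {Z : L}

lemma exists_forall_mul_mem_span_pow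
    (hpar : IsPolynomialParametrization π (affineCoord π j i) g Z)
    (hI : IsHomog (RingHom.ker π))
    (hsmooth : ∀ x ∈ projZeros (RingHom.ker π), n ≤ jacobianRank (RingHom.ker π) x + 1)
    (hj : π (X j) ≠ 0) (hm : g m ≠ 0) (hgm : ∀ l, (g l).natDegree ≤ (g m).natDegree)
    {p : Polynomial K} (hp : p.natDegree ≤ (g m).natDegree) :
    ∃ N, ∀ a ∈ Submodule.span K (Set.range g) ^ N,
      a * p ∈ Submodule.span K (Set.range g) ^ (N + 1) := by
  obtain ⟨N, hN⟩ := exists_forall_isHomogeneous_map_mul_eq hI hsmooth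
    (hpar.isDegreeOneFraction hj (hgm j) hp) (hpar.isIntegral_aeval_mul hm hp)
  refine ⟨N, fun a ha ↦ ?_⟩
  rw [← map_aeval_homogeneousSubmodule] at ha ⊢
  obtain ⟨P, hP, rfl⟩ := ha
  obtain ⟨Q, hQ, hPQ⟩ := hN P hP
  rw [hpar.map_eq_of_isHomogeneous hP, hpar.map_eq_of_isHomogeneous hQ] at hPQ
  refine ⟨Q, hQ, hpar.aeval_eq_aeval_iff.1 (mul_right_cancel₀
    (pow_ne_zero (N + 1) hpar.scale_ne_zero) ?_)⟩
  rw [AlgHom.toLinearMap_apply, AlgHom.toLinearMap_apply, ← hPQ, map_mul]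
  ring

end IsPolynomialParametrization

/-! ### Counting edges -/

lemma exists_ne_zero_and_forall_natDegree_le {R ι : Type*} [CommRing R] [Nontrivial R] [Finite ι]
    {g : ι → Polynomial R} (hg : Ideal.span (Set.range g) = ⊤) :
    ∃ m, g m ≠ 0 ∧ ∀ i, (g i).natDegree ≤ (g m).natDegree := by
  have hne : ∃ i, g i ≠ 0 := by
    by_contra! hzero
    have hbot : Ideal.span (Set.range g) = ⊥ := Ideal.span_eq_bot.2 (Set.forall_mem_range.2 hzero)
    exact bot_ne_top (hbot.symm.trans hg)
  have : Nonempty ι := hne.nonempty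
  obtain ⟨m, hm⟩ := Finite.exists_max fun i ↦ (g i).degree
  refine ⟨m, fun h0 ↦ ?_, fun i ↦ Polynomial.natDegree_le_natDegree (hm i)⟩
  obtain ⟨i, hi⟩ := hne
  have := hm i
  rw [h0, Polynomial.degree_zero, le_bot_iff, Polynomial.degree_eq_bot] at this
  exact hi this

namespace IsGraphDegeneration

variable {K L : Type*} [Field K] [Field L] [Algebra K L] {n : ℕ}
  {π : MvPolynomial (Fin (n + 1)) K →ₐ[K] L} {Δ : SComplex n} {w : Fin (n + 1) → ℕ}
  (hG : IsGraphDegeneration (RingHom.ker π) Δ w) {f : L} {g : Fin (n + 1) → Polynomial K} {Z : L}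
include hG

lemma finrank_span_pow (hpar : IsPolynomialParametrization π f g Z) {k : ℕ} (hk : k ≠ 0) :
    Module.finrank K ↥(Submodule.span K (Set.range g) ^ k) =
      n + 1 + Δ.edges.ncard * (k - 1) := by
  rw [← map_aeval_homogeneousSubmodule, hG.finrank_map_homogeneousSubmodule fun P hP ↦
    hpar.aeval_eq_zero_iff hP, hG.ncard_faceExponents hk]

-- The leading coefficient of the Hilbert polynomial is at most the degree of the parametrization.
lemma ncard_edges_le_of_forall_natDegree_le (hpar : IsPolynomialParametrization π f g Z) {d : ℕ}
    (hd : ∀ i, (g i).natDegree ≤ d) : Δ.edges.ncard ≤ d := by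
  have hle : Submodule.span K (Set.range g) ≤ Polynomial.degreeLE K d :=
    Submodule.span_le.2 (Set.range_subset_iff.2 fun i ↦ mem_degreeLE_iff_natDegree_le.2 (hd i))
  have hfin : Module.Finite K (Polynomial.degreeLE K ((d + 3) * d : ℕ)) :=
    Module.finite_of_finrank_pos (by rw [finrank_degreeLE]; omega)
  have hrank := Submodule.finrank_mono ((pow_le_pow_left' hle (d + 3)).trans
    (degreeLE_pow K d (d + 3)).le)
  rw [hG.finrank_span_pow hpar (by omega), finrank_degreeLE, Nat.add_sub_assoc (by omega)] at hrank
  by_contra! hlt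
  nlinarith

theorem ncard_edges_le [IsAlgClosed K]
    (hsmooth : ∀ x ∈ projZeros (RingHom.ker π), n ≤ jacobianRank (RingHom.ker π) x + 1)
    {l : Fin (n + 1)} (hl : l ⋖ Fin.last n) : Δ.edges.ncard ≤ n := by
  obtain ⟨g, Z, hpar⟩ := hG.exists_isPolynomialParametrization hl
  obtain ⟨m, hm, hgm⟩ := exists_ne_zero_and_forall_natDegree_le hpar.span_eq_top
  have hEd := hG.ncard_edges_le_of_forall_natDegree_le hpar hgm
  have hE : Δ.edges.ncard ≠ 0 := Set.ncard_ne_zero_of_mem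
    (a := {l, Fin.last n}) ⟨hG.edge_mem_of_covBy hl, Finset.card_pair hl.lt.ne⟩
  set V := Submodule.span K (Set.range g)
  have hspan : Ideal.span (V : Set (Polynomial K)) = ⊤ :=
    top_le_iff.1 (hpar.span_eq_top ▸ Ideal.span_mono Submodule.subset_span)
  obtain ⟨k, hk, hle⟩ := exists_degreeLE_le_pow (V := V)
    (Submodule.subset_span (Set.mem_range_self m)) (by omega) hspan fun p hp ↦
      hpar.exists_forall_mul_mem_span_pow hG.isHomog hsmooth (hG.map_X_ne_zero _) hm hgm hp
  have hrankV := hG.finrank_span_pow hpar hk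
  have hfin : Module.Finite K ↥(V ^ k) := Module.finite_of_finrank_pos (hrankV ▸ by omega)
  have hrank := Submodule.finrank_mono hle
  rw [finrank_degreeLE, hrankV] at hrank
  obtain ⟨k, rfl⟩ := Nat.exists_eq_succ_of_ne_zero hk
  rw [Nat.succ_sub_one] at hrank
  nlinarith

end IsGraphDegeneration

/-! ### Connectedness and the Euler characteristic -/

lemma exists_algHom_ker_eq.{u, v} (K : Type u) {A : Type v} [Field K] [CommRing A] [Algebra K A]
    (I : Ideal A) [I.IsPrime] :
    ∃ (L : Type v) (_ : Field L) (_ : Algebra K L) (π : A →ₐ[K] L), RingHom.ker π = I := by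
  refine ⟨FractionRing (A ⧸ I), inferInstance, inferInstance,
    (IsScalarTower.toAlgHom K (A ⧸ I) _).comp (Ideal.Quotient.mkₐ K I), Ideal.ext fun a ↦ ?_⟩
  rw [RingHom.mem_ker, AlgHom.comp_apply, IsScalarTower.coe_toAlgHom',
    FaithfulSMul.algebraMap_eq_zero_iff, Ideal.Quotient.mkₐ_eq_mk, Ideal.Quotient.eq_zero_iff_mem]

lemma connected_of_forall_exists_lt_adj {V : Type*} [PartialOrder V] [OrderTop V]
    [WellFoundedGT V] {G : SimpleGraph V} (h : ∀ j < ⊤, ∃ l, j < l ∧ G.Adj j l) :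
    G.Connected := by
  have hreach (j : V) : G.Reachable j ⊤ := by
    induction j using WellFoundedGT.induction with
    | _ j ih =>
      obtain rfl | hj := eq_or_lt_of_le (le_top (a := j))
      · exact .rfl
      · obtain ⟨l, hjl, hadj⟩ := h j hj
        exact hadj.reachable.trans (ih l hjl)
  have : Nonempty V := ⟨⊤⟩
  exact ⟨fun u v ↦ (hreach u).trans (hreach v).symm⟩

namespace SComplex

variable {n : ℕ} {Δ : SComplex n}

lemma graph_adj_iff {i j : Fin (n + 1)} : Δ.graph.Adj i j ↔ i ≠ j ∧ {i, j} ∈ Δ.faces := by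
  rw [graph, SimpleGraph.fromRel_adj, Finset.pair_comm j i, or_self]

lemma card_edgeSet_graph_le (Δ : SComplex n) : Nat.card Δ.graph.edgeSet ≤ Δ.edges.ncard := by
  refine Set.ncard_le_ncard_of_injOn Sym2.toFinset (fun e he ↦ ?_) fun e _ e' _ h ↦
    Sym2.ext fun x ↦ by rw [← Sym2.mem_toFinset, h, Sym2.mem_toFinset]
  induction e with
  | h i j =>
    obtain ⟨hne, hface⟩ := graph_adj_iff.1 (Δ.graph.mem_edgeSet.1 he)
    rw [Sym2.toFinset_mk_eq]
    exact ⟨hface, Finset.card_pair hne⟩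

lemma IsGraph.exists_covBy_last (hΔ : Δ.IsGraph) : ∃ l, l ⋖ Fin.last n := by
  obtain ⟨s, -, hs⟩ := hΔ.2
  obtain ⟨a, -, b, -, hab⟩ := Finset.one_lt_card.1 (hs ▸ one_lt_two)
  have hmin : ¬IsMin (Fin.last n) := fun h ↦
    hab ((h.eq_of_le (Fin.le_last a)).trans (h.eq_of_le (Fin.le_last b)).symm)
  exact exists_covBy_of_wellFoundedGT hmin

end SComplex

/-- Let `K` be an algebraically closed field, `<` a monomial order with
`X_0 > ⋯ > X_n`, and `I` a homogeneous ideal whose initial ideal is the Stanley–Reisner ideal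
of a graph `Δ` on `{0, …, n}` having every `i` as a vertex.  If `X = V(I) ⊆ ℙⁿ` is a connected
projective curve (the coordinate ring `S/I` has Krull dimension `2`) which is nonsingular
(every point of `X` is a nonsingular point, i.e. the Jacobian criterion rank `n - 1` holds),
then `Δ` is a tree. -/
theorem tree_of_smooth_connected_curve {K : Type*} [Field K] [IsAlgClosed K] {n : ℕ}
    (m : MonomialOrder (Fin (n + 1))) (hm : m.Descending)
    (Δ : SComplex n) (hgraph : Δ.IsGraph)
    (hvert : ∀ i : Fin (n + 1), ({i} : Finset (Fin (n + 1))) ∈ Δ.faces)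
    (I : Ideal (MvPolynomial (Fin (n + 1)) K)) (hI : IsHomog I)
    (hin : initialIdeal m I = Δ.srIdeal K)
    (hcurve : ringKrullDim (MvPolynomial (Fin (n + 1)) K ⧸ I) = 2)
    (hconn : IsConnectedProjVariety I)
    (hsmooth : ∀ x ∈ projZeros I, jacobianRank I x = n - 1) :
    Δ.graph.IsTree := by
  obtain ⟨w, hG⟩ := exists_isGraphDegeneration hm hgraph hvert hI hin
  have hjac : ∀ x ∈ projZeros I, n ≤ jacobianRank I x + 1 := fun x hx ↦ by
    rw [hsmooth x hx]
    omega
  have : I.IsPrime := isPrime_of_isConnectedProjVariety hI (hG.isRadical hin) hconn hjac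
  obtain ⟨L, _, _, π, rfl⟩ := exists_algHom_ker_eq K I
  have hconnected : Δ.graph.Connected := connected_of_forall_exists_lt_adj fun j hj ↦ by
    obtain ⟨l, hjl, hface⟩ := hG.exists_lt_edge_mem hj
    exact ⟨l, hjl, SComplex.graph_adj_iff.2 ⟨hjl.ne, hface⟩⟩
  obtain ⟨l, hl⟩ := hgraph.exists_covBy_last
  have hcard : Nat.card Δ.graph.edgeSet ≤ n :=
    Δ.card_edgeSet_graph_le.trans (hG.ncard_edges_le hjac hl)
  refine SimpleGraph.isTree_iff_connected_and_card.2
    ⟨hconnected, le_antisymm ?_ hconnected.card_vert_le_card_edgeSet_add_one⟩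
  rw [Nat.card_fin]
  omega
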